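/- Let p be a prime with p ≡ 1 or 4 (mod 5). If p ≡ 1 or 4 (mod 15), then there are integers x, y with p = x^2 + 15y^2, and for any such x, Σ_{n=0}^{p-1} A_n ≡ 4x^2 (mod p). If p ≡ 11 or 14 (mod 15), then Σ_{n=0}^{p-1} A_n ≡ 0 (mod p). -/

import Mathlib

open Finset

/-- `A n = ∑_{k=0}^{n} C(2k,k)·C(2n-2k,n-k)·C(n,k)^2`. -/
def A (n : ℕ) : ℕ :=
  ∑ k ∈ Finset.range (n + 1),
    Nat.choose (2 * k) k * Nat.choose (2 * n - 2 * k) (n - k) * Nat.choose n k ^ 2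


set_option linter.unusedSectionVars false
set_option linter.unusedVariables false
set_option linter.unusedSimpArgs false

section GroupLaw
variable {K : Type*} [Field K] [DecidableEq K]

/-- The quadratic twist by `f` of the curve `Y^2 = X^3 + A X + B`. -/
def twistCurve (f A B : K) : WeierstrassCurve.Affine K := ⟨0, 0, 0, A * f ^ 2, B * f ^ 3⟩

/-- `P` is the point with coordinates `(X, Y)` in the model `f Y^2 = X^3 + A X + B`. -/
def IsPt (f A B : K) (P : (twistCurve f A B).Point) (X Y : K) : Prop :=
  ∃ h, P = .some (f * X) (f ^ 2 * Y) h

variable {f A B : K}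

theorem IsPt.eqn (hf : f ≠ 0) {P : (twistCurve f A B).Point} {X Y : K} (h : IsPt f A B P X Y) :
    f * Y ^ 2 = X ^ 3 + A * X + B := by
  obtain ⟨h, -⟩ := h
  have := (WeierstrassCurve.Affine.equation_iff _ _).1 h.1
  simp only [twistCurve] at this
  apply mul_left_cancel₀ (pow_ne_zero 3 hf)
  linear_combination this

theorem exists_isPt (hf : f ≠ 0) (h2 : (2 : K) ≠ 0) (hΔ : 4 * A ^ 3 + 27 * B ^ 2 ≠ 0) {X Y : K}
    (h : f * Y ^ 2 = X ^ 3 + A * X + B) : ∃ P, IsPt f A B P X Y := by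
  have hns : (twistCurve f A B).Nonsingular (f * X) (f ^ 2 * Y) := by
    rw [← WeierstrassCurve.Affine.equation_iff_nonsingular_of_Δ_ne_zero,
      WeierstrassCurve.Affine.equation_iff]
    · simp only [twistCurve]
      linear_combination f ^ 3 * h
    · have : (twistCurve f A B).Δ = - 2 ^ 4 * f ^ 6 * (4 * A ^ 3 + 27 * B ^ 2) := by
        simp only [twistCurve, WeierstrassCurve.Δ, WeierstrassCurve.b₂, WeierstrassCurve.b₄,
          WeierstrassCurve.b₆, WeierstrassCurve.b₈]
        ring
      rw [this]
      exact mul_ne_zero (mul_ne_zero (neg_ne_zero.2 (pow_ne_zero _ h2)) (pow_ne_zero _ hf)) hΔ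
  exact ⟨_, hns, rfl⟩

theorem eq_zero_or_isPt (hf : f ≠ 0) (P : (twistCurve f A B).Point) :
    P = 0 ∨ ∃ X Y, IsPt f A B P X Y := by
  rcases P with _ | ⟨x, y, h⟩
  · left; rfl
  · right
    have hx : x = f * (x / f) := by field_simp
    have hy : y = f ^ 2 * (y / f ^ 2) := by field_simp
    refine ⟨x / f, y / f ^ 2, ?_, ?_⟩
    · rw [← hx, ← hy]; exact h
    · congr 1

theorem IsPt.ne_zero {P : (twistCurve f A B).Point} {X Y : K} (h : IsPt f A B P X Y) : P ≠ 0 := by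
  obtain ⟨h, rfl⟩ := h
  exact WeierstrassCurve.Affine.Point.some_ne_zero h

theorem IsPt.unique (hf : f ≠ 0) {P : (twistCurve f A B).Point} {X Y X' Y' : K}
    (h : IsPt f A B P X Y) (h' : IsPt f A B P X' Y') : X = X' ∧ Y = Y' := by
  obtain ⟨h, rfl⟩ := h
  obtain ⟨h', e⟩ := h'
  rw [WeierstrassCurve.Affine.Point.some.injEq] at e
  exact ⟨mul_left_cancel₀ hf e.1, mul_left_cancel₀ (pow_ne_zero 2 hf) e.2⟩

theorem IsPt.ext {P Q : (twistCurve f A B).Point} {X Y : K}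
    (h : IsPt f A B P X Y) (h' : IsPt f A B Q X Y) : P = Q := by
  obtain ⟨h, rfl⟩ := h
  obtain ⟨h', rfl⟩ := h'
  rfl

theorem IsPt.neg {P : (twistCurve f A B).Point} {X Y : K}
    (h : IsPt f A B P X Y) : IsPt f A B (-P) X (-Y) := by
  obtain ⟨h, rfl⟩ := h
  rw [WeierstrassCurve.Affine.Point.neg_some]
  have : (twistCurve f A B).negY (f * X) (f ^ 2 * Y) = f ^ 2 * -Y := by
    simp [twistCurve, WeierstrassCurve.Affine.negY]
  refine ⟨?_, ?_⟩
  · rw [← this]; exact (WeierstrassCurve.Affine.nonsingular_neg ..).2 h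
  · congr 1

theorem IsPt.eq_neg {P Q : (twistCurve f A B).Point} {X Y : K}
    (h : IsPt f A B P X Y) (h' : IsPt f A B Q X (-Y)) : Q = -P := h'.ext h.neg

theorem IsPt.add (hf : f ≠ 0) {P Q : (twistCurve f A B).Point} {X₁ Y₁ X₂ Y₂ : K}
    (h₁ : IsPt f A B P X₁ Y₁) (h₂ : IsPt f A B Q X₂ Y₂) (hX : X₁ ≠ X₂) {L X₃ Y₃ : K}
    (hL : L * (X₁ - X₂) = Y₁ - Y₂) (hX₃ : X₃ = f * L ^ 2 - X₁ - X₂)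
    (hY₃ : Y₃ = -(Y₁ + L * (X₃ - X₁))) : IsPt f A B (P + Q) X₃ Y₃ := by
  obtain ⟨h₁, rfl⟩ := h₁
  obtain ⟨h₂, rfl⟩ := h₂
  have hne : f * X₁ ≠ f * X₂ := fun h => hX (mul_left_cancel₀ hf h)
  have hs : (twistCurve f A B).slope (f * X₁) (f * X₂) (f ^ 2 * Y₁) (f ^ 2 * Y₂) = f * L := by
    rw [WeierstrassCurve.Affine.slope_of_X_ne hne, div_eq_iff (sub_ne_zero.2 hne)]
    linear_combination -f ^ 2 * hL
  have hx : (twistCurve f A B).addX (f * X₁) (f * X₂) (f * L) = f * X₃ := by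
    simp only [twistCurve, WeierstrassCurve.Affine.addX]; rw [hX₃]; ring
  have hy : (twistCurve f A B).addY (f * X₁) (f * X₂) (f ^ 2 * Y₁) (f * L) = f ^ 2 * Y₃ := by
    rw [WeierstrassCurve.Affine.addY, WeierstrassCurve.Affine.negAddY, hx]
    simp only [twistCurve, WeierstrassCurve.Affine.negY]; rw [hY₃]; ring
  have key := WeierstrassCurve.Affine.nonsingular_add h₁ h₂ fun hxy => hne hxy.left
  rw [hs, hx, hy] at key
  refine ⟨key, ?_⟩
  rw [WeierstrassCurve.Affine.Point.add_of_X_ne hne]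
  simp only [hs, hx, hy]

theorem IsPt.double (hf : f ≠ 0) (h2 : (2 : K) ≠ 0) {P : (twistCurve f A B).Point} {X₁ Y₁ : K}
    (h₁ : IsPt f A B P X₁ Y₁) (hY : Y₁ ≠ 0) {L X₃ Y₃ : K}
    (hL : L * (2 * f * Y₁) = 3 * X₁ ^ 2 + A) (hX₃ : X₃ = f * L ^ 2 - X₁ - X₁)
    (hY₃ : Y₃ = -(Y₁ + L * (X₃ - X₁))) : IsPt f A B (P + P) X₃ Y₃ := by
  obtain ⟨h₁, rfl⟩ := h₁
  have hne : f ^ 2 * Y₁ ≠ (twistCurve f A B).negY (f * X₁) (f ^ 2 * Y₁) := by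
    simp only [twistCurve, WeierstrassCurve.Affine.negY]
    intro h
    have : 2 * f ^ 2 * Y₁ = 0 := by linear_combination h
    exact mul_ne_zero (mul_ne_zero h2 (pow_ne_zero 2 hf)) hY this
  have hs : (twistCurve f A B).slope (f * X₁) (f * X₁) (f ^ 2 * Y₁) (f ^ 2 * Y₁) = f * L := by
    rw [WeierstrassCurve.Affine.slope_of_Y_ne rfl hne, div_eq_iff (sub_ne_zero.2 hne)]
    simp only [twistCurve, WeierstrassCurve.Affine.negY]
    linear_combination -f ^ 2 * hL
  have hx : (twistCurve f A B).addX (f * X₁) (f * X₁) (f * L) = f * X₃ := by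
    simp only [twistCurve, WeierstrassCurve.Affine.addX]; rw [hX₃]; ring
  have hy : (twistCurve f A B).addY (f * X₁) (f * X₁) (f ^ 2 * Y₁) (f * L) = f ^ 2 * Y₃ := by
    rw [WeierstrassCurve.Affine.addY, WeierstrassCurve.Affine.negAddY, hx]
    simp only [twistCurve, WeierstrassCurve.Affine.negY]; rw [hY₃]; ring
  have key := WeierstrassCurve.Affine.nonsingular_add h₁ h₁ fun hxy => hne hxy.right
  rw [hs, hx, hy] at key
  refine ⟨key, ?_⟩
  rw [WeierstrassCurve.Affine.Point.add_of_Y_ne hne]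
  simp only [hs, hx, hy]

end GroupLaw


section Triples
open Polynomial
variable {k : Type*} [Field k]

/-- The three polynomials have no common root. -/
def Prim3 (u v w : k[X]) : Prop := ∀ r, u.eval r = 0 → v.eval r = 0 → w.eval r = 0 → False

/-- The maximal degree of the three polynomials is `N`. -/
def Deg3 (u v w : k[X]) (N : ℕ) : Prop :=
  (u.natDegree ≤ N ∧ v.natDegree ≤ N ∧ w.natDegree ≤ N) ∧
    (u.coeff N = 0 → v.coeff N = 0 → w.coeff N = 0 → False)

theorem Deg3.le {u v w : k[X]} {N M : ℕ} (h : Deg3 u v w N) (h' : Deg3 u v w M) : N ≤ M := by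
  by_contra hlt
  push Not at hlt
  obtain ⟨⟨a, b, c⟩, -⟩ := h'
  exact h.2 (coeff_eq_zero_of_natDegree_lt (by omega)) (coeff_eq_zero_of_natDegree_lt (by omega))
    (coeff_eq_zero_of_natDegree_lt (by omega))

theorem Deg3.unique {u v w : k[X]} {N M : ℕ} (h : Deg3 u v w N) (h' : Deg3 u v w M) : N = M :=
  le_antisymm (h.le h') (h'.le h)

theorem Deg3.smul {u v w : k[X]} {N : ℕ} (h : Deg3 u v w N) {c : k} (hc : c ≠ 0) :
    Deg3 (C c * u) (C c * v) (C c * w) N := by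
  obtain ⟨⟨h1, h2, h3⟩, h4⟩ := h
  refine ⟨⟨?_, ?_, ?_⟩, ?_⟩
  · rwa [natDegree_C_mul hc]
  · rwa [natDegree_C_mul hc]
  · rwa [natDegree_C_mul hc]
  · simp only [coeff_C_mul, mul_eq_zero, hc, false_or]
    exact h4

theorem exists_root_of_not_isUnit [IsAlgClosed k] {g : k[X]} (hg : ¬ IsUnit g) : ∃ r, g.eval r = 0 := by
  by_cases h0 : g = 0
  · exact ⟨0, by simp [h0]⟩
  · have : g.degree ≠ 0 := fun h => hg (isUnit_iff_degree_eq_zero.2 h)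
    exact IsAlgClosed.exists_root g this

theorem Prim3.bezout [IsAlgClosed k] {u v w : k[X]} (h : Prim3 u v w) :
    ∃ r s t : k[X], r * u + s * v + t * w = 1 := by
  obtain ⟨g, hg⟩ := (IsPrincipalIdealRing.principal (Ideal.span ({u, v, w} : Set k[X]))).principal
  have hd : ∀ x ∈ ({u, v, w} : Set k[X]), g ∣ x := by
    intro x hx
    have : x ∈ Ideal.span ({u, v, w} : Set k[X]) := Ideal.subset_span hx
    rw [hg] at this
    exact Ideal.mem_span_singleton.1 this
  have hu : IsUnit g := by
    by_contra hn
    obtain ⟨r, hr⟩ := exists_root_of_not_isUnit hn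
    refine h r ?_ ?_ ?_
    · obtain ⟨q, hq⟩ := hd u (by simp); rw [hq, eval_mul, hr, zero_mul]
    · obtain ⟨q, hq⟩ := hd v (by simp); rw [hq, eval_mul, hr, zero_mul]
    · obtain ⟨q, hq⟩ := hd w (by simp); rw [hq, eval_mul, hr, zero_mul]
  have h1 : (1 : k[X]) ∈ Ideal.span ({u, v, w} : Set k[X]) := by
    rw [hg]
    exact Ideal.mem_span_singleton.2 hu.dvd
  rw [Ideal.mem_span_insert] at h1
  obtain ⟨a, z, hz, e⟩ := h1
  rw [Ideal.mem_span_pair] at hz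
  obtain ⟨b, c, e'⟩ := hz
  exact ⟨a, b, c, by rw [e, ← e']; ring⟩

theorem Prim3.prop [IsAlgClosed k] {u v w U V W : k[X]} (h : Prim3 u v w) (h' : Prim3 U V W)
    (h1 : u * V = v * U) (h2 : u * W = w * U) (h3 : v * W = w * V) :
    ∃ c : k, c ≠ 0 ∧ U = C c * u ∧ V = C c * v ∧ W = C c * w := by
  obtain ⟨r, s, t, e⟩ := h.bezout
  set l := r * U + s * V + t * W with hl
  have hU : U = l * u := by rw [hl]; linear_combination -U * e + s * h1 * (-1) + t * h2 * (-1)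
  have hV : V = l * v := by rw [hl]; linear_combination -V * e + r * h1 - t * h3
  have hW : W = l * w := by rw [hl]; linear_combination -W * e + r * h2 + s * h3
  have hu : IsUnit l := by
    by_contra hn
    obtain ⟨r, hr⟩ := exists_root_of_not_isUnit hn
    exact h' r (by rw [hU, eval_mul, hr, zero_mul]) (by rw [hV, eval_mul, hr, zero_mul])
      (by rw [hW, eval_mul, hr, zero_mul])
  obtain ⟨c, hc, e⟩ := Polynomial.isUnit_iff.1 hu
  rw [← e] at hU hV hW
  exact ⟨c, hc.ne_zero, hU, hV, hW⟩

theorem Prim3.deg_eq [IsAlgClosed k] {u v w U V W : k[X]} (h : Prim3 u v w) (h' : Prim3 U V W)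
    (h1 : u * V = v * U) (h2 : u * W = w * U) (h3 : v * W = w * V) {N M : ℕ}
    (hN : Deg3 u v w N) (hM : Deg3 U V W M) : N = M := by
  obtain ⟨c, hc, rfl, rfl, rfl⟩ := h.prop h' h1 h2 h3
  exact (hN.smul hc).unique hM

/-- top coefficient predicate -/
def TopC (q : k[X]) (m : ℕ) (c : k) : Prop := q.natDegree ≤ m ∧ q.coeff m = c

theorem TopC.mul {q r : k[X]} {m n : ℕ} {c d : k} (h : TopC q m c) (h' : TopC r n d) :
    TopC (q * r) (m + n) (c * d) := by
  refine ⟨natDegree_mul_le_of_le h.1 h'.1, ?_⟩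
  rw [coeff_mul_add_eq_of_natDegree_le h.1 h'.1, h.2, h'.2]

theorem TopC.add {q r : k[X]} {m : ℕ} {c d : k} (h : TopC q m c) (h' : TopC r m d) :
    TopC (q + r) m (c + d) :=
  ⟨natDegree_add_le_of_degree_le h.1 h'.1, by rw [coeff_add, h.2, h'.2]⟩

theorem TopC.sub {q r : k[X]} {m : ℕ} {c d : k} (h : TopC q m c) (h' : TopC r m d) :
    TopC (q - r) m (c - d) :=
  ⟨natDegree_sub_le_of_le h.1 h'.1 |>.trans (by simp), by rw [coeff_sub, h.2, h'.2]⟩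

theorem TopC.Cmul {q : k[X]} {m : ℕ} {c : k} (h : TopC q m c) (d : k) : TopC (C d * q) m (d * c) := by
  refine ⟨(natDegree_C_mul_le _ _).trans h.1, by rw [coeff_C_mul, h.2]⟩

theorem TopC.cast {q : k[X]} {m n : ℕ} {c : k} (h : TopC q m c) (e : m = n) : TopC q n c := e ▸ h

theorem Deg3.of_top {u v w : k[X]} {N : ℕ} {a b c : k} (hu : TopC u N a) (hv : TopC v N b)
    (hw : TopC w N c) (h : a = 0 → b = 0 → c = 0 → False) : Deg3 u v w N := by
  refine ⟨⟨hu.1, hv.1, hw.1⟩, ?_⟩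
  rw [hu.2, hv.2, hw.2]; exact h

theorem top_max (a b : k[X]) (h : a ≠ 0 ∨ b ≠ 0) : ∃ x y : k, (x ≠ 0 ∨ y ≠ 0) ∧
    TopC a (max a.natDegree b.natDegree) x ∧ TopC b (max a.natDegree b.natDegree) y := by
  refine ⟨_, _, ?_, ⟨le_max_left _ _, rfl⟩, ⟨le_max_right _ _, rfl⟩⟩
  by_contra hn
  push Not at hn
  rcases le_total a.natDegree b.natDegree with hh | hh
  · rw [max_eq_right hh] at hn
    have hb : b = 0 := leadingCoeff_eq_zero.1 hn.2
    have ha : a.natDegree = 0 := by rw [hb] at hh; simpa using hh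
    rw [hb, natDegree_zero, ← ha] at hn
    exact h.elim (fun h => h (leadingCoeff_eq_zero.1 hn.1)) (fun h => h hb)
  · rw [max_eq_left hh] at hn
    have hb : a = 0 := leadingCoeff_eq_zero.1 hn.1
    have ha : b.natDegree = 0 := by rw [hb] at hh; simpa using hh
    rw [hb, natDegree_zero, ← ha] at hn
    exact h.elim (fun h => h hb) (fun h => h (leadingCoeff_eq_zero.1 hn.2))

/-- The biquadratic forms of the group law. -/
theorem field_UVW {R : Type*} [Field R] (h2 : (2 : R) ≠ 0) {A B : R} (hΔ : 4 * A ^ 3 + 27 * B ^ 2 ≠ 0) {a b c d : R}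
    (hab : a ≠ 0 ∨ b ≠ 0) (hcd : c ≠ 0 ∨ d ≠ 0)
    (hU : (a * d - b * c) ^ 2 = 0)
    (hV : 2 * ((a * c + A * (b * d)) * (a * d + b * c) + 2 * (B * (b * d * (b * d)))) = 0)
    (hW : (a * c - A * (b * d)) * (a * c - A * (b * d)) - 4 * (B * (b * d * (a * d + b * c))) = 0) : False := by
  have hU' : a * d - b * c = 0 := by simpa using hU
  by_cases hb : b = 0
  · subst hb
    have ha : a ≠ 0 := by simpa using hab
    have hd : d = 0 := by
      have : a * d = 0 := by linear_combination hU'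
      simpa [ha] using this
    subst hd
    have hc : c ≠ 0 := by simpa using hcd
    have : a * c * (a * c) = 0 := by linear_combination hW
    simp [ha, hc] at this
  · by_cases hd : d = 0
    · subst hd
      have hc : c ≠ 0 := by simpa using hcd
      have : b * c = 0 := by linear_combination - hU'
      simp [hb, hc] at this
    · obtain ⟨x, rfl⟩ : ∃ x, a = x * b := ⟨a / b, by field_simp⟩
      have hc : c = x * d := mul_left_cancel₀ hb (by linear_combination -hU')
      subst hc
      have e1 : x ^ 3 + A * x + B = 0 := by
        have : 2 ^ 2 * (b * d) ^ 2 * (x ^ 3 + A * x + B) = 0 := by linear_combination hV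
        simpa [hb, hd, h2] using this
      have e2 : (x ^ 2 - A) ^ 2 - 8 * B * x = 0 := by
        have : (b * d) ^ 2 * ((x ^ 2 - A) ^ 2 - 8 * B * x) = 0 := by linear_combination hW
        simpa [hb, hd, h2] using this
      have e3 : 3 * x ^ 2 + A = 0 := by
        have : (3 * x ^ 2 + A) ^ 2 = 0 := by linear_combination e2 + 8 * x * e1
        simpa using this
      apply hΔ
      linear_combination (27 * B - 27 * x ^ 3 - 27 * A * x) * e1 + (4 * A ^ 2 + 15 * A * x ^ 2 + 9 * x ^ 4) * e3
end Triples


section Height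
open Polynomial
variable {k : Type*} [Field k] [IsAlgClosed k] [DecidableEq (RatFunc k)]

/-- The group of points over `k(t)` of the twisted curve. -/
abbrev MW (f : k[X]) (A B : k) : Type _ :=
  (twistCurve (algebraMap k[X] (RatFunc k) f) (algebraMap k[X] (RatFunc k) (C A))
    (algebraMap k[X] (RatFunc k) (C B))).Point

/-- coordinates of a point -/
abbrev MWPt (f : k[X]) (A B : k) (P : MW f A B) (X Y : RatFunc k) : Prop :=
  IsPt (algebraMap k[X] (RatFunc k) f) (algebraMap k[X] (RatFunc k) (C A))
    (algebraMap k[X] (RatFunc k) (C B)) P X Y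

/-- reduced homogeneous coordinates `(a : b)` of the `X`-coordinate of a point -/
def RepX (f : k[X]) (A B : k) (P : MW f A B) (a b : k[X]) : Prop :=
  IsCoprime a b ∧ ((b = 0 ∧ P = 0) ∨ (b ≠ 0 ∧ ∃ Y, MWPt f A B P
    (algebraMap k[X] (RatFunc k) a / algebraMap k[X] (RatFunc k) b) Y))

variable {f : k[X]} {A B : k}

local notation "ι" => algebraMap k[X] (RatFunc k)

theorem iota_ne {a : k[X]} (h : a ≠ 0) : ι a ≠ 0 := RatFunc.algebraMap_ne_zero h

theorem iota_inj {a b : k[X]} (h : ι a = ι b) : a = b := RatFunc.algebraMap_injective k h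

theorem exists_rep (hf : f ≠ 0) (P : MW f A B) : ∃ a b, RepX f A B P a b := by
  rcases eq_zero_or_isPt (iota_ne hf) P with h | ⟨X, Y, h⟩
  · exact ⟨1, 0, isCoprime_one_left, Or.inl ⟨rfl, h⟩⟩
  · refine ⟨X.num, X.denom, RatFunc.isCoprime_num_denom X, Or.inr ⟨RatFunc.denom_ne_zero X, Y, ?_⟩⟩
    rw [RatFunc.num_div_denom]; exact h

theorem RepX.cross (hf : f ≠ 0) {P : MW f A B} {a b c d : k[X]} (h : RepX f A B P a b)
    (h' : RepX f A B P c d) : a * d = b * c := by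
  obtain ⟨-, ⟨rfl, h⟩ | ⟨hb, Y, h⟩⟩ := h
  · obtain ⟨-, ⟨rfl, h'⟩ | ⟨hd, Y', h'⟩⟩ := h'
    · simp
    · exact absurd h h'.ne_zero
  · obtain ⟨-, ⟨rfl, h'⟩ | ⟨hd, Y', h'⟩⟩ := h'
    · exact absurd h' h.ne_zero
    · have e := (h.unique (iota_ne hf) h').1
      rw [div_eq_div_iff (iota_ne hb) (iota_ne hd), ← map_mul, ← map_mul] at e
      rw [iota_inj e, mul_comm]

theorem coprime_eval {R : Type*} [Field R] {a b : R[X]} (h : IsCoprime a b) (r : R) :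
    a.eval r ≠ 0 ∨ b.eval r ≠ 0 := by
  by_contra hn
  push Not at hn
  obtain ⟨u, v, e⟩ := h
  have := congrArg (Polynomial.eval r) e
  simp [hn.1, hn.2] at this

theorem coprime_ne {R : Type*} [Field R] {a b : R[X]} (h : IsCoprime a b) : a ≠ 0 ∨ b ≠ 0 := by
  rcases coprime_eval h 0 with h | h
  · left; rintro rfl; simp at h
  · right; rintro rfl; simp at h

theorem cross_max {a b c d : k[X]} (h : IsCoprime a b) (h' : IsCoprime c d) (e : a * d = b * c) :
    ∃ u : k, u ≠ 0 ∧ c = C u * a ∧ d = C u * b := by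
  have p1 : Prim3 a b 0 := fun r x y _ => by
    rcases coprime_eval h r with h | h <;> contradiction
  have p2 : Prim3 c d 0 := fun r x y _ => by
    rcases coprime_eval h' r with h | h <;> contradiction
  obtain ⟨u, hu, e1, e2, -⟩ := p1.prop p2 e (by simp) (by simp)
  exact ⟨u, hu, e1, e2⟩

theorem RepX.max_eq (hf : f ≠ 0) {P : MW f A B} {a b c d : k[X]} (h : RepX f A B P a b)
    (h' : RepX f A B P c d) : max a.natDegree b.natDegree = max c.natDegree d.natDegree := by
  obtain ⟨u, hu, rfl, rfl⟩ := cross_max h.1 h'.1 (h.cross hf h')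
  rw [natDegree_C_mul hu, natDegree_C_mul hu]

open Classical in
/-- The height of a point. -/
noncomputable def ht (P : MW f A B) : ℕ :=
  if h : ∃ n a b, RepX f A B P a b ∧ n = max a.natDegree b.natDegree then h.choose else 0

theorem RepX.ht (hf : f ≠ 0) {P : MW f A B} {a b : k[X]} (h : RepX f A B P a b) :
    ht P = max a.natDegree b.natDegree := by
  have hex : ∃ n a b, RepX f A B P a b ∧ n = max a.natDegree b.natDegree := ⟨_, a, b, h, rfl⟩
  rw [_root_.ht, dif_pos hex]
  obtain ⟨a', b', h', e⟩ := hex.choose_spec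
  rw [e]
  exact h'.max_eq hf h

theorem RepX.neg {P : MW f A B} {a b : k[X]} (h : RepX f A B P a b) : RepX f A B (-P) a b := by
  obtain ⟨h, ⟨rfl, rfl⟩ | ⟨hb, Y, h'⟩⟩ := h
  · exact ⟨h, Or.inl ⟨rfl, neg_zero⟩⟩
  · exact ⟨h, Or.inr ⟨hb, -Y, h'.neg⟩⟩

theorem rep_zero : RepX f A B 0 1 0 := ⟨isCoprime_one_left, Or.inl ⟨rfl, rfl⟩⟩

theorem ht_zero (hf : f ≠ 0) : ht (0 : MW f A B) = 0 := by
  rw [rep_zero.ht hf]; simp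

theorem ht_neg (hf : f ≠ 0) (P : MW f A B) : ht (-P) = ht P := by
  obtain ⟨a, b, h⟩ := exists_rep hf P
  rw [h.ht hf, h.neg.ht hf]

/-- The proportionality in the parallelogram law. -/
theorem para_aux (hf : f ≠ 0) (h2 : (2 : k) ≠ 0) (hΔ : 4 * A ^ 3 + 27 * B ^ 2 ≠ 0) {P Q : MW f A B} {a b c d e e' g g' : k[X]}
    (hP : RepX f A B P a b) (hQ : RepX f A B Q c d) (hS : RepX f A B (P + Q) e e')
    (hD : RepX f A B (P - Q) g g')
    {U V W : k[X]} (hU : U = (a * d - b * c) ^ 2)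
    (hV : V = 2 * ((a * c + C A * (b * d)) * (a * d + b * c) + 2 * (C B * (b * d * (b * d)))))
    (hW : W = (a * c - C A * (b * d)) * (a * c - C A * (b * d)) - 4 * (C B * (b * d * (a * d + b * c))))
    (p1 : e' * g' * V = (e * g' + e' * g) * U)
    (p2 : e' * g' * W = (e * g) * U)
    (p3 : (e * g' + e' * g) * W = (e * g) * V) : ht (P + Q) + ht (P - Q) = 2 * ht P + 2 * ht Q := by
  have q1 : Prim3 (e' * g') (e * g' + e' * g) (e * g) := by
    intro r h1 h2 h3
    simp only [eval_mul, eval_add] at h1 h2 h3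
    have A1 := coprime_eval hS.1 r
    have A2 := coprime_eval hD.1 r
    rcases mul_eq_zero.1 h1 with h | h <;> rcases mul_eq_zero.1 h3 with h' | h' <;> simp [h, h'] at A1 A2 h2 <;> tauto
  have q2 : Prim3 U V W := by
    intro r h1 h3 h4
    refine field_UVW h2 hΔ (coprime_eval hP.1 r) (coprime_eval hQ.1 r) ?_ ?_ ?_
    · rw [← h1, hU]; simp
    · rw [← h3, hV]; simp
    · rw [← h4, hW]; simp
  obtain ⟨a1, b1, hab, ta, tb⟩ := top_max a b (coprime_ne hP.1)
  obtain ⟨c1, d1, hcd, tc, td⟩ := top_max c d (coprime_ne hQ.1)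
  obtain ⟨e1, e1', he, te, te'⟩ := top_max e e' (coprime_ne hS.1)
  obtain ⟨g1, g1', hg, tg, tg'⟩ := top_max g g' (coprime_ne hD.1)
  rw [← hP.ht hf] at ta tb
  rw [← hQ.ht hf] at tc td
  rw [← hS.ht hf] at te te'
  rw [← hD.ht hf] at tg tg'
  have d1 : Deg3 (e' * g') (e * g' + e' * g) (e * g) (ht (P + Q) + ht (P - Q)) := by
    refine Deg3.of_top (te'.mul tg') ((te.mul tg').add (te'.mul tg)) (te.mul tg) ?_
    intro h1 h2 h3
    rcases mul_eq_zero.1 h1 with h | h <;> rcases mul_eq_zero.1 h3 with h' | h' <;> simp [h, h'] at he hg h2 <;> tauto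
  have d2 : Deg3 U V W (2 * ht P + 2 * ht Q) := by
    have hh : ht P + ht Q + (ht P + ht Q) = 2 * ht P + 2 * ht Q := by ring
    have tac := ta.mul tc
    have tbd := tb.mul td
    have tad := ta.mul td
    have tbc := tb.mul tc
    have t1 := ((tad.sub tbc).mul (tad.sub tbc)).cast hh
    have t2 := ((((tac.add (tbd.Cmul A)).mul (tad.add tbc)).add (((tbd.mul tbd).Cmul B).Cmul 2)).Cmul 2).cast hh
    have t3 := (((tac.sub (tbd.Cmul A)).mul (tac.sub (tbd.Cmul A))).sub (((tbd.mul (tad.add tbc)).Cmul B).Cmul 4)).cast hh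
    have w1 : U = (a * d - b * c) * (a * d - b * c) := by rw [hU]; ring
    rw [← w1] at t1
    have c2 : (C 2 : k[X]) = 2 := rfl
    have c4 : (C 4 : k[X]) = 4 := rfl
    rw [c2, ← hV] at t2
    rw [c4, ← hW] at t3
    refine Deg3.of_top t1 t2 t3 ?_
    intro h1 h3 h4
    exact field_UVW h2 hΔ hab hcd (by rw [← h1]; ring) h3 h4
  exact q1.deg_eq q2 p1 p2 p3 d1 d2

theorem ht_para (hf : f ≠ 0) (h2 : (2 : k) ≠ 0) (hΔ : 4 * A ^ 3 + 27 * B ^ 2 ≠ 0) (P Q : MW f A B) :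
    ht (P + Q) + ht (P - Q) = 2 * ht P + 2 * ht Q := by
  have h2' : (2 : RatFunc k) ≠ 0 := by
    have := iota_ne (C_ne_zero.2 h2); rwa [show (C 2 : k[X]) = 2 from rfl, map_ofNat] at this
  have dbl : ∀ P : MW f A B, ht (P + P) + ht (P - P) = 2 * ht P + 2 * ht P := by
    intro P
    obtain ⟨a, b, hP⟩ := exists_rep hf P
    by_cases hP0 : P = 0
    · subst hP0; simp [ht_zero hf]
    have hP' := hP
    obtain ⟨hab, ⟨-, h⟩ | ⟨hb, Y, h⟩⟩ := hP'
    · exact absurd h hP0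
    have hm : RepX f A B (P - P) 1 0 := by rw [sub_self]; exact rep_zero
    have heq := h.eqn (iota_ne hf)
    have hb' := iota_ne hb
    by_cases hY : Y = 0
    · have h00 : P + P = 0 := by
        have h1 := h.neg
        rw [hY, neg_zero] at h1
        rw [hY] at h
        have := h.ext h1
        nth_rewrite 2 [this]
        exact add_neg_cancel P
      have hs : RepX f A B (P + P) 1 0 := by rw [h00]; exact rep_zero
      refine para_aux hf h2 hΔ hP hP hs hm rfl rfl rfl (by simp) (by simp; ring) ?_
      have : ι (a ^ 3 + C A * a * b ^ 2 + C B * b ^ 3) = 0 := by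
        rw [hY] at heq
        simp only [map_add, map_mul, map_pow]
        field_simp at heq
        linear_combination - heq
      have : a ^ 3 + C A * a * b ^ 2 + C B * b ^ 3 = 0 := iota_inj (by rw [this, map_zero])
      linear_combination (-4 * b) * this
    · obtain ⟨e, e', hS⟩ := exists_rep hf (P + P)
      refine para_aux hf h2 hΔ hP hP hS hm rfl rfl rfl (by ring) (by ring) ?_
      obtain ⟨L, hL⟩ : ∃ L, L * (2 * ι f * Y) = 3 * (ι a / ι b) ^ 2 + ι (C A) :=
        ⟨(3 * (ι a / ι b) ^ 2 + ι (C A)) / (2 * ι f * Y), div_mul_cancel₀ _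
          (mul_ne_zero (mul_ne_zero h2' (iota_ne hf)) hY)⟩
      have h3 := h.double (iota_ne hf) h2' hY hL rfl rfl
      obtain ⟨hee, ⟨-, h4⟩ | ⟨he', Y', h4⟩⟩ := hS
      · exact absurd h4 h3.ne_zero
      have h5 := (h3.unique (iota_ne hf) h4).1
      have he'' := iota_ne he'
      apply iota_inj
      have hgx : (ι f * Y ^ 2) * ι b ^ 3 = ι a ^ 3 + ι (C A) * ι a * ι b ^ 2 + ι (C B) * ι b ^ 3 := by
        rw [heq]; field_simp
      have hX : ι e = ι e' * (ι f * L ^ 2 - ι a / ι b - ι a / ι b) := by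
        rw [h5]; field_simp
      have hL2 : 4 * (ι f * L ^ 2) * (ι f * Y ^ 2) = (3 * (ι a / ι b) ^ 2 + ι (C A)) ^ 2 := by
        rw [← hL]; ring
      have hx : ι a = (ι a / ι b) * ι b := by field_simp
      have hc2 : ι (2 : k[X]) = 2 := map_ofNat _ 2
      have hc4 : ι (4 : k[X]) = 4 := map_ofNat _ 4
      simp only [map_add, map_mul, map_pow, map_sub, map_one, map_zero, hc2, hc4]
      rw [hX]
      generalize ι a / ι b = x at *
      rw [hx]
      generalize ι f * L ^ 2 = l2 at *
      generalize ι f * Y ^ 2 = y2 at *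
      rw [heq] at hL2
      linear_combination (-ι e' * ι b ^ 4) * hL2
  rcases eq_zero_or_isPt (iota_ne hf) P with rfl | ⟨X₁, Y₁, h₁⟩
  · rw [zero_add, zero_sub, ht_neg hf, ht_zero hf]; ring
  rcases eq_zero_or_isPt (iota_ne hf) Q with rfl | ⟨X₂, Y₂, h₂⟩
  · rw [add_zero, sub_zero, ht_zero hf]; ring
  by_cases hX : X₁ = X₂
  · subst hX
    have e1 := h₁.eqn (iota_ne hf)
    have e2 := h₂.eqn (iota_ne hf)
    have : ι f * ((Y₁ - Y₂) * (Y₁ + Y₂)) = 0 := by linear_combination e1 - e2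
    have := (mul_eq_zero.1 this).resolve_left (iota_ne hf)
    rcases mul_eq_zero.1 this with hh | hh
    · have : Y₂ = Y₁ := by linear_combination -hh
      rw [this] at h₂
      rw [h₁.ext h₂]
      exact dbl Q
    · have : Y₂ = - Y₁ := by linear_combination hh
      rw [this] at h₂
      have := h₁.eq_neg h₂
      rw [this, ht_neg hf, sub_neg_eq_add, ← sub_eq_add_neg, add_comm]
      exact dbl P
  · obtain ⟨a, b, hP⟩ := exists_rep hf P
    obtain ⟨c, d, hQ⟩ := exists_rep hf Q
    obtain ⟨e, e', hS⟩ := exists_rep hf (P + Q)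
    obtain ⟨g, g', hD⟩ := exists_rep hf (P - Q)
    have hne : X₁ - X₂ ≠ 0 := sub_ne_zero.2 hX
    have h3 := h₁.add (iota_ne hf) h₂ hX (L := (Y₁ - Y₂) / (X₁ - X₂)) (div_mul_cancel₀ _ hne) rfl rfl
    have h4 := h₁.add (iota_ne hf) h₂.neg hX (L := (Y₁ - - Y₂) / (X₁ - X₂)) (div_mul_cancel₀ _ hne) rfl rfl
    rw [← sub_eq_add_neg] at h4
    have key : ι a = X₁ * ι b ∧ ι c = X₂ * ι d ∧
      ι e = (ι f * ((Y₁ - Y₂) / (X₁ - X₂)) ^ 2 - X₁ - X₂) * ι e' ∧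
      ι g = (ι f * ((Y₁ - - Y₂) / (X₁ - X₂)) ^ 2 - X₁ - X₂) * ι g' := by
      have gen : ∀ {R : MW f A B} {X Y : RatFunc k} {u v : k[X]}, RepX f A B R u v → MWPt f A B R X Y →
          ι u = X * ι v := by
        intro R X Y u v hR hR'
        obtain ⟨-, ⟨-, h0⟩ | ⟨hv, Y', h0⟩⟩ := hR
        · exact absurd h0 hR'.ne_zero
        · rw [(hR'.unique (iota_ne hf) h0).1, div_mul_cancel₀ _ (iota_ne hv)]
      exact ⟨gen hP h₁, gen hQ h₂, gen hS h3, gen hD h4⟩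
    obtain ⟨k1, k2, k3, k4⟩ := key
    have e1 := h₁.eqn (iota_ne hf)
    have e2 := h₂.eqn (iota_ne hf)
    have hs3 : ∃ x3, x3 = ι f * ((Y₁ - Y₂) / (X₁ - X₂)) ^ 2 - X₁ - X₂ := ⟨_, rfl⟩
    have hs4 : ∃ x4, x4 = ι f * ((Y₁ - - Y₂) / (X₁ - X₂)) ^ 2 - X₁ - X₂ := ⟨_, rfl⟩
    obtain ⟨x3, hx3⟩ := hs3
    obtain ⟨x4, hx4⟩ := hs4
    rw [← hx3] at k3
    rw [← hx4] at k4
    have hsum : (x3 + x4) * (X₁ - X₂) ^ 2 = 2 * ((X₁ * X₂ + ι (C A)) * (X₁ + X₂) + 2 * ι (C B)) := by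
      rw [hx3, hx4]; field_simp
      linear_combination 2 * e1 + 2 * e2
    have hprod : (x3 * x4) * (X₁ - X₂) ^ 2 = (X₁ * X₂ - ι (C A)) ^ 2 - 4 * ι (C B) * (X₁ + X₂) := by
      have : (x3 * x4) * (X₁ - X₂) ^ 4 = (ι f * Y₁ ^ 2 - ι f * Y₂ ^ 2) ^ 2
          - (X₁ + X₂) * (2 * (ι f * Y₁ ^ 2 + ι f * Y₂ ^ 2)) * (X₁ - X₂) ^ 2
          + (X₁ + X₂) ^ 2 * (X₁ - X₂) ^ 4 := by
        rw [hx3, hx4]; field_simp; ring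
      rw [e1, e2] at this
      apply mul_right_cancel₀ (pow_ne_zero 2 hne)
      linear_combination this
    have hc2 : ι (2 : k[X]) = 2 := map_ofNat _ 2
    have hc4 : ι (4 : k[X]) = 4 := map_ofNat _ 4
    refine para_aux hf h2 hΔ hP hQ hS hD rfl rfl rfl ?_ ?_ ?_
    · apply iota_inj
      simp only [map_add, map_mul, map_pow, map_sub, map_one, map_zero, hc2, hc4]
      rw [k1, k2, k3, k4]
      linear_combination (- ι e' * ι g' * ι b ^ 2 * ι d ^ 2) * hsum
    · apply iota_inj
      simp only [map_add, map_mul, map_pow, map_sub, map_one, map_zero, hc2, hc4]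
      rw [k1, k2, k3, k4]
      linear_combination (- ι e' * ι g' * ι b ^ 2 * ι d ^ 2) * hprod
    · apply iota_inj
      simp only [map_add, map_mul, map_pow, map_sub, map_one, map_zero, hc2, hc4]
      rw [k1, k2, k3, k4]
      linear_combination (- (x3 + x4) * ι e' * ι g' * ι b ^ 2 * ι d ^ 2) * hprod + (x3 * x4) * ι e' * ι g' * ι b ^ 2 * ι d ^ 2 * hsum
end Height


section Quadratic
variable {M : Type*} [AddCommGroup M] (h : M → ℤ)
  (hp : ∀ P Q, h (P + Q) + h (P - Q) = 2 * h P + 2 * h Q)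
include hp

theorem quad_zero : h 0 = 0 := by
  have := hp 0 0
  simp only [add_zero, sub_zero] at this
  omega

theorem quad_line (P Q : M) (n : ℤ) :
    h (P + n • Q) = h P + n * (h (P + Q) - h P - h Q) + n ^ 2 * h Q := by
  suffices H : ∀ n : ℤ, h (P + n • Q) = h P + n * (h (P + Q) - h P - h Q) + n ^ 2 * h Q ∧
      h (P + (n + 1) • Q) = h P + (n + 1) * (h (P + Q) - h P - h Q) + (n + 1) ^ 2 * h Q from (H n).1
  intro n
  induction n using Int.induction_on with
  | zero => simp; ring
  | succ i ih =>
    refine ⟨ih.2, ?_⟩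
    have e := hp (P + ((i : ℤ) + 1) • Q) Q
    have e1 : P + ((i : ℤ) + 1) • Q + Q = P + ((i : ℤ) + 1 + 1) • Q := by
      rw [add_smul ((i : ℤ) + 1) 1, one_smul]; abel
    have e2 : P + ((i : ℤ) + 1) • Q - Q = P + (i : ℤ) • Q := by
      rw [add_smul, one_smul]; abel
    rw [e1, e2, ih.1, ih.2] at e
    linear_combination e
  | pred i ih =>
    have e := hp (P + (-(i : ℤ)) • Q) Q
    have e1 : P + (-(i : ℤ)) • Q + Q = P + (-(i : ℤ) + 1) • Q := by
      rw [add_smul (-(i : ℤ)) 1, one_smul]; abel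
    have e2 : P + (-(i : ℤ)) • Q - Q = P + (-(i : ℤ) - 1) • Q := by
      rw [sub_smul, one_smul]; abel
    rw [e1, e2, ih.1, ih.2] at e
    refine ⟨by linear_combination e, ?_⟩
    rw [sub_add_cancel, ih.1]

theorem quad_smul (P : M) (n : ℤ) : h (n • P) = n ^ 2 * h P := by
  have := quad_line h hp 0 P n
  rw [zero_add, zero_add, quad_zero h hp] at this
  linear_combination this

theorem quad_comb (P Q : M) (m n : ℤ) :
    h (m • P + n • Q) = m ^ 2 * h P + m * n * (h (P + Q) - h P - h Q) + n ^ 2 * h Q := by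
  rw [quad_line h hp (m • P) Q n, quad_smul h hp, add_comm (m • P) Q, quad_line h hp Q P m,
    add_comm Q P]
  ring

end Quadratic

/-- derivations of a field -/
abbrev ZDer (K : Type*) [Field K] : Type _ := Derivation ℤ K K

/-- a derivation from its underlying function -/
def mkZDer {K : Type*} [Field K] (d : K → K) (h : ∀ x y, d (x + y) = d x + d y)
    (h' : ∀ x y, d (x * y) = x * d y + y * d x) : ZDer K :=
  Derivation.mk' (AddMonoidHom.toIntLinearMap (AddMonoidHom.mk' d h)) (by
    intro a b
    simpa using h' a b)

section RatDeriv
open Polynomial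
variable {k : Type*} [Field k]
local notation "ι" => algebraMap k[X] (RatFunc k)

/-- derivative of a rational function -/
noncomputable def dRatFun (x : RatFunc k) : RatFunc k :=
  ι (derivative x.num * x.denom - x.num * derivative x.denom) / ι x.denom ^ 2

theorem dRatFun_div (a b : k[X]) (hb : b ≠ 0) :
    dRatFun (ι a / ι b) = ι (derivative a * b - a * derivative b) / ι b ^ 2 := by
  have hb' : ι b ≠ 0 := RatFunc.algebraMap_ne_zero hb
  set x := ι a / ι b with hx
  have hd : ι x.denom ≠ 0 := RatFunc.algebraMap_ne_zero (RatFunc.denom_ne_zero x)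
  have h1 : ι x.num / ι x.denom = ι a / ι b := by rw [RatFunc.num_div_denom]
  rw [div_eq_div_iff hd hb', ← map_mul, ← map_mul] at h1
  have h2 := RatFunc.algebraMap_injective k h1
  have h3 := congrArg derivative h2
  simp only [derivative_mul] at h3
  rw [dRatFun, div_eq_div_iff (pow_ne_zero 2 hd) (pow_ne_zero 2 hb'), ← map_pow, ← map_pow,
    ← map_mul, ← map_mul]
  congr 1
  linear_combination (x.denom * b) * h3 - (derivative x.denom * b + x.denom * derivative b) * h2

theorem exists_div (x : RatFunc k) : ∃ a b : k[X], b ≠ 0 ∧ x = ι a / ι b :=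
  ⟨x.num, x.denom, RatFunc.denom_ne_zero x, (RatFunc.num_div_denom x).symm⟩

theorem dRatFun_add (x y : RatFunc k) : dRatFun (x + y) = dRatFun x + dRatFun y := by
  obtain ⟨a, b, hb, rfl⟩ := exists_div x
  obtain ⟨c, d, hd, rfl⟩ := exists_div y
  have hb' : ι b ≠ 0 := RatFunc.algebraMap_ne_zero hb
  have hd' : ι d ≠ 0 := RatFunc.algebraMap_ne_zero hd
  have : ι a / ι b + ι c / ι d = ι (a * d + b * c) / ι (b * d) := by
    simp only [map_add, map_mul]; field_simp
  rw [this, dRatFun_div _ _ (mul_ne_zero hb hd), dRatFun_div _ _ hb, dRatFun_div _ _ hd]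
  simp only [derivative_mul, derivative_add, map_add, map_mul, map_sub]
  field_simp
  ring

theorem dRatFun_mul (x y : RatFunc k) : dRatFun (x * y) = x * dRatFun y + y * dRatFun x := by
  obtain ⟨a, b, hb, rfl⟩ := exists_div x
  obtain ⟨c, d, hd, rfl⟩ := exists_div y
  have hb' : ι b ≠ 0 := RatFunc.algebraMap_ne_zero hb
  have hd' : ι d ≠ 0 := RatFunc.algebraMap_ne_zero hd
  have : ι a / ι b * (ι c / ι d) = ι (a * c) / ι (b * d) := by
    simp only [map_add, map_mul]; field_simp
  rw [this, dRatFun_div _ _ (mul_ne_zero hb hd), dRatFun_div _ _ hb, dRatFun_div _ _ hd]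
  simp only [derivative_mul, derivative_add, map_add, map_mul, map_sub]
  field_simp
  ring

/-- the derivation `d/dt` of `k(t)` -/
noncomputable def dRat : ZDer (RatFunc k) := mkZDer dRatFun dRatFun_add dRatFun_mul

theorem dRat_apply (x : RatFunc k) : dRat x = dRatFun x := rfl

theorem dRat_iota (a : k[X]) : dRat (ι a) = ι (derivative a) := by
  have := dRatFun_div a 1 one_ne_zero
  simpa [dRat_apply] using this

end RatDeriv

section DPred
variable {K : Type*} [Field K] [DecidableEq K] {f A B : K} (δ : ZDer K)

/-- The pull-back of the invariant differential along `P` is `c` times the invariant differential. -/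
def Dp (f A B : K) (δ : ZDer K) (P : (twistCurve f A B).Point) (c : K) : Prop :=
  (P = 0 ∧ c = 0) ∨ ∃ X Y, IsPt f A B P X Y ∧ δ X = c * Y ∧
    2 * f * δ Y = (3 * X ^ 2 + A) * c - δ f * Y

variable {δ}

theorem Dp.neg {P : (twistCurve f A B).Point} {c : K} (h : Dp f A B δ P c) :
    Dp f A B δ (-P) (-c) := by
  rcases h with ⟨rfl, rfl⟩ | ⟨X, Y, h, h1, h2⟩
  · left; simp
  · right
    refine ⟨X, -Y, h.neg, by rw [h1]; ring, ?_⟩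
    rw [map_neg]; linear_combination -h2

theorem g'_ne (hΔ : 4 * A ^ 3 + 27 * B ^ 2 ≠ 0) {X : K} (h : X ^ 3 + A * X + B = 0) :
    3 * X ^ 2 + A ≠ 0 := by
  intro e3
  apply hΔ
  linear_combination (27 * B - 27 * X ^ 3 - 27 * A * X) * h + (4 * A ^ 2 + 15 * A * X ^ 2 + 9 * X ^ 4) * e3

theorem Dp.unique (hf : f ≠ 0) (hΔ : 4 * A ^ 3 + 27 * B ^ 2 ≠ 0) {P : (twistCurve f A B).Point} {c c' : K}
    (h : Dp f A B δ P c) (h' : Dp f A B δ P c') : c = c' := by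
  rcases h with ⟨rfl, rfl⟩ | ⟨X, Y, h, h1, h2⟩
  · rcases h' with ⟨_, rfl⟩ | ⟨X', Y', h', h1', h2'⟩
    · rfl
    · exact absurd rfl h'.ne_zero
  · rcases h' with ⟨rfl, rfl⟩ | ⟨X', Y', h', h1', h2'⟩
    · exact absurd rfl h.ne_zero
    · obtain ⟨rfl, rfl⟩ := h.unique hf h'
      by_cases hY : Y = 0
      · have e := h.eqn hf
        rw [hY] at e
        have := g'_ne hΔ (X := X) (by rw [← e]; ring)
        apply mul_left_cancel₀ this
        linear_combination h2' - h2
      · apply mul_right_cancel₀ hY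
        rw [← h1, ← h1']

theorem Dp.double (hf : f ≠ 0) (h2 : (2 : K) ≠ 0) (hΔ : 4 * A ^ 3 + 27 * B ^ 2 ≠ 0)
    (hA : δ A = 0) (hB : δ B = 0) {P : (twistCurve f A B).Point} {c : K} (hc : δ c = 0)
    (h : Dp f A B δ P c) : Dp f A B δ (P + P) (c + c) := by
  rcases h with ⟨rfl, rfl⟩ | ⟨X, Y, h, h1, h3⟩
  · left; simp
  by_cases hY : Y = 0
  · left
    constructor
    · subst hY
      have h1 := h.neg
      rw [neg_zero] at h1
      nth_rewrite 2 [h.ext h1]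
      exact add_neg_cancel P
    · have e := h.eqn hf
      rw [hY] at e
      have := g'_ne hΔ (X := X) (by rw [← e]; ring)
      rw [hY, map_zero] at h3
      have : (3 * X ^ 2 + A) * c = 0 := by linear_combination -h3
      have : c = 0 := by
        rcases mul_eq_zero.1 this with h | h
        · contradiction
        · exact h
      rw [this, add_zero]
  · right
    obtain ⟨L, hL⟩ : ∃ L, L * (2 * f * Y) = 3 * X ^ 2 + A :=
        ⟨(3 * X ^ 2 + A) / (2 * f * Y), div_mul_cancel₀ _ (mul_ne_zero (mul_ne_zero h2 hf) hY)⟩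
    have hA' : A = L * (2 * f * Y) - 3 * X ^ 2 := by linear_combination -hL
    have d1 := congrArg δ hL
    have d2 : δ (2 : K) = 0 := by simpa using δ.map_natCast 2
    have d3 : δ (3 : K) = 0 := by simpa using δ.map_natCast 3
    simp only [Derivation.leibniz, map_add, map_sub, Derivation.leibniz_pow, smul_eq_mul, d2, d3, hA, nsmul_eq_mul] at d1
    push_cast at d1
    have hl : 2 * f * δ L = 6 * X * c - L * δ f - 2 * f * L ^ 2 * c := by
      apply mul_right_cancel₀ hY
      rw [h1] at d1
      rw [hA'] at h3
      linear_combination d1 - L * h3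
    have hX3 := h.double hf h2 hY hL rfl rfl
    refine ⟨_, _, hX3, ?_, ?_⟩
    · simp only [Derivation.leibniz, map_add, map_sub, map_neg, Derivation.leibniz_pow, smul_eq_mul, d2, d3, hA, nsmul_eq_mul, h1]
      push_cast
      linear_combination L * hl
    · simp only [Derivation.leibniz, map_add, map_sub, map_neg, Derivation.leibniz_pow, smul_eq_mul, d2, d3, hA, nsmul_eq_mul, h1]
      push_cast
      rw [hA'] at h3 ⊢
      linear_combination -h3 - (f * L ^ 2 - X - X - X + 2 * f * L ^ 2) * hl

theorem Dp.add (hf : f ≠ 0) (h2 : (2 : K) ≠ 0) (hΔ : 4 * A ^ 3 + 27 * B ^ 2 ≠ 0)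
    (hA : δ A = 0) (hB : δ B = 0) {P Q : (twistCurve f A B).Point} {c d : K} (hc : δ c = 0)
    (hd : δ d = 0) (h : Dp f A B δ P c) (h' : Dp f A B δ Q d) : Dp f A B δ (P + Q) (c + d) := by
  have h0 := h
  have h0' := h'
  rcases h with ⟨rfl, rfl⟩ | ⟨X₁, Y₁, h, h1, h3⟩
  · simpa using h'
  rcases h' with ⟨rfl, rfl⟩ | ⟨X₂, Y₂, h', h1', h3'⟩
  · simpa using h0
  have e1 := h.eqn hf
  have e2 := h'.eqn hf
  by_cases hX : X₁ = X₂
  · subst hX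
    have : f * ((Y₁ - Y₂) * (Y₁ + Y₂)) = 0 := by linear_combination e1 - e2
    have := (mul_eq_zero.1 this).resolve_left hf
    rcases mul_eq_zero.1 this with hh | hh
    · have : Y₂ = Y₁ := by linear_combination -hh
      rw [this] at h'
      have hPQ := h.ext h'
      subst hPQ
      rw [← h0.unique hf hΔ h0']
      exact h0.double hf h2 hΔ hA hB hc
    · have : Y₂ = - Y₁ := by linear_combination hh
      rw [this] at h'
      have := h.eq_neg h'
      subst this
      left
      refine ⟨add_neg_cancel P, ?_⟩
      rw [← h0.neg.unique hf hΔ h0']; ring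
  · right
    have hne : X₁ - X₂ ≠ 0 := sub_ne_zero.2 hX
    obtain ⟨L, hL⟩ : ∃ L, L * (X₁ - X₂) = Y₁ - Y₂ := ⟨_, div_mul_cancel₀ _ hne⟩
    have hY₂ : Y₂ = Y₁ - L * (X₁ - X₂) := by linear_combination hL
    have hA' : A = f * L * (2 * Y₁ - L * (X₁ - X₂)) - (X₁ ^ 2 + X₁ * X₂ + X₂ ^ 2) := by
      apply mul_right_cancel₀ hne
      rw [hY₂] at e2
      linear_combination e2 - e1
    have d1 := congrArg δ hL
    simp only [Derivation.leibniz, map_add, map_sub, smul_eq_mul, h1, h1'] at d1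
    have hX3 := h.add hf h' hX hL rfl rfl
    have hl : 2 * f * (X₁ - X₂) * δ L = (3 * X₁ ^ 2 + A) * c - (3 * X₂ ^ 2 + A) * d - δ f * L * (X₁ - X₂)
        - 2 * f * L * (c * Y₁ - d * Y₂) := by
      linear_combination 2 * f * d1 + h3 - h3' + δ f * hL
    refine ⟨_, _, hX3, ?_, ?_⟩
    · simp only [Derivation.leibniz, map_add, map_sub, map_neg, Derivation.leibniz_pow, smul_eq_mul, nsmul_eq_mul, h1, h1']
      push_cast
      apply mul_right_cancel₀ hne
      rw [hA', hY₂] at hl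
      rw [hY₂]
      linear_combination L * hl
    · simp only [Derivation.leibniz, map_add, map_sub, map_neg, Derivation.leibniz_pow, smul_eq_mul, nsmul_eq_mul, h1, h1']
      push_cast
      apply mul_right_cancel₀ hne
      rw [hA', hY₂] at hl
      rw [hA'] at h3 ⊢
      rw [hY₂]
      linear_combination - (X₁ - X₂) * h3 - (f * L ^ 2 - X₁ - X₂ - X₁ + 2 * f * L ^ 2) * hl

theorem Dp.zero : Dp f A B δ 0 0 := Or.inl ⟨rfl, rfl⟩

theorem Dp.nsmul (hf : f ≠ 0) (h2 : (2 : K) ≠ 0) (hΔ : 4 * A ^ 3 + 27 * B ^ 2 ≠ 0)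
    (hA : δ A = 0) (hB : δ B = 0) {P : (twistCurve f A B).Point} {c : K} (hc : δ c = 0)
    (h : Dp f A B δ P c) (n : ℕ) : Dp f A B δ (n • P) (n * c) := by
  induction n with
  | zero => simpa using Dp.zero
  | succ n ih =>
    rw [succ_nsmul]
    push_cast
    rw [add_mul, one_mul]
    exact ih.add hf h2 hΔ hA hB (by simp [hc]) hc h

theorem Dp.zsmul (hf : f ≠ 0) (h2 : (2 : K) ≠ 0) (hΔ : 4 * A ^ 3 + 27 * B ^ 2 ≠ 0)
    (hA : δ A = 0) (hB : δ B = 0) {P : (twistCurve f A B).Point} {c : K} (hc : δ c = 0)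
    (h : Dp f A B δ P c) (n : ℤ) : Dp f A B δ (n • P) (n * c) := by
  obtain ⟨m, rfl | rfl⟩ := n.eq_nat_or_neg
  · simpa using h.nsmul hf h2 hΔ hA hB hc m
  · simpa using (h.nsmul hf h2 hΔ hA hB hc m).neg

end DPred


section RhoData
variable {R : Type*} [CommRing R] (s φ ω : R)
/-- coefficients of the curve -/
def cA : R := 24 * φ - 27
/-- coefficients of the curve -/
def cB : R := 70 - 56 * φ
/-- first root -/
def cE0 : R := 4 * φ - 5
/-- second root -/
def cE : R := 3 - φ + ω + 2 * φ * ω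
/-- third root -/
def cEm : R := 2 - 3 * φ - ω - 2 * φ * ω
/-- pole of the isogeny -/
def cQ : R := 3 - 2 * φ - 2 * ω
/-- zero of the isogeny -/
def cR : R := (4) * φ * ω + (4) * ω + (3)
/-- the multiplier of the isogeny -/
def cρ : R := 1 - φ + ω * (1 - 2 * φ)
/-- residue -/
def cb : R := (-6) * φ * ω + (-15) * φ + (-9) * ω + (-12)
/-- residue -/
def ctq : R := (48) * φ * ω + (-96) * ω
/-- residue -/
def cuq : R := (96) * φ * ω + (48) * φ + (-240) * ω + (-192)
/-- denominator of the isogeny -/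
def pDen : R := (s - cE φ ω) * (s - cQ φ ω) ^ 2
/-- numerator of the isogeny -/
def pNum : R := s * pDen s φ ω + cb φ ω * (s - cQ φ ω) ^ 2 + ctq φ ω * ((s - cE φ ω) * (s - cQ φ ω))
  + cuq φ ω * (s - cE φ ω)
/-- square factor -/
def pQ0 : R := s ^ 2 + ((-4) * φ * ω + (8) * φ + (8) * ω + (-10)) * s + ((12) * φ * ω + (-24) * φ + (-40) * ω + (21))
/-- square factor -/
def pQ1 : R := s ^ 2 + ((4) * φ * ω + (-2)) * s + ((4) * φ * ω + (8) * φ + (8) * ω + (-3))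

variable {φ ω} (hφ : φ ^ 2 = φ + 1) (hω : ω ^ 2 = - ω - 1)
include hφ hω

theorem cρ_sq : cρ φ ω ^ 2 = cρ φ ω - 4 := by
  simp only [cρ]
  linear_combination ((4) * ω ^ 2 + (4) * ω + (1)) * hφ + ((5)) * hω

theorem id_e0 : pNum s φ ω - cE0 φ * (cρ φ ω ^ 2 * pDen s φ ω) = pQ0 s φ ω ^ 2 := by
  rw [cρ_sq hφ hω]
  simp only [pNum, pDen, cρ, cE0, cE, cQ, cb, ctq, cuq, pQ0]
  linear_combination ((8) * s ^ 3 * ω + (4) * s ^ 3 + (-16) * s ^ 2 * φ * ω ^ 2 + (32) * s ^ 2 * φ * ω + (20) * s ^ 2 * φ + (20) * s ^ 2 * ω ^ 2 + (-56) * s ^ 2 * ω + (-37) * s ^ 2 + (-64) * s * φ ^ 2 * ω ^ 2 + (32) * s * φ ^ 2 * ω + (32) * s * φ ^ 2 + (-64) * s * φ * ω ^ 3 + (176) * s * φ * ω ^ 2 + (-304) * s * φ * ω + (-28) * s * φ + (48) * s * ω ^ 3 + (-424) * s * ω ^ 2 + (356) * s * ω + (82) * s + (-64) * φ ^ 3 *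 ω ^ 2 + (16) * φ ^ 3 + (-128) * φ ^ 2 * ω ^ 3 + (208) * φ ^ 2 * ω ^ 2 + (-192) * φ ^ 2 * ω + (-52) * φ ^ 2 + (-64) * φ * ω ^ 4 + (224) * φ * ω ^ 3 + (-848) * φ * ω ^ 2 + (744) * φ * ω + (-144) * φ + (16) * ω ^ 4 + (-528) * ω ^ 3 + (972) * ω ^ 2 + (-1152) * ω + (-25)) * hφ + ((8) * s ^ 2 * φ + (-29) * s ^ 2 + (-64) * s * φ * ω + (12) * s * φ + (44) * s * ω + (-50) * s + (-32) * φ * ω ^ 2 + (184) * φ * ω + (-352) * φ + (-4) * ω ^ 2 + (-308) * ω + (407)) * hω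

theorem id_e : pNum s φ ω - cE φ ω * (cρ φ ω ^ 2 * pDen s φ ω) = pQ1 s φ ω ^ 2 := by
  rw [cρ_sq hφ hω]
  simp only [pNum, pDen, cρ, cE0, cE, cQ, cb, ctq, cuq, pQ1]
  linear_combination ((4) * s ^ 3 * ω ^ 2 + (-1) * s ^ 3 + (-8) * s ^ 2 * φ * ω ^ 3 + (20) * s ^ 2 * φ * ω ^ 2 + (2) * s ^ 2 * φ * ω + (-5) * s ^ 2 * φ + (4) * s ^ 2 * ω ^ 3 + (-60) * s ^ 2 * ω ^ 2 + (61) * s ^ 2 * ω + (12) * s ^ 2 + (-32) * s * φ ^ 2 * ω ^ 3 + (32) * s * φ ^ 2 * ω ^ 2 + (8) * s * φ ^ 2 * ω + (-8) * s * φ ^ 2 + (-32) * s * φ * ω ^ 4 + (48) * s * φ * ω ^ 3 + (-192) * s * φ * ω ^ 2 + (92) * s * φ * ω + (26) * s * φ + (-32) * s * ω ^ 4 + (-160) * s * ω ^ 3 + (76) * s * ω ^ 2 + (-290) * s * ω + (-21) * s + (-32) * φ ^ 3 * ω ^ 3 + (16) * φ ^ 3 * ω ^ 2 + (8) * φ ^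 3 * ω + (-4) * φ ^ 3 + (-64) * φ ^ 2 * ω ^ 4 + (80) * φ ^ 2 * ω ^ 3 + (-176) * φ ^ 2 * ω ^ 2 + (36) * φ ^ 2 * ω + (20) * φ ^ 2 + (-32) * φ * ω ^ 5 + (16) * φ * ω ^ 4 + (-328) * φ * ω ^ 3 + (196) * φ * ω ^ 2 + (-250) * φ * ω + (-53) * φ + (-48) * ω ^ 5 + (-144) * ω ^ 4 + (-76) * ω ^ 3 + (-380) * ω ^ 2 + (-131) * ω + (-106)) * hφ + ((4) * s ^ 3 * φ + (3) * s ^ 3 + (-2) * s ^ 2 * φ * ω + (-9) * s ^ 2 * φ + s ^ 2 * ω + (-52) * s ^ 2 + (-56) * s * φ * ω ^ 2 + (-84) * s * φ * ω + (-98) * s * φ + (-32) * s * ω ^ 2 + (-114) * s * ω + (63) * s + (-72) * φ * ω ^ 3 + (-132) * φ * ω ^ 2 + (34) * φ * ω + (-33) * φ + (-44) * ω ^ 3 + (-100) * ω ^ 2 + (161) * ω + (110)) * hω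

theorem id_em : pNum s φ ω - cEm φ ω * (cρ φ ω ^ 2 * pDen s φ ω) =
    (s - cE0 φ) * (s - cEm φ ω) * (s - cR φ ω) ^ 2 := by
  rw [cρ_sq hφ hω]
  simp only [pNum, pDen, cρ, cE0, cE, cQ, cb, ctq, cuq, cEm, cR]
  linear_combination ((-4) * s ^ 3 * ω ^ 2 + (-8) * s ^ 3 * ω + (-3) * s ^ 3 + (8) * s ^ 2 * φ * ω ^ 3 + (-4) * s ^ 2 * φ * ω ^ 2 + (-34) * s ^ 2 * φ * ω + (-15) * s ^ 2 * φ + (-4) * s ^ 2 * ω ^ 3 + (8) * s ^ 2 * ω ^ 2 + (35) * s ^ 2 * ω + (-3) * s ^ 2 + (32) * s * φ ^ 2 * ω ^ 3 + (32) * s * φ ^ 2 * ω ^ 2 + (-40) * s * φ ^ 2 * ω + (-24) * s * φ ^ 2 + (32) * s * φ * ω ^ 4 + (-16) * s * φ * ω ^ 3 + (-32) * s * φ * ω ^ 2 + (92) * s * φ * ω + (14) * s * φ + (32) * s * ω ^ 4 + (-52) * s * ω ^ 2 + (-126) * s * ω + (11) * s + (32) * φ ^ 3 * ω ^ 3 +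 (48) * φ ^ 3 * ω ^ 2 + (-8) * φ ^ 3 * ω + (-12) * φ ^ 3 + (64) * φ ^ 2 * ω ^ 4 + (176) * φ ^ 2 * ω ^ 3 + (160) * φ ^ 2 * ω ^ 2 + (156) * φ ^ 2 * ω + (32) * φ ^ 2 + (32) * φ * ω ^ 5 + (48) * φ * ω ^ 4 + (392) * φ * ω ^ 3 + (476) * φ * ω ^ 2 + (10) * φ * ω + (17) * φ + (48) * ω ^ 5 + (128) * ω ^ 4 + (300) * ω ^ 3 + (224) * ω ^ 2 + (-17) * ω + (-41)) * hφ + ((-4) * s ^ 3 * φ + (-3) * s ^ 3 + (2) * s ^ 2 * φ * ω + s ^ 2 * φ + (-1) * s ^ 2 * ω + (-23) * s ^ 2 + (56) * s * φ * ω ^ 2 + (-84) * s * φ * ω + (-62) * s * φ + (32) * s * ω ^ 2 + (-70) * s * ω + (-61) * s + (72) * φ * ω ^ 3 + (164) * φ * ω ^ 2 + (302) * φ * ω + (-99) * φ + (44) * ω ^ 3 + (104) * ω ^ 2 + (231) * ω + (355)) * hω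

theorem id_fac : s ^ 3 + cA φ * s + cB φ = (s - cE0 φ) * (s - cE φ ω) * (s - cEm φ ω) := by
  simp only [cA, cB, cE0, cE, cEm]
  linear_combination ((4) * s * ω ^ 2 + (4) * s * ω + (13) * s + (-16) * φ * ω ^ 2 + (-16) * φ * ω + (12) * φ + (-12) * ω ^ 2 + (-12) * ω + (-47)) * hφ + ((8) * s * φ + (5) * s + (-12) * φ + (-7)) * hω

theorem cb_mul : cb φ ω * (-5 * φ * ω - 3 * φ + 9 * ω + 4) = 48 := by
  simp only [cb]
  linear_combination ((30) * ω ^ 2 + (93) * ω + (45)) * hφ + ((21) * φ + (-51)) * hω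

theorem cuq_mul : cuq φ ω * (φ * ω - φ + 3 * ω) = 576 := by
  simp only [cuq]
  linear_combination ((96) * ω ^ 2 + (-48) * ω + (-48)) * hφ + ((144) * φ + (-624)) * hω

theorem ceq_mul : (cE φ ω - cQ φ ω) * (φ * ω + 2 * φ - 4 * ω - 5) = 12 := by
  simp only [cE, cQ]
  linear_combination ((2) * ω ^ 2 + (5) * ω + (2)) * hφ + ((-3) * φ + (-10)) * hω

theorem cρ_mul : cρ φ ω * (1 - cρ φ ω) = 4 := by
  linear_combination - cρ_sq hφ hω

theorem id_der {den' num' : R} (hd : den' = (s - cQ φ ω) ^ 2 + (s - cE φ ω) * (2 * (s - cQ φ ω)))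
    (hn : num' = pDen s φ ω + s * den' + cb φ ω * (2 * (s - cQ φ ω)) +
      ctq φ ω * ((s - cQ φ ω) + (s - cE φ ω)) + cuq φ ω) :
    num' * pDen s φ ω - pNum s φ ω * den' = pQ0 s φ ω * pQ1 s φ ω * (s - cR φ ω) * (s - cQ φ ω) := by
  rw [hn, hd]
  simp only [pNum, pDen, cρ, cE0, cE, cQ, cb, ctq, cuq, cEm, cR, pQ0, pQ1]
  linear_combination ((20) * s ^ 4 * ω ^ 2 + (-28) * s ^ 4 * ω + (25) * s ^ 4 + (-64) * s ^ 3 * φ * ω ^ 3 + (192) * s ^ 3 * φ * ω ^ 2 + (-128) * s ^ 3 * φ * ω + (88) * s ^ 3 * φ + (64) * s ^ 3 * ω ^ 3 + (80) * s ^ 3 * ω ^ 2 + (264) * s ^ 3 * ω + (-236) * s ^ 3 + (-128) * s ^ 2 * φ ^ 2 * ω ^ 3 + (352) * s ^ 2 * φ ^ 2 * ω ^ 2 + (-224) * s ^ 2 * φ ^ 2 * ω + (104) * s ^ 2 * φ ^ 2 + (-128) * s ^ 2 * φ * ω ^ 4 + (576) * s ^ 2 * φ * ω ^ 3 + (-256)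 * s ^ 2 * φ * ω ^ 2 + (1024) * s ^ 2 * φ * ω + (-456) * s ^ 2 * φ + (96) * s ^ 2 * ω ^ 4 + (352) * s ^ 2 * ω ^ 3 + (-312) * s ^ 2 * ω ^ 2 + (648) * s ^ 2 * ω + (1182) * s ^ 2 + (128) * s * φ ^ 3 * ω ^ 2 + (-192) * s * φ ^ 3 * ω + (64) * s * φ ^ 3 + (-128) * s * φ ^ 2 * ω ^ 3 + (-192) * s * φ ^ 2 * ω ^ 2 + (1408) * s * φ ^ 2 * ω + (-80) * s * φ ^ 2 + (-128) * s * φ * ω ^ 4 + (-192) * s * φ * ω ^ 3 + (-576) * s * φ * ω ^ 2 + (512) * s * φ * ω + (872) * s * φ + (128) * s * ω ^ 5 + (-192) * s * ω ^ 4 + (-1536) * s * ω ^ 3 + (1776) * s * ω ^ 2 + (-5592) * s * ω + (-444) * s + (64) * φ ^ 4 * ω ^ 2 + (-64) * φ ^ 4 * ω + (16) * φ ^ 4 + (-512) * φ ^ 3 * ω ^ 3 + (256) * φ ^ 3 * ω ^ 2 + (448) * φ ^ 3 * ω + (64) * φ ^ 3 + (-1152) * φ ^ 2 * ω ^ 4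 + (1664) * φ ^ 2 * ω ^ 3 + (-2288) * φ ^ 2 * ω ^ 2 + (-528) * φ ^ 2 * ω + (-424) * φ ^ 2 + (-512) * φ * ω ^ 5 + (1280) * φ * ω ^ 4 + (-2880) * φ * ω ^ 3 + (400) * φ * ω ^ 2 + (-6896) * φ * ω + (408) * φ + (64) * ω ^ 6 + (64) * ω ^ 5 + (464) * ω ^ 4 + (-512) * ω ^ 3 + (-5084) * ω ^ 2 + (7396) * ω + (-3391)) * hφ + ((53) * s ^ 4 + (64) * s ^ 3 * φ * ω + (216) * s ^ 3 * φ + (120) * s ^ 3 * ω + (-188) * s ^ 3 + (192) * s ^ 2 * φ * ω ^ 2 + (-384) * s ^ 2 * φ * ω + (336) * s ^ 2 * φ + (72) * s ^ 2 * ω ^ 2 + (24) * s ^ 2 * ω + (-762) * s ^ 2 + (192) * s * φ * ω ^ 3 + (-768) * s * φ * ω ^ 2 + (1920) * s * φ * ω + (-4360) * s * φ + (128) * s * ω ^ 3 + (240) * s * ω ^ 2 + (-3960) * s * ω + (6900) * s + (128) * φ * ω ^ 4 + (704) * φ * ω ^ 3 + (864) * φ * ω ^ 2 + (-5184) * φ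 * ω + (7088) * φ + (80) * ω ^ 4 + (512) * ω ^ 3 + (-1464) * ω ^ 2 + (8168) * ω + (-11491)) * hω

theorem id_disc : 4 * cA φ ^ 3 + 27 * cB φ ^ 2 = 6912 * φ ^ 2 := by
  simp only [cA, cB]
  linear_combination ((55296) * φ + (-53568)) * hφ + (0) * hω

end RhoData


section DerLemma
variable {K : Type*} [Field K] (δ : ZDer K)
theorem der_lemma {f A B x y c : K} (heq : f * y ^ 2 = x ^ 3 + A * x + B) (hA : δ A = 0) (hB : δ B = 0)
    (hx : δ x = c * y) (hy : y ≠ 0) : 2 * f * δ y = (3 * x ^ 2 + A) * c - δ f * y := by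
  have d1 := congrArg δ heq
  simp only [Derivation.leibniz, map_add, Derivation.leibniz_pow, smul_eq_mul, nsmul_eq_mul, hA, hB, hx] at d1
  push_cast at d1
  apply mul_right_cancel₀ hy
  linear_combination d1
end DerLemma

section Dvd
open Polynomial
variable {k : Type*} [Field k] [IsAlgClosed k] [DecidableEq (RatFunc k)]
variable {f : k[X]} {A B : k}
local notation "ι" => algebraMap k[X] (RatFunc k)

/-- `Dp` over `k(t)` -/
abbrev MWD (f : k[X]) (A B : k) (P : MW f A B) (c : k) : Prop :=
  Dp (ι f) (ι (C A)) (ι (C B)) dRat P (ι (C c))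

theorem dRat_const (c : k) : dRat (ι (C c)) = 0 := by rw [dRat_iota]; simp

theorem two_ne_ratfunc (h2 : (2 : k) ≠ 0) : (2 : RatFunc k) ≠ 0 := by
  have := iota_ne (C_ne_zero.2 h2); rwa [show (C 2 : k[X]) = 2 from rfl, map_ofNat] at this

theorem disc_ne_ratfunc (hΔ : 4 * A ^ 3 + 27 * B ^ 2 ≠ 0) :
    4 * ι (C A) ^ 3 + 27 * ι (C B) ^ 2 ≠ 0 := by
  have := iota_ne (C_ne_zero.2 hΔ)
  convert this using 1
  simp only [map_add, map_mul, map_pow, map_ofNat]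

theorem MWD.comb (hf : f ≠ 0) (h2 : (2 : k) ≠ 0) (hΔ : 4 * A ^ 3 + 27 * B ^ 2 ≠ 0) {P Q : MW f A B} {c d : k}
    (h : MWD f A B P c) (h' : MWD f A B Q d) (m n : ℤ) : MWD f A B (m • P + n • Q) (m * c + n * d) := by
  have a1 := Dp.zsmul (iota_ne hf) (two_ne_ratfunc h2) (disc_ne_ratfunc hΔ) (dRat_const A) (dRat_const B)
    (dRat_const c) h m
  have a2 := Dp.zsmul (iota_ne hf) (two_ne_ratfunc h2) (disc_ne_ratfunc hΔ) (dRat_const A) (dRat_const B)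
    (dRat_const d) h' n
  have e1 : (m : RatFunc k) * ι (C c) = ι (C (m * c)) := by simp
  have e2 : (n : RatFunc k) * ι (C d) = ι (C (n * d)) := by simp
  rw [e1] at a1
  rw [e2] at a2
  have := Dp.add (iota_ne hf) (two_ne_ratfunc h2) (disc_ne_ratfunc hΔ) (dRat_const A) (dRat_const B)
    (dRat_const _) (dRat_const _) a1 a2
  rwa [← map_add, ← C_add] at this

theorem derivative_eq_zero_of_dvd {b : k[X]} (h : b ∣ derivative b) : derivative b = 0 := by
  by_contra hn
  have hb : b.natDegree ≠ 0 := by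
    intro h0
    apply hn
    rw [natDegree_eq_zero] at h0
    obtain ⟨c, rfl⟩ := h0
    simp
  exact absurd (natDegree_le_of_dvd h hn) (not_le.2 (natDegree_derivative_lt hb))

theorem coprime_deriv {a b : k[X]} (h : IsCoprime a b) (e : derivative a * b - a * derivative b = 0) :
    derivative a = 0 ∧ derivative b = 0 := by
  constructor
  · apply derivative_eq_zero_of_dvd
    apply h.dvd_of_dvd_mul_right
    exact ⟨derivative b, by linear_combination e⟩
  · apply derivative_eq_zero_of_dvd
    apply h.symm.dvd_of_dvd_mul_left
    exact ⟨derivative a, by linear_combination -e⟩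

theorem MWD.expand_rep {p : ℕ} [Fact p.Prime] [CharP k p] (hf : f ≠ 0) {P : MW f A B} (h : MWD f A B P 0) :
    ∃ a b : k[X], IsCoprime a b ∧ RepX f A B P (expand k p a) (expand k p b) := by
  rcases h with ⟨rfl, h⟩ | ⟨X, Y, h, h1, h2⟩
  · exact ⟨1, 0, isCoprime_one_left, by simpa using rep_zero⟩
  · obtain ⟨a, b, hP⟩ := exists_rep hf P
    have hP' := hP
    obtain ⟨hab, ⟨-, h0⟩ | ⟨hb, Y', h'⟩⟩ := hP'
    · exact absurd h0 h.ne_zero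
    have hX := (h.unique (iota_ne hf) h').1
    rw [hX] at h1
    simp only [C_0, map_zero, zero_mul] at h1
    rw [dRat_apply, dRatFun_div _ _ hb, div_eq_zero_iff] at h1
    have h3 : derivative a * b - a * derivative b = 0 := by
      rcases h1 with h1 | h1
      · exact iota_inj (by rw [h1, map_zero])
      · exact absurd h1 (pow_ne_zero 2 (iota_ne hb))
    obtain ⟨ha', hb'⟩ := coprime_deriv hab h3
    have ea := expand_contract p ha' (Fact.out : p.Prime).ne_zero
    have eb := expand_contract p hb' (Fact.out : p.Prime).ne_zero
    refine ⟨contract p a, contract p b, ?_, ?_⟩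
    · rw [← ea, ← eb] at hab
      exact (isCoprime_expand (Fact.out : p.Prime).ne_zero).1 hab
    · rw [ea, eb]; exact hP

theorem MWD.dvd_ht {p : ℕ} [Fact p.Prime] [CharP k p] (hf : f ≠ 0) {P : MW f A B} (h : MWD f A B P 0) :
    p ∣ ht P := by
  obtain ⟨a, b, -, h⟩ := MWD.expand_rep (p := p) hf h
  rw [h.ht hf, natDegree_expand, natDegree_expand]
  rcases max_choice (a.natDegree * p) (b.natDegree * p) with h | h <;> rw [h] <;> exact dvd_mul_left _ _

end Dvd

section Concrete
open Polynomial
variable {k : Type*} [Field k] [IsAlgClosed k] [DecidableEq (RatFunc k)]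
local notation "ι" => algebraMap k[X] (RatFunc k)

/-- the cubic -/
noncomputable def gP {k : Type*} [Field k] (φ : k) : k[X] := X ^ 3 + C (cA φ) * X + C (cB φ)

variable {φ ω : k}

theorem gP_natDegree : (gP φ).natDegree = 3 := by
  rw [gP]; compute_degree!

theorem gP_monic : (gP φ).Monic := by
  rw [gP]; monicity!

theorem gP_ne : gP φ ≠ 0 := gP_monic.ne_zero

theorem phi_ne (hφ : φ ^ 2 = φ + 1) : φ ≠ 0 := by
  rintro rfl; simp at hφ

theorem gP_disc (h2 : (2 : k) ≠ 0) (h3 : (3 : k) ≠ 0) (hφ : φ ^ 2 = φ + 1) (hω : ω ^ 2 = - ω - 1) :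
    4 * cA φ ^ 3 + 27 * cB φ ^ 2 ≠ 0 := by
  rw [id_disc hφ hω, show (6912 : k) = 2 ^ 8 * 3 ^ 3 by norm_num]
  exact mul_ne_zero (mul_ne_zero (pow_ne_zero _ h2) (pow_ne_zero _ h3)) (pow_ne_zero _ (phi_ne hφ))

theorem exists_I (h2 : (2 : k) ≠ 0) (hΔ : 4 * cA φ ^ 3 + 27 * cB φ ^ 2 ≠ 0) :
    ∃ I : MW (gP φ) (cA φ) (cB φ), MWPt _ _ _ I (ι X) 1 ∧ ht I = 1 ∧ MWD _ _ _ I 1 := by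
  obtain ⟨I, hI⟩ := exists_isPt (f := ι (gP φ)) (A := ι (C (cA φ))) (B := ι (C (cB φ))) (X := ι X) (Y := 1)
    (iota_ne gP_ne) (two_ne_ratfunc h2) (disc_ne_ratfunc hΔ) (by simp only [gP, map_add, map_mul, map_pow]; ring)
  refine ⟨I, hI, ?_, ?_⟩
  · have : RepX _ _ _ I X 1 := ⟨isCoprime_one_right, Or.inr ⟨one_ne_zero, 1, by rw [map_one, div_one]; exact hI⟩⟩
    rw [this.ht gP_ne]; simp
  · right
    refine ⟨_, _, hI, ?_, ?_⟩
    · rw [dRat_iota]; simp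
    · have d1 : dRat (1 : RatFunc k) = 0 := by
        have := dRat_const (1 : k)
        rwa [C_1, map_one] at this
      rw [dRat_iota, d1]
      have : derivative (gP φ) = 3 * X ^ 2 + C (cA φ) := by
        have c2 : (C (2 : k)) = 2 := rfl
        simp [gP, c2]; norm_num
      rw [this, map_add, map_mul, map_pow, map_ofNat, C_1, map_one]
      ring

theorem isCoprime_X_sub_C_of_eval {a : k[X]} {r : k} (h : a.eval r ≠ 0) : IsCoprime a (X - C r) := by
  rw [isCoprime_comm]
  refine ((irreducible_X_sub_C r).coprime_iff_not_dvd).2 ?_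
  rw [dvd_iff_isRoot]
  exact h

theorem quartic_deg (e q b t u : k) : (X * ((X - C e) * (X - C q) ^ 2) + C b * (X - C q) ^ 2 +
      C t * ((X - C e) * (X - C q)) + C u * (X - C e)).natDegree = 4 := by
  have : X * ((X - C e) * (X - C q) ^ 2) + C b * (X - C q) ^ 2 +
      C t * ((X - C e) * (X - C q)) + C u * (X - C e) = X ^ 4 + C (-(e + 2 * q)) * X ^ 3
      + C (q ^ 2 + 2 * e * q + b + t) * X ^ 2 + C (-(e * q ^ 2) - 2 * b * q - t * (e + q) + u) * X
      + C (b * q ^ 2 + t * e * q - u * e) := by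
    simp only [map_add, map_sub, map_mul, map_neg, map_one, map_ofNat, map_pow]; ring
  rw [this]; compute_degree!

theorem exists_rho (h2 : (2 : k) ≠ 0) (h3 : (3 : k) ≠ 0) (hφ : φ ^ 2 = φ + 1) (hω : ω ^ 2 = - ω - 1) :
    ∃ P : MW (gP φ) (cA φ) (cB φ), ht P = 4 ∧ MWD _ _ _ P (cρ φ ω) := by
  have hΔ := gP_disc h2 h3 hφ hω
  have hφ' : (C φ : k[X]) ^ 2 = C φ + 1 := by rw [← C_pow, hφ]; simp
  have hω' : (C ω : k[X]) ^ 2 = - C ω - 1 := by rw [← C_pow, hω]; simp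
  have hρ : cρ φ ω ≠ 0 := by
    intro h
    have := cρ_mul hφ hω
    rw [h, zero_mul] at this
    exact pow_ne_zero 2 h2 (by rw [show (2 : k) ^ 2 = 4 by norm_num]; exact this.symm)
  have cE' : cE (C φ) (C ω) = C (cE φ ω) := by
    simp only [cE, map_add, map_sub, map_mul, map_neg, map_one, map_ofNat]
  have cQ' : cQ (C φ) (C ω) = C (cQ φ ω) := by
    simp only [cQ, map_add, map_sub, map_mul, map_neg, map_one, map_ofNat]
  have cR' : cR (C φ) (C ω) = C (cR φ ω) := by
    simp only [cR, map_add, map_sub, map_mul, map_neg, map_one, map_ofNat]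
  have cb' : cb (C φ) (C ω) = C (cb φ ω) := by
    simp only [cb, map_add, map_sub, map_mul, map_neg, map_one, map_ofNat]
  have ct' : ctq (C φ) (C ω) = C (ctq φ ω) := by
    simp only [ctq, map_add, map_sub, map_mul, map_neg, map_one, map_ofNat]
  have cu' : cuq (C φ) (C ω) = C (cuq φ ω) := by
    simp only [cuq, map_add, map_sub, map_mul, map_neg, map_one, map_ofNat]
  have cρ' : cρ (C φ) (C ω) = C (cρ φ ω) := by
    simp only [cρ, map_add, map_sub, map_mul, map_neg, map_one, map_ofNat]
  have cA' : cA (C φ) = C (cA φ) := by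
    simp only [cA, map_add, map_sub, map_mul, map_neg, map_one, map_ofNat]
  have cB' : cB (C φ) = C (cB φ) := by
    simp only [cB, map_add, map_sub, map_mul, map_neg, map_one, map_ofNat]
  have i1 := id_e0 X hφ' hω'
  have i2 := id_e X hφ' hω'
  have i3 := id_em X hφ' hω'
  have i4 := id_fac X hφ' hω'
  have i5 := id_fac (pNum X (C φ) (C ω)) hφ' hω'
  have hnum : pNum X (C φ) (C ω) = X * ((X - C (cE φ ω)) * (X - C (cQ φ ω)) ^ 2) + C (cb φ ω) * (X - C (cQ φ ω)) ^ 2 +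
      C (ctq φ ω) * ((X - C (cE φ ω)) * (X - C (cQ φ ω))) + C (cuq φ ω) * (X - C (cE φ ω)) := by
    rw [pNum, pDen, cE', cQ', cb', ct', cu']
  have hden : pDen X (C φ) (C ω) = (X - C (cE φ ω)) * (X - C (cQ φ ω)) ^ 2 := by
    rw [pDen, cE', cQ']
  set N := pNum X (C φ) (C ω) with hN
  set D := pDen X (C φ) (C ω) with hD
  have ider : derivative N * D - N * derivative D =
      pQ0 X (C φ) (C ω) * pQ1 X (C φ) (C ω) * (X - cR (C φ) (C ω)) * (X - cQ (C φ) (C ω)) := by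
    have c2 : (C (2 : k)) = 2 := rfl
    apply id_der X hφ' hω'
    · rw [hden, cE', cQ']; simp [derivative_mul, derivative_pow, c2]; 
    · rw [hnum, hden, cE', cQ', cb', ct', cu']; simp [derivative_mul, derivative_pow, c2]; rw [← hD, hden]
  have hXe : (X - C (cE φ ω)) ≠ 0 := X_sub_C_ne_zero _
  have hXq : (X - C (cQ φ ω)) ≠ 0 := X_sub_C_ne_zero _
  have hD0 : D ≠ 0 := by rw [hden]; exact mul_ne_zero hXe (pow_ne_zero 2 hXq)
  have hg3 : N ^ 3 + C (cA φ) * N * (C (cρ φ ω) ^ 2 * D) ^ 2 + C (cB φ) * (C (cρ φ ω) ^ 2 * D) ^ 3 =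
      (X - cE0 (C φ)) * (X - cEm (C φ) (C ω)) * (pQ0 X (C φ) (C ω) * pQ1 X (C φ) (C ω) * (X - cR (C φ) (C ω))) ^ 2 := by
    have : N ^ 3 + C (cA φ) * N * (C (cρ φ ω) ^ 2 * D) ^ 2 + C (cB φ) * (C (cρ φ ω) ^ 2 * D) ^ 3 =
      (N - cE0 (C φ) * (C (cρ φ ω) ^ 2 * D)) * (N - cE (C φ) (C ω) * (C (cρ φ ω) ^ 2 * D)) *
        (N - cEm (C φ) (C ω) * (C (cρ φ ω) ^ 2 * D)) := by
      have j0 := id_fac (0 : k[X]) hφ' hω'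
      have j1 := id_fac (1 : k[X]) hφ' hω'
      have j2 := id_fac (-1 : k[X]) hφ' hω'
      rw [← cA', ← cB']
      simp only [cA, cB, cE0, cE, cEm]
      linear_combination ((4) * (N * (C (cρ φ ω) ^ 2 * D) ^ 2) * (C ω) ^ 2 + (4) * (N * (C (cρ φ ω) ^ 2 * D) ^ 2) * (C ω) + (13) * (N * (C (cρ φ ω) ^ 2 * D) ^ 2) + (-16) * (C φ) * (C ω) ^ 2 * (C (cρ φ ω) ^ 2 * D) ^ 3 + (-16) * (C φ) * (C ω) * (C (cρ φ ω) ^ 2 * D) ^ 3 + (12) * (C φ) * (C (cρ φ ω) ^ 2 * D) ^ 3 + (-12) * (C ω) ^ 2 * (C (cρ φ ω) ^ 2 * D) ^ 3 + (-12) * (C ω) * (C (cρ φ ω) ^ 2 * D) ^ 3 + (-47) * (C (cρ φ ω) ^ 2 * D) ^ 3) * hφ' + ((8) * (N * (C (cρ φ ω) ^ 2 * D) ^ 2) * (C φ) + (5) * (N * (C (cρ φ ω) ^ 2 * D) ^ 2) + (-12) * (C φ) * (C (cρ φ ω) ^ 2 * D) ^ 3 + (-7) * (C (cρ φ ω) ^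 2 * D) ^ 3) * hω'
    rw [this, ← cρ', i1, i2, i3]; ring
  set S := pQ0 X (C φ) (C ω) * pQ1 X (C φ) (C ω) * (X - cR (C φ) (C ω)) with hS
  have hgP : gP φ = (X - cE0 (C φ)) * (X - cE (C φ) (C ω)) * (X - cEm (C φ) (C ω)) := by
    rw [gP, ← i4, cA', cB']
  have hXe' := iota_ne hXe
  have hXq' := iota_ne hXq
  have hρ' := iota_ne (C_ne_zero.2 hρ)
  have hD' := iota_ne hD0
  set x : RatFunc k := ι N / (ι (C (cρ φ ω) ^ 2 * D)) with hx
  set y : RatFunc k := ι S / (ι (C (cρ φ ω)) ^ 3 * ι (X - C (cE φ ω)) ^ 2 * ι (X - C (cQ φ ω)) ^ 3) with hy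
  have heq : ι (gP φ) * y ^ 2 = x ^ 3 + ι (C (cA φ)) * x + ι (C (cB φ)) := by
    have h3' := congrArg ι hg3
    have hgP' := congrArg ι hgP
    rw [cE'] at hgP'
    rw [hgP', hx, hy]
    have hden' := congrArg ι hden
    simp only [map_add, map_mul, map_pow] at h3' hden' ⊢
    rw [hden'] at h3' hD' ⊢
    field_simp
    linear_combination - h3'
  have hder : dRat x = ι (C (cρ φ ω)) * y := by
    have hne : C (cρ φ ω) ^ 2 * D ≠ 0 := mul_ne_zero (pow_ne_zero 2 (C_ne_zero.2 hρ)) hD0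
    have e1 : derivative N * (C (cρ φ ω) ^ 2 * D) - N * derivative (C (cρ φ ω) ^ 2 * D) =
        C (cρ φ ω) ^ 2 * (S * (X - C (cQ φ ω))) := by
      rw [← C_pow, derivative_C_mul, ← cQ', ← ider]; ring
    rw [dRat_apply, hx, dRatFun_div _ _ hne, e1, hy]
    have hden' := congrArg ι hden
    simp only [map_add, map_mul, map_pow] at hden' ⊢
    rw [hden']
    field_simp
  obtain ⟨P, hP⟩ := exists_isPt (iota_ne gP_ne) (two_ne_ratfunc h2) (disc_ne_ratfunc hΔ) heq
  refine ⟨P, ?_, ?_⟩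
  · have hcop : IsCoprime N (C (cρ φ ω) ^ 2 * D) := by
      have h12 : (12 : k) ≠ 0 := by
        rw [show (12 : k) = 2 ^ 2 * 3 by norm_num]; exact mul_ne_zero (pow_ne_zero _ h2) h3
      have hb0 : cb φ ω ≠ 0 := by
        intro h
        have := cb_mul hφ hω
        rw [h, zero_mul] at this
        exact mul_ne_zero (pow_ne_zero 4 h2) h3 (by rw [show (2 : k) ^ 4 * 3 = 48 by norm_num]; exact this.symm)
      have hu0 : cuq φ ω ≠ 0 := by
        intro h
        have := cuq_mul hφ hω
        rw [h, zero_mul] at this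
        exact mul_ne_zero (pow_ne_zero 6 h2) (pow_ne_zero 2 h3) (by rw [show (2 : k) ^ 6 * 3 ^ 2 = 576 by norm_num]; exact this.symm)
      have heq0 : cE φ ω - cQ φ ω ≠ 0 := by
        intro h
        have := ceq_mul hφ hω
        rw [h, zero_mul] at this
        exact h12 this.symm
      rw [hden]
      refine IsCoprime.mul_right ?_ (IsCoprime.mul_right ?_ (IsCoprime.pow_right ?_))
      · exact ⟨0, C (cρ φ ω)⁻¹ ^ 2, by rw [zero_mul, zero_add, ← mul_pow, ← C_mul, inv_mul_cancel₀ hρ, C_1, one_pow]⟩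
      · apply isCoprime_X_sub_C_of_eval
        rw [hnum]
        simp [hb0, heq0]
      · apply isCoprime_X_sub_C_of_eval
        rw [hnum]
        have : cQ φ ω - cE φ ω ≠ 0 := by rw [← neg_sub]; exact neg_ne_zero.2 heq0
        simp [hu0, this]
    have hrep : RepX (gP φ) (cA φ) (cB φ) P N (C (cρ φ ω) ^ 2 * D) :=
      ⟨hcop, Or.inr ⟨mul_ne_zero (pow_ne_zero 2 (C_ne_zero.2 hρ)) hD0, y, hP⟩⟩
    rw [hrep.ht gP_ne]
    have d1 : N.natDegree = 4 := by
      rw [hnum]; exact quartic_deg _ _ _ _ _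
    have d2 : (C (cρ φ ω) ^ 2 * D).natDegree ≤ 4 := by
      rw [hden]
      compute_degree
      norm_num
    rw [d1]; exact max_eq_left d2
  · right
    refine ⟨x, y, hP, hder, ?_⟩
    have hy0 : y ≠ 0 := by
      have hS0 : S ≠ 0 := by
        intro h
        have m1 : (X - cR (C φ) (C ω)) ≠ 0 := by rw [cR']; exact X_sub_C_ne_zero _
        have m2 : pQ0 X (C φ) (C ω) ≠ 0 := by
          apply Monic.ne_zero
          have : pQ0 X (C φ) (C ω) = X ^ 2 + C (-4 * φ * ω + 8 * φ + 8 * ω - 10) * X + C (12 * φ * ω - 24 * φ - 40 * ω + 21) := by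
            simp only [pQ0, map_add, map_sub, map_mul, map_neg, map_one, map_ofNat]; ring
          rw [this]; monicity!
        have m3 : pQ1 X (C φ) (C ω) ≠ 0 := by
          apply Monic.ne_zero
          have : pQ1 X (C φ) (C ω) = X ^ 2 + C (4 * φ * ω - 2) * X + C (4 * φ * ω + 8 * φ + 8 * ω - 3) := by
            simp only [pQ1, map_add, map_sub, map_mul, map_neg, map_one, map_ofNat]; ring
          rw [this]; monicity!
        exact mul_ne_zero (mul_ne_zero m2 m3) m1 h
      exact div_ne_zero (iota_ne hS0) (mul_ne_zero (mul_ne_zero (pow_ne_zero _ hρ') (pow_ne_zero _ hXe')) (pow_ne_zero _ hXq'))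
    linear_combination der_lemma dRat heq (dRat_const _) (dRat_const _) hder hy0

end Concrete


section Exact
variable {K : Type*} [Field K] (δ : ZDer K)

/-- exact elements -/
def Ex (z : K) : Prop := ∃ w, δ w = z

variable {δ}

theorem Ex.add {a b : K} (h : Ex δ a) (h' : Ex δ b) : Ex δ (a + b) := by
  obtain ⟨u, rfl⟩ := h
  obtain ⟨v, rfl⟩ := h'
  exact ⟨u + v, map_add _ _ _⟩

theorem Ex.neg {a : K} (h : Ex δ a) : Ex δ (-a) := by
  obtain ⟨u, rfl⟩ := h
  exact ⟨-u, map_neg _ _⟩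

theorem Ex.sub {a b : K} (h : Ex δ a) (h' : Ex δ b) : Ex δ (a - b) := by
  rw [sub_eq_add_neg]; exact h.add h'.neg

theorem Ex.zero : Ex δ 0 := ⟨0, map_zero _⟩

theorem Ex.const_mul {a c : K} (hc : δ c = 0) (h : Ex δ a) : Ex δ (c * a) := by
  obtain ⟨u, rfl⟩ := h
  exact ⟨c * u, by simp [Derivation.leibniz, hc]⟩

theorem Ex.sum {I : Type*} (s : Finset I) (F : I → K) (h : ∀ i ∈ s, Ex δ (F i)) : Ex δ (∑ i ∈ s, F i) := by
  classical
  induction s using Finset.induction_on with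
  | empty => simpa using Ex.zero
  | insert a s ha ih =>
    rw [Finset.sum_insert ha]
    exact (h _ (Finset.mem_insert_self _ _)).add (ih fun i hi => h i (Finset.mem_insert_of_mem hi))

theorem Ex.pow {x : K} {n : ℕ} (hn : ((n + 1 : ℕ) : K) ≠ 0) (hn' : δ ((n + 1 : ℕ) : K)⁻¹ = 0) : Ex δ (x ^ n * δ x) := by
  refine ⟨((n + 1 : ℕ) : K)⁻¹ * x ^ (n + 1), ?_⟩
  rw [Derivation.leibniz, hn', Derivation.leibniz_pow]
  simp only [smul_eq_mul, nsmul_eq_mul, Nat.add_sub_cancel, mul_zero, add_zero]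
  field_simp

theorem der_natCast_inv (n : ℕ) : δ ((n : K)⁻¹) = 0 := by
  rw [Derivation.leibniz_inv]; simp

variable (p : ℕ) [hp : Fact p.Prime] [CharP K p]

theorem der_pow_p (x : K) : δ (x ^ p) = 0 := by
  rw [Derivation.leibniz_pow]; simp

theorem cast_ne {n : ℕ} (h : n < 2 * p - 1) (h' : n ≠ p - 1) : ((n + 1 : ℕ) : K) ≠ 0 := by
  rw [Ne, CharP.cast_eq_zero_iff K p]
  rintro ⟨c, hc⟩
  have hp0 := hp.out.pos
  have : c < 2 := by
    by_contra hh
    have : p * 2 ≤ p * c := Nat.mul_le_mul_left _ (not_lt.1 hh)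
    omega
  interval_cases c <;> omega

variable (δ) in
/-- Katz relation -/
def Katz (t x : K) : Prop := Ex δ (x ^ (p - 1) * δ x - (δ x) ^ p * t ^ (p - 1))

variable {p}

theorem pow_p_sub (x : K) : x ^ (p - 1) * x = x ^ p := by
  rw [← pow_succ, Nat.sub_add_cancel hp.out.one_le]

theorem Katz.mul {t x y : K} (h : Katz δ p t x) (h' : Katz δ p t y) : Katz δ p t (x * y) := by
  have a := (h.const_mul (der_pow_p p y)).add (h'.const_mul (der_pow_p p x))
  unfold Katz
  convert a using 1
  rw [Derivation.leibniz, smul_eq_mul, smul_eq_mul, add_pow_char, mul_pow, mul_pow, mul_pow, ← pow_p_sub (p := p) x,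
    ← pow_p_sub (p := p) y]
  ring

theorem Katz.inv (h2 : p ≠ 2) {t x : K} (h : Katz δ p t x) : Katz δ p t x⁻¹ := by
  by_cases hx : x = 0
  · subst hx; simpa using h
  have hodd : Odd p := hp.out.odd_of_ne_two h2
  have a := (h.const_mul (der_pow_p p (x⁻¹ ^ 2))).neg
  unfold Katz
  convert a using 1
  rw [Derivation.leibniz_inv, smul_eq_mul, mul_pow, neg_pow, hodd.neg_one_pow]
  have e := pow_p_sub (p := p) x
  have hx2 := pow_ne_zero (p-1) hx
  rw [inv_pow, inv_pow, inv_pow, ← pow_mul, mul_comm 2 p, pow_mul, ← e]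
  field_simp
  ring

theorem Katz.const {t x : K} (h : δ x = 0) : Katz δ p t x := by
  unfold Katz
  rw [h, zero_pow hp.out.ne_zero]; simpa using Ex.zero

theorem Katz.lin {t r : K} (ht : δ t = 1) (hr : δ r = 0) : Katz δ p t (t - r) := by
  unfold Katz
  rw [map_sub, ht, hr, sub_zero, mul_one, one_pow, one_mul, sub_eq_add_neg t r, add_pow]
  have h1 := hp.out.one_le
  rw [Finset.sum_range_succ]
  rw [Nat.sub_self, pow_zero, Nat.choose_self, Nat.cast_one, mul_one, mul_one, add_sub_cancel_right]
  apply Ex.sum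
  intro n hn
  rw [Finset.mem_range] at hn
  have a : Ex δ (t ^ n * δ t) := Ex.pow (cast_ne p (by omega) (by omega)) (der_natCast_inv _)
  rw [ht, mul_one] at a
  rw [mul_assoc, mul_comm]
  apply a.const_mul
  simp [Derivation.leibniz, Derivation.leibniz_pow, hr]

end Exact

section Cartier
open Polynomial
variable {k : Type*} [Field k] [IsAlgClosed k] [DecidableEq (RatFunc k)] {p : ℕ} [hp : Fact p.Prime] [CharP k p]
local notation "ι" => algebraMap k[X] (RatFunc k)

theorem charP_ratfunc : CharP (RatFunc k) p :=
  charP_of_injective_ringHom (f := (ι).comp (C : k →+* k[X])) (RingHom.injective _) p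

theorem katz_poly [CharP (RatFunc k) p] (n : ℕ) : ∀ a : k[X], a.natDegree = n → Katz (K := RatFunc k) dRat p (ι X) (ι a) := by
  induction n with
  | zero =>
    intro a ha
    rw [natDegree_eq_zero] at ha
    obtain ⟨c, rfl⟩ := ha
    exact Katz.const (dRat_const c)
  | succ n ih =>
    intro a ha
    have : a.degree ≠ 0 := by
      intro h
      have := natDegree_eq_zero_iff_degree_le_zero.2 h.le
      omega
    obtain ⟨r, hr⟩ := IsAlgClosed.exists_root a this
    obtain ⟨q, rfl⟩ := dvd_iff_isRoot.2 hr
    rw [map_mul]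
    have hq : q ≠ 0 := by rintro rfl; simp at ha
    rw [natDegree_mul (X_sub_C_ne_zero r) hq, natDegree_X_sub_C] at ha
    apply Katz.mul _ (ih q (by omega))
    rw [map_sub]
    apply Katz.lin
    · rw [dRat_iota]; simp
    · exact dRat_const r

theorem katz_all [CharP (RatFunc k) p] (h2 : p ≠ 2) (x : RatFunc k) : Katz (K := RatFunc k) dRat p (ι X) x := by
  obtain ⟨a, b, hb, rfl⟩ := exists_div x
  rw [div_eq_mul_inv]
  exact (katz_poly _ a rfl).mul ((katz_poly _ b rfl).inv h2)

theorem coeff_der_zero {u : k[X]} {n : ℕ} (h : p ∣ n + 1) : (derivative u).coeff n = 0 := by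
  rw [coeff_derivative]
  have : ((n + 1 : ℕ) : k) = 0 := (CharP.cast_eq_zero_iff k p _).2 h
  rw [show (n : k) + 1 = ((n + 1 : ℕ) : k) by push_cast; rfl, this, mul_zero]

theorem not_ex [CharP (RatFunc k) p] : ¬ Ex (K := RatFunc k) dRat (ι X ^ (p - 1)) := by
  rintro ⟨w, hw⟩
  obtain ⟨a, b, hb, rfl⟩ := exists_div w
  have hb' := iota_ne hb
  have h1 := hp.out.one_le
  have e : derivative (a * b ^ (p - 1)) = b ^ p * X ^ (p - 1) := by
    apply iota_inj
    rw [← dRat_iota, map_mul ι, map_mul ι, map_pow ι, map_pow ι, map_pow ι, ← hw]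
    have : ι a * ι b ^ (p - 1) = ι b ^ p * (ι a / ι b) := by
      rw [← pow_p_sub (p := p) (ι b)]; field_simp
    rw [this]
    have g : ∀ {K : Type _} [Field K] [CharP K p] (δ : ZDer K) (x y : K), δ (x ^ p * y) = x ^ p * δ y := by
      intro K _ _ δ x y
      rw [Derivation.leibniz, der_pow_p]; simp
    exact g _ _ _
  have hlead := congrArg (fun q : k[X] => q.coeff (b.natDegree * p + (p - 1))) e
  rw [coeff_der_zero (p := p) ⟨b.natDegree + 1, by rw [mul_add]; have := mul_comm p b.natDegree; omega⟩,
    coeff_mul_X_pow, mul_comm, coeff_pow_mul_natDegree] at hlead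
  exact pow_ne_zero p (leadingCoeff_ne_zero.2 hb) hlead.symm

theorem ex_poly [CharP (RatFunc k) p] (G : k[X]) (hG : G.natDegree < 2 * p - 1) (x : RatFunc k) :
    Ex (K := RatFunc k) dRat ((G.map ((ι).comp C)).eval x * dRat x - ι (C (G.coeff (p - 1))) * (x ^ (p - 1) * dRat x)) := by
  have h1 := hp.out.two_le
  rw [eval_map, eval₂_eq_sum_range' _ hG, Finset.sum_mul]
  rw [← Finset.add_sum_erase _ _ (Finset.mem_range.2 (show p - 1 < 2 * p - 1 by omega))]
  rw [RingHom.comp_apply, mul_assoc, add_sub_cancel_left]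
  apply Ex.sum
  intro n hn
  rw [Finset.mem_erase, Finset.mem_range] at hn
  rw [mul_assoc]
  exact Ex.const_mul (dRat_const _) (Ex.pow (cast_ne p hn.2 hn.1) (der_natCast_inv _))

theorem cartier_gen {K : Type*} [Field K] (δ : ZDer K) [CharP K p] {t f x y c H g A: K} {m : ℕ} (hm : p - 1 = 2 * m)
    (hA : 3 * x ^ 2 + A ≠ 0 ∨ y ≠ 0)
    (heq : f * y ^ 2 = g) (hx : δ x = c * y) (hy : 2 * f * δ y = (3 * x ^ 2 + A) * c - δ f * y)
    (hc : δ c = 0) (hc0 : c ≠ 0) (hH : δ H = 0) (ht : δ t = 1)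
    (e1 : Ex δ (f ^ m * δ t - H * (t ^ (p - 1) * δ t))) (e2 : Ex δ (g ^ m * δ x - H * (x ^ (p - 1) * δ x)))
    (e3 : Katz δ p t x) (hne : ¬ Ex δ (t ^ (p - 1))) : c ^ p * H = c * H := by
  have hy0 : y ≠ 0 := by
    rintro rfl
    simp only [map_zero, mul_zero, sub_zero] at hy
    rcases hA with hA | hA
    · exact mul_ne_zero hA hc0 hy.symm
    · exact hA rfl
  by_contra hcon
  rw [ht, mul_one, mul_one] at e1
  have a1 : Ex δ ((c * y ^ p) * (f ^ m - H * t ^ (p - 1))) := by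
    apply e1.const_mul
    rw [Derivation.leibniz, der_pow_p, hc]; simp
  have a3 := Ex.const_mul hH e3
  have a := (a1.sub e2).sub a3
  have key : (c * y ^ p) * (f ^ m - H * t ^ (p - 1)) - (g ^ m * δ x - H * (x ^ (p - 1) * δ x))
      - H * (x ^ (p - 1) * δ x - (δ x) ^ p * t ^ (p - 1)) = ((c ^ p * H - c * H) * y ^ p) * t ^ (p - 1) := by
    have : g ^ m * δ x = c * y ^ p * f ^ m := by
      rw [← heq, hx, mul_pow, ← pow_mul, ← hm, ← pow_p_sub (p := p) y]; ring
    rw [this, hx, mul_pow]; ring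
  rw [key] at a
  apply hne
  have hz : (c ^ p * H - c * H) * y ^ p ≠ 0 := mul_ne_zero (sub_ne_zero.2 hcon) (pow_ne_zero _ hy0)
  have hz' : δ ((c ^ p * H - c * H) * y ^ p)⁻¹ = 0 := by
    rw [Derivation.leibniz_inv, Derivation.leibniz, der_pow_p, map_sub, Derivation.leibniz, Derivation.leibniz, hc, hH, der_pow_p]
    simp
  have := a.const_mul hz'
  rwa [inv_mul_cancel_left₀ hz] at this

theorem cartier (h2 : p ≠ 2) {A B c : k} {f : k[X]} (hf : f = X ^ 3 + C A * X + C B)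
    (hΔ : 4 * A ^ 3 + 27 * B ^ 2 ≠ 0) (hc : c ≠ 0)
    {P : MW f A B} (h : MWD f A B P c) :
    c ^ p * (f ^ ((p - 1) / 2)).coeff (p - 1) = c * (f ^ ((p - 1) / 2)).coeff (p - 1) := by
  have : CharP (RatFunc k) p := charP_ratfunc
  have hodd : Odd p := hp.out.odd_of_ne_two h2
  have hp2 := hp.out.two_le
  have hm : p - 1 = 2 * ((p - 1) / 2) := by obtain ⟨r, hr⟩ := hodd; omega
  have hfd : f.natDegree = 3 := by rw [hf]; compute_degree!
  have hf0 : f ≠ 0 := by rintro rfl; simp at hfd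
  have hdeg : (f ^ ((p - 1) / 2)).natDegree < 2 * p - 1 := by rw [natDegree_pow, hfd]; omega
  rcases h with ⟨_, h0⟩ | ⟨x, y, hP, hx, hy⟩
  · exfalso
    have := iota_ne (C_ne_zero.2 hc)
    exact this h0
  have heq := hP.eqn (iota_ne hf0)
  apply C_injective
  apply iota_inj
  have e1 := ex_poly (p := p) (f ^ ((p - 1) / 2)) hdeg (ι X)
  have e2 := ex_poly (p := p) (f ^ ((p - 1) / 2)) hdeg x
  rw [Polynomial.map_pow, eval_pow] at e1 e2
  have k1 : (f.map ((ι).comp C)).eval (ι X) = ι f := by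
    rw [hf]; simp
  have k2 : (f.map ((ι).comp C)).eval x = x ^ 3 + ι (C A) * x + ι (C B) := by
    rw [hf]; simp
  rw [k1] at e1
  rw [k2] at e2
  have := cartier_gen (p := p) (A := ι (C A)) dRat hm ?_ heq hx hy (dRat_const c) (iota_ne (C_ne_zero.2 hc)) (dRat_const _)
    (by rw [dRat_iota]; simp) e1 e2 (katz_all h2 x) not_ex
  · simp only [map_mul, map_pow] at this ⊢
    exact this
  · by_cases h0 : y = 0
    · left
      apply g'_ne (disc_ne_ratfunc hΔ) (X := x)
      rw [← heq, h0]; ring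
    · exact Or.inr h0

end Cartier


section SmulHelp
variable {M : Type*} [AddCommGroup M]
theorem smul_help₁ (I R : M) (m n : ℤ) : m • I + n • R + I = (m + 1) • I + n • R := by
  rw [add_smul _ 1, one_smul]; abel
theorem smul_help₂ (I R : M) (m n : ℤ) : m • I + n • R - I = (m - 1) • I + n • R := by
  rw [sub_smul _ 1, one_smul]; abel
end SmulHelp

section Alpha
open Polynomial
variable {k : Type*} [Field k] [IsAlgClosed k] [DecidableEq (RatFunc k)] {p : ℕ} [hp : Fact p.Prime] [CharP k p]
local notation "ι" => algebraMap k[X] (RatFunc k)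

theorem small_ne (hp11 : 11 ≤ p) {n : ℕ} (h0 : n ≠ 0) (h : n < 11) : (n : k) ≠ 0 := by
  rw [Ne, CharP.cast_eq_zero_iff k p]
  intro hd
  exact absurd (Nat.le_of_dvd (Nat.pos_of_ne_zero h0) hd) (by omega)

theorem exists_alpha (hp11 : 11 ≤ p) {φ ω : k} (hφ : φ ^ 2 = φ + 1) (hω : ω ^ 2 = - ω - 1) {x y : ℤ}
    (hxy : (p : ℤ) = x ^ 2 + 15 * y ^ 2) :
    ∃ I α : MW (gP φ) (cA φ) (cB φ), MWPt _ _ _ I (ι X) 1 ∧ MWD _ _ _ α 0 ∧ ht α = p ∧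
      (ht (α + I) : ℤ) = p + 1 + 2 * x ∧ (ht (α - I) : ℤ) = p + 1 - 2 * x := by
  have h2 : (2 : k) ≠ 0 := by simpa using small_ne (k := k) hp11 (n := 2) (by norm_num) (by norm_num)
  have h3 : (3 : k) ≠ 0 := by simpa using small_ne (k := k) hp11 (n := 3) (by norm_num) (by norm_num)
  have hΔ := gP_disc h2 h3 hφ hω
  obtain ⟨I, hI, hI1, hId⟩ := exists_I (φ := φ) h2 hΔ
  obtain ⟨R, hR4, hRd⟩ := exists_rho h2 h3 hφ hω
  have hf : gP φ ≠ 0 := gP_ne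
  have comb := quad_comb (fun P : MW (gP φ) (cA φ) (cB φ) => (ht P : ℤ)) (by
    intro P Q
    have := ht_para hf h2 hΔ P Q
    exact_mod_cast this) I R
  simp only [hI1, hR4] at comb
  push_cast at comb
  set b : ℤ := (ht (I + R) : ℤ) - 1 - 4 with hb
  have hb1 : -5 ≤ b := by omega
  have hb2 : b ≤ 5 := by
    have := comb 1 (-1)
    rw [one_smul, neg_smul, one_smul] at this
    have h0 : (0 : ℤ) ≤ (ht (I + -R) : ℤ) := Int.natCast_nonneg _
    linarith
  have hsq := cρ_sq hφ hω
  set ρ := cρ φ ω with hρ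
  have hpk : (p : k) = 0 := CharP.cast_eq_zero k p
  have hxy' : (x : k) ^ 2 + 15 * (y : k) ^ 2 = 0 := by
    have := congrArg (fun z : ℤ => (z : k)) hxy
    push_cast at this
    rw [← this, hpk]
  have hpl : (11 : ℤ) ≤ p := by exact_mod_cast hp11
  have hpp : Prime (p : ℤ) := Nat.prime_iff_prime_int.1 hp.out
  have hy0 : ¬ (p : ℤ) ∣ y := by
    rintro ⟨c, rfl⟩
    by_cases hc : c = 0
    · subst hc
      simp only [mul_zero] at hxy
      have : (p : ℤ) = x * x := by rw [hxy]; ring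
      have := (hpp.irreducible.isUnit_or_isUnit this)
      rcases this with h | h <;> exact hpp.not_isUnit (by rw [‹(p : ℤ) = x * x›]; exact h.mul h)
    · have : 1 ≤ c ^ 2 := by have := sq_pos_of_ne_zero hc; omega
      nlinarith [sq_nonneg x, sq_nonneg (p : ℤ)]
  have hyk : (y : k) ≠ 0 := by
    rw [Ne, CharP.intCast_eq_zero_iff k p]; exact hy0
  obtain ⟨y', hy', hrel⟩ : ∃ y' : ℤ, y' ^ 2 = y ^ 2 ∧ (x - y' : k) + 2 * y' * ρ = 0 := by
    have : ((x : k) + y * (2 * ρ - 1)) * (x - y * (2 * ρ - 1)) = 0 := by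
      linear_combination hxy' - 4 * (y : k) ^ 2 * hsq
    rcases mul_eq_zero.1 this with h | h
    · exact ⟨y, rfl, by linear_combination h⟩
    · exact ⟨-y, by ring, by push_cast; linear_combination h⟩
  have hyk' : (y' : k) ≠ 0 := by
    intro h
    apply pow_ne_zero 2 hyk
    have := congrArg (fun z : ℤ => (z : k)) hy'
    push_cast at this
    rw [← this, h]; ring
  have hρ0 : ρ ≠ 0 := by
    intro h
    have := cρ_mul hφ hω
    rw [← hρ, h, zero_mul] at this
    exact pow_ne_zero 2 h2 (by rw [show (2 : k) ^ 2 = 4 by norm_num]; exact this.symm)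
  have hD := MWD.comb hf h2 hΔ hId hRd (x - y') (2 * y')
  have h0 : ((x - y' : ℤ) : k) * 1 + ((2 * y' : ℤ) : k) * ρ = 0 := by push_cast; linear_combination hrel
  rw [h0] at hD
  have hdvd : (p : ℤ) ∣ (ht ((x - y') • I + (2 * y') • R) : ℤ) := by
    exact_mod_cast MWD.dvd_ht (p := p) hf hD
  have hbone : b = 1 := by
    rw [comb] at hdvd
    have e : (x - y') ^ 2 * 1 + (x - y') * (2 * y') * b + (2 * y') ^ 2 * 4 =
        p + (b - 1) * (2 * (x - y') * y') := by
      rw [hxy]; linear_combination (15 : ℤ) * hy'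
    rw [e] at hdvd
    have h1 := (Int.dvd_add_right (dvd_refl (p : ℤ))).1 hdvd
    have h4 : ¬ (p : ℤ) ∣ 2 * (x - y') * y' := by
      intro hh
      rw [← CharP.intCast_eq_zero_iff k p] at hh
      push_cast at hh
      have hx' : (x : k) - y' ≠ 0 := by
        intro hh
        rw [hh, zero_add] at hrel
        exact mul_ne_zero (mul_ne_zero h2 hyk') hρ0 hrel
      exact mul_ne_zero (mul_ne_zero h2 hx') hyk' hh
    have h5 := (hpp.dvd_or_dvd h1).resolve_right h4
    obtain ⟨c, hc⟩ := h5
    have : c = 0 := by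
      by_contra hne
      rcases lt_or_gt_of_ne hne with h | h
      · nlinarith
      · nlinarith
    rw [this] at hc
    linarith
  rw [hbone] at comb
  refine ⟨I, (x - y') • I + (2 * y') • R, hI, hD, ?_, ?_, ?_⟩
  · have := comb (x - y') (2 * y')
    have h : (ht ((x - y') • I + (2 * y') • R) : ℤ) = p := by rw [this, hxy]; linear_combination (15 : ℤ) * hy'
    exact_mod_cast h
  · have e : (x - y') • I + (2 * y') • R + I = (x - y' + 1) • I + (2 * y') • R := by
      exact smul_help₁ I R _ _
    rw [e, comb, hxy]; linear_combination (15 : ℤ) * hy'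
  · have e : (x - y') • I + (2 * y') • R - I = (x - y' - 1) • I + (2 * y') • R := by
      exact smul_help₂ I R _ _
    rw [e, comb, hxy]; linear_combination (15 : ℤ) * hy'

end Alpha


section Rigid
open Polynomial
variable {k : Type*} [Field k] [IsAlgClosed k] [DecidableEq (RatFunc k)] {p : ℕ} [hp : Fact p.Prime] [CharP k p]
local notation "ι" => algebraMap k[X] (RatFunc k)

theorem exists_pth_root (g : k[X]) : ∃ h : k[X], h ^ p = expand k p g ∧ h.natDegree = g.natDegree := by
  refine ⟨g.map (frobeniusEquiv k p).symm.toRingHom, ?_, ?_⟩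
  · rw [← map_frobenius_expand, map_expand, Polynomial.map_map]
    have : (frobenius k p).comp (frobeniusEquiv k p).symm.toRingHom = RingHom.id k := by
      apply RingHom.ext
      intro c
      exact (frobeniusEquiv k p).apply_symm_apply c
    rw [this, Polynomial.map_id]
  · exact natDegree_map_eq_of_injective (RingHom.injective _) g

theorem rigid_poly (h2 : p ≠ 2) {f a b : k[X]} {A B : k} {x y : RatFunc k} (hsf : Squarefree f) (hf3 : f.natDegree = 3)
    (hfp : f ^ p = expand k p f) (hb : b ≠ 0) (hx : x = ι (expand k p a) / ι (expand k p b))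
    (heq : ι f * y ^ 2 = x ^ 3 + ι (C A) * x + ι (C B)) (hy : y ≠ 0)
    (da : a.natDegree ≤ 1) (db : b.natDegree ≤ 1) :
    ∃ c : k, c ≠ 0 ∧ b * (a ^ 3 + C A * a * b ^ 2 + C B * b ^ 3) = C c * f := by
  set g := b * (a ^ 3 + C A * a * b ^ 2 + C B * b ^ 3) with hg
  have hp0 := hp.out.pos
  have hf0 : f ≠ 0 := by rintro rfl; simp at hf3
  have hbe : expand k p b ≠ 0 := by rwa [Ne, expand_eq_zero hp0]
  have hbe' := iota_ne hbe
  obtain ⟨h, hh, hdeg⟩ := exists_pth_root (p := p) g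
  obtain ⟨u, v, hv, hy'⟩ := exists_div y
  have hu : u ≠ 0 := by rintro rfl; apply hy; rw [hy']; simp
  have hv' := iota_ne hv
  have key : f * u ^ 2 * (expand k p b) ^ 4 = h ^ p * v ^ 2 := by
    apply iota_inj
    rw [hh, hg]
    rw [hx, hy'] at heq
    simp only [map_mul, map_add, map_pow, expand_C] at heq ⊢
    field_simp at heq
    linear_combination ι (expand k p b) * heq
  obtain ⟨m, hm⟩ := hp.out.odd_of_ne_two h2
  have hh0 : h ≠ 0 := by
    rintro rfl
    rw [zero_pow hp.out.ne_zero, zero_mul] at key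
    exact mul_ne_zero (mul_ne_zero hf0 (pow_ne_zero 2 hu)) (pow_ne_zero 4 hbe) key
  have key2 : f * h * (u * expand k p b ^ 2) ^ 2 = (h ^ (m + 1) * v) ^ 2 := by
    have : h ^ p * h = (h ^ (m + 1)) ^ 2 := by rw [hm]; ring
    linear_combination h * key + v ^ 2 * this
  have hd : u * expand k p b ^ 2 ∣ h ^ (m + 1) * v := by
    rw [← IsIntegrallyClosed.pow_dvd_pow_iff (two_ne_zero), ← key2]
    exact dvd_mul_left _ _
  obtain ⟨r, hr⟩ := hd
  have key3 : f * h = r ^ 2 := by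
    have hne : (u * expand k p b ^ 2) ^ 2 ≠ 0 := pow_ne_zero 2 (mul_ne_zero hu (pow_ne_zero 2 hbe))
    apply mul_right_cancel₀ hne
    rw [key2, hr]; ring
  have hfr : f ∣ r := (hsf.dvd_pow_iff_dvd two_ne_zero).1 ⟨h, key3.symm⟩
  obtain ⟨s, rfl⟩ := hfr
  have key4 : h = f * s ^ 2 := by
    apply mul_left_cancel₀ hf0
    rw [key3]; ring
  have hs : s ≠ 0 := by rintro rfl; apply hh0; rw [key4]; ring
  have hgd : g.natDegree ≤ 4 := by
    rw [hg]
    have e1 : (b * (a ^ 3 + C A * a * b ^ 2 + C B * b ^ 3)) = b * a ^ 3 + C A * a * b ^ 3 + C B * b ^ 4 := by ring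
    rw [e1]
    compute_degree
    simp only [max_le_iff]
    omega
  rw [← hdeg, key4, natDegree_mul hf0 (pow_ne_zero 2 hs), natDegree_pow, hf3] at hgd
  have hs0 : s.natDegree = 0 := by omega
  obtain ⟨c, rfl⟩ := natDegree_eq_zero.1 hs0
  have hc : c ≠ 0 := by rintro rfl; simp at hs
  refine ⟨(c ^ 2) ^ p, pow_ne_zero _ (pow_ne_zero _ hc), ?_⟩
  apply expand_injective hp0
  rw [← hh, key4, mul_pow, hfp, map_mul, expand_C, ← C_pow, ← C_pow]; ring

theorem cubic_zero {a b c d : k} (h : C a * X ^ 3 + C b * X ^ 2 + C c * X + C d = 0) :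
    a = 0 ∧ b = 0 ∧ c = 0 ∧ d = 0 := by
  have z3 := congrArg (fun q : k[X] => q.coeff 3) h
  have z2 := congrArg (fun q : k[X] => q.coeff 2) h
  have z1 := congrArg (fun q : k[X] => q.coeff 1) h
  have z0 := congrArg (fun q : k[X] => q.coeff 0) h
  simp [coeff_X, coeff_C, coeff_X_pow] at z3 z2 z1 z0
  exact ⟨z3, z2, z1, z0⟩

theorem linear_rigid (h3 : (3 : k) ≠ 0) {A B u v b c : k} (hA : A ≠ 0) (hB : B ≠ 0) (hb : b ≠ 0) (hc : c ≠ 0)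
    (h : C b * ((C u * X + C v) ^ 3 + C A * (C u * X + C v) * (C b) ^ 2 + C B * (C b) ^ 3) =
      C c * (X ^ 3 + C A * X + C B)) : u = b ∧ v = 0 := by
  have e : C (b * u ^ 3 - c) * X ^ 3 + C (3 * b * u ^ 2 * v) * X ^ 2 +
      C (3 * b * u * v ^ 2 + A * b ^ 3 * u - c * A) * X + C (b * v ^ 3 + A * b ^ 3 * v + B * b ^ 4 - c * B) = 0 := by
    simp only [map_add, map_sub, map_mul, map_pow, map_ofNat]
    linear_combination h
  obtain ⟨z3, z2, z1, z0⟩ := cubic_zero e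
  have hu : u ≠ 0 := by
    rintro rfl
    apply hc
    linear_combination -z3
  have hv : v = 0 := by
    exact (mul_eq_zero.1 z2).resolve_left (mul_ne_zero (mul_ne_zero h3 hb) (pow_ne_zero 2 hu))
  subst hv
  refine ⟨?_, rfl⟩
  have z1' : b ^ 3 * u = c := by
    apply mul_left_cancel₀ hA; linear_combination z1
  have z0' : b ^ 4 = c := by
    apply mul_left_cancel₀ hB; linear_combination z0
  apply mul_left_cancel₀ (pow_ne_zero 3 hb)
  rw [z1', ← z0']; ring

end Rigid


section Rigid2
open Polynomial
variable {k : Type*} [Field k] [IsAlgClosed k] [DecidableEq (RatFunc k)] {p : ℕ} [hp : Fact p.Prime] [CharP k p]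
local notation "ι" => algebraMap k[X] (RatFunc k)

theorem cubic_sep {A B : k} (hΔ : 4 * A ^ 3 + 27 * B ^ 2 ≠ 0) : (X ^ 3 + C A * X + C B : k[X]).Separable := by
  have c2 : (C (2 : k)) = 2 := rfl
  have hd : derivative (X ^ 3 + C A * X + C B : k[X]) = 3 * X ^ 2 + C A := by simp [c2]; norm_num
  rw [Separable, hd]
  refine ⟨C (4 * A ^ 3 + 27 * B ^ 2)⁻¹ * (27 * C B - 27 * X ^ 3 - 27 * C A * X),
    C (4 * A ^ 3 + 27 * B ^ 2)⁻¹ * (4 * C A ^ 2 + 15 * C A * X ^ 2 + 9 * X ^ 4), ?_⟩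
  have h1 : C (4 * A ^ 3 + 27 * B ^ 2)⁻¹ * (4 * C A ^ 3 + 27 * C B ^ 2) = 1 := by
    have : C (4 * A ^ 3 + 27 * B ^ 2) = 4 * C A ^ 3 + 27 * C B ^ 2 := by
      simp only [map_add, map_mul, map_pow, map_ofNat]
    rw [← this, ← C_mul, inv_mul_cancel₀ hΔ, C_1]
  linear_combination h1

theorem cubic_frob {A B : k} (hA : A ^ p = A) (hB : B ^ p = B) :
    (X ^ 3 + C A * X + C B : k[X]) ^ p = expand k p (X ^ 3 + C A * X + C B) := by
  rw [← map_frobenius_expand, map_expand]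
  simp [frobenius_def, hA, hB]

theorem cubic_deg3 {A B : k} : (X ^ 3 + C A * X + C B : k[X]).natDegree = 3 := by compute_degree!

theorem y_ne {f a b : k[X]} {A B : k} {x y : RatFunc k} (hB : B ≠ 0) (hab : IsCoprime a b) (hb : b ≠ 0)
    (hdeg : a.natDegree ≠ 0 ∨ b.natDegree ≠ 0) (hx : x = ι (expand k p a) / ι (expand k p b))
    (heq : ι f * y ^ 2 = x ^ 3 + ι (C A) * x + ι (C B)) : y ≠ 0 := by
  rintro rfl
  have hp0 := hp.out.pos
  have hbe : expand k p b ≠ 0 := by rwa [Ne, expand_eq_zero hp0]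
  have hbe' := iota_ne hbe
  have h0 : a ^ 3 + C A * a * b ^ 2 + C B * b ^ 3 = 0 := by
    apply expand_injective hp0
    apply iota_inj
    rw [hx] at heq
    simp only [map_mul, map_add, map_pow, expand_C, map_zero] at heq ⊢
    field_simp at heq
    linear_combination -heq
  have h1 : b ∣ a ^ 3 := ⟨-(C A * a * b + C B * b ^ 2), by linear_combination h0⟩
  have h2 : a ∣ C B * b ^ 3 := ⟨-(a ^ 2 + C A * b ^ 2), by linear_combination h0⟩
  have h3 : IsUnit b := (hab.symm.pow_right (n := 3)).isUnit_of_dvd' (dvd_refl b) h1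
  have h4 : a ∣ C B := (hab.pow_right (n := 3)).dvd_of_dvd_mul_right h2
  have h5 : IsUnit a := isUnit_of_dvd_unit h4 (isUnit_C.2 (IsUnit.mk0 _ hB))
  rcases hdeg with h | h
  · exact h (natDegree_eq_zero_of_isUnit h5)
  · exact h (natDegree_eq_zero_of_isUnit h3)

theorem lin_case (h2 : p ≠ 2) (h3 : (3 : k) ≠ 0) {u v b A B : k} {x y : RatFunc k} (hA : A ≠ 0) (hB : B ≠ 0)
    (hΔ : 4 * A ^ 3 + 27 * B ^ 2 ≠ 0) (hAp : A ^ p = A) (hBp : B ^ p = B) (hb : b ≠ 0) (hu : u ≠ 0)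
    (hx : x = ι (expand k p (C u * X + C v)) / ι (expand k p (C b)))
    (heq : ι (X ^ 3 + C A * X + C B) * y ^ 2 = x ^ 3 + ι (C A) * x + ι (C B)) : x = ι X ^ p := by
  have hd : (C u * X + C v).natDegree = 1 := natDegree_linear hu
  have hcb : IsCoprime (C u * X + C v) (C b) :=
    ⟨0, C b⁻¹, by rw [zero_mul, zero_add, ← C_mul, inv_mul_cancel₀ hb, C_1]⟩
  have hy := y_ne (p := p) hB hcb (C_ne_zero.2 hb) (Or.inl (by rw [hd]; exact one_ne_zero)) hx heq
  obtain ⟨c, hc, e⟩ := rigid_poly h2 (cubic_sep hΔ).squarefree cubic_deg3 (cubic_frob hAp hBp) (C_ne_zero.2 hb) hx heq hy hd.le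
    (by rw [natDegree_C]; exact zero_le_one)
  obtain ⟨rfl, rfl⟩ := linear_rigid h3 hA hB hb hc e
  rw [hx]
  have := iota_ne (C_ne_zero.2 hb)
  simp only [C_0, add_zero, map_mul, expand_C, expand_X, map_pow]
  field_simp

theorem quartic_zero {a b c d e : k} (h : C a * X ^ 4 + C b * X ^ 3 + C c * X ^ 2 + C d * X + C e = 0) : a = 0 := by
  have z3 := congrArg (fun q : k[X] => q.coeff 4) h
  simpa [coeff_X, coeff_C, coeff_X_pow] using z3

theorem T_add_L {K : Type*} [Field K] {f x y e A B : K} (heq : f * y ^ 2 = x ^ 3 + A * x + B) (he : e ^ 3 + A * e + B = 0)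
    (hne : x - e ≠ 0) : f * (y / (x - e)) ^ 2 - x - e = e + (3 * e ^ 2 + A) / (x - e) := by
  field_simp
  linear_combination heq + he

theorem rigid (h2 : p ≠ 2) (h3 : (3 : k) ≠ 0) {f : k[X]} {A B : k} (hf : f = X ^ 3 + C A * X + C B)
    (hA : A ≠ 0) (hB : B ≠ 0) (hΔ : 4 * A ^ 3 + 27 * B ^ 2 ≠ 0) (hAp : A ^ p = A) (hBp : B ^ p = B)
    {P : MW f A B} (hD : MWD f A B P 0) (hP : ht P = p) :
    ∃ T : MW f A B, T + T = 0 ∧ ht T = 0 ∧ ∃ y, MWPt f A B (P + T) (ι X ^ p) y := by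
  have hp0 := hp.out.pos
  have hk2 : (2 : k) ≠ 0 := by
    have : ((2 : ℕ) : k) ≠ 0 := by
      rw [Ne, CharP.cast_eq_zero_iff k p]
      intro h
      exact h2 ((Nat.prime_dvd_prime_iff_eq hp.out Nat.prime_two).1 h)
    simpa using this
  have hf0 : f ≠ 0 := by
    intro h; have := cubic_deg3 (A := A) (B := B); rw [← hf, h] at this; simp at this
  obtain ⟨a, b, hab, hrep⟩ := MWD.expand_rep (p := p) hf0 hD
  have hht := hrep.ht hf0
  rw [hP, natDegree_expand, natDegree_expand] at hht
  have hda : a.natDegree ≤ 1 := by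
    by_contra hh
    have : 2 * p ≤ a.natDegree * p := Nat.mul_le_mul_right _ (by omega)
    have := le_max_left (a.natDegree * p) (b.natDegree * p)
    omega
  have hdb : b.natDegree ≤ 1 := by
    by_contra hh
    have : 2 * p ≤ b.natDegree * p := Nat.mul_le_mul_right _ (by omega)
    have := le_max_right (a.natDegree * p) (b.natDegree * p)
    omega
  have hd1 : a.natDegree ≠ 0 ∨ b.natDegree ≠ 0 := by
    by_contra! hh
    rw [hh.1, hh.2] at hht
    simp at hht
    omega
  obtain ⟨-, ⟨-, h0⟩ | ⟨hbe, y, hy⟩⟩ := hrep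
  · exfalso
    rw [h0, ht_zero hf0] at hP
    omega
  have hb : b ≠ 0 := by rintro rfl; simp at hbe
  have heq := hy.eqn (iota_ne hf0)
  set x := ι (expand k p a) / ι (expand k p b) with hx
  have hy0 := y_ne (p := p) hB hab hb hd1 hx heq
  have hcub : f ^ p = expand k p f := by rw [hf]; exact cubic_frob hAp hBp
  obtain ⟨c, hc, e⟩ := rigid_poly h2 (f := f) (by rw [hf]; exact (cubic_sep hΔ).squarefree) (by rw [hf]; exact cubic_deg3)
    hcub hb hx heq hy0 hda hdb
  obtain ⟨a1, a0, ha⟩ := exists_eq_X_add_C_of_natDegree_le_one hda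
  obtain ⟨b1, b0, hb'⟩ := exists_eq_X_add_C_of_natDegree_le_one hdb
  by_cases hb1 : b1 = 0
  · have hb'' : b = C b0 := by rw [hb', hb1]; simp
    have hb0 : b0 ≠ 0 := by rintro rfl; rw [hb''] at hb; simp at hb
    have ha1 : a1 ≠ 0 := by
      rintro rfl
      rcases hd1 with h | h
      · apply h; rw [ha]; simp
      · apply h; rw [hb'']; simp
    refine ⟨0, add_zero 0, ht_zero hf0, y, ?_⟩
    rw [add_zero]
    have : x = ι X ^ p := by
      apply lin_case h2 h3 hA hB hΔ hAp hBp hb0 ha1 (v := a0) (y := y)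
      · rw [hx, ha, hb'']
      · rw [← hf]; exact heq
    rw [← this]; exact hy
  · have hq : b1 * (a1 ^ 3 + A * a1 * b1 ^ 2 + B * b1 ^ 3) = 0 := by
      apply quartic_zero (b := b1 * (3 * a1 ^ 2 * a0 + A * (a0 * b1 ^ 2 + 2 * a1 * b1 * b0) + 3 * B * b1 ^ 2 * b0)
          + b0 * (a1 ^ 3 + A * a1 * b1 ^ 2 + B * b1 ^ 3) - c)
        (c := b1 * (3 * a1 * a0 ^ 2 + A * (a1 * b0 ^ 2 + 2 * a0 * b1 * b0) + 3 * B * b1 * b0 ^ 2)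
          + b0 * (3 * a1 ^ 2 * a0 + A * (a0 * b1 ^ 2 + 2 * a1 * b1 * b0) + 3 * B * b1 ^ 2 * b0))
        (d := b1 * (a0 ^ 3 + A * a0 * b0 ^ 2 + B * b0 ^ 3)
          + b0 * (3 * a1 * a0 ^ 2 + A * (a1 * b0 ^ 2 + 2 * a0 * b1 * b0) + 3 * B * b1 * b0 ^ 2) - c * A)
        (e := b0 * (a0 ^ 3 + A * a0 * b0 ^ 2 + B * b0 ^ 3) - c * B)
      rw [hf, ha, hb'] at e
      simp only [map_add, map_sub, map_mul, map_pow, map_ofNat]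
      linear_combination e
    have hq' := (mul_eq_zero.1 hq).resolve_left hb1
    set r := a1 / b1 with hr
    have hra : a1 = r * b1 := by rw [hr]; field_simp
    have hrr : r ^ 3 + A * r + B = 0 := by
      apply mul_left_cancel₀ (pow_ne_zero 3 hb1)
      rw [hra] at hq'
      linear_combination hq'
    set d := a0 - r * b0 with hd
    have had : a = C r * b + C d := by
      rw [ha, hb', hra, hd]
      simp only [map_add, map_sub, map_mul]; ring
    have hd0 : d ≠ 0 := by
      intro h
      rw [h, C_0, add_zero] at had
      have : IsUnit b := hab.isUnit_of_dvd' ⟨C r, by rw [had, mul_comm]⟩ (dvd_refl b)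
      have := natDegree_eq_zero_of_isUnit this
      rw [hb', natDegree_linear hb1] at this
      exact one_ne_zero this
    obtain ⟨T, hT⟩ := exists_isPt (f := ι f) (A := ι (C A)) (B := ι (C B)) (X := ι (C r)) (Y := 0)
      (iota_ne hf0) (two_ne_ratfunc hk2) (disc_ne_ratfunc hΔ) (by
        have := congrArg (fun z => ι (C z)) hrr
        simp only [map_add, map_mul, map_pow, map_zero] at this
        rw [this]; ring)
    have hTn : T = -T := by
      have := hT.neg
      rw [neg_zero] at this
      exact hT.ext this
    have hrepT : RepX f A B T (C r) 1 := ⟨isCoprime_one_right, Or.inr ⟨one_ne_zero, 0, by rw [map_one, div_one]; exact hT⟩⟩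
    have hxr : x - ι (C r) = ι (C d) / ι (expand k p b) := by
      rw [hx, had]
      have := iota_ne hbe
      simp only [map_add, map_mul, expand_C]
      field_simp
      ring
    have hdd := iota_ne (C_ne_zero.2 hd0)
    have hbb := iota_ne hbe
    have hne : x - ι (C r) ≠ 0 := by rw [hxr]; exact div_ne_zero hdd hbb
    have hsum := IsPt.add (iota_ne hf0) hy hT (sub_ne_zero.1 hne) (L := y / (x - ι (C r))) (by rw [sub_zero]; field_simp) rfl rfl
    refine ⟨T, ?_, ?_, -(y + y / (x - ι (C r)) * (ι f * (y / (x - ι (C r))) ^ 2 - x - ι (C r) - x)), ?_⟩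
    · nth_rewrite 2 [hTn]; exact add_neg_cancel T
    · rw [hrepT.ht hf0]; simp
    have hr' : ι (C r) ^ 3 + ι (C A) * ι (C r) + ι (C B) = 0 := by
      have := congrArg (fun z => ι (C z)) hrr
      simpa only [map_add, map_mul, map_pow, map_zero] using this
    have hX := T_add_L heq hr' hne
    have hsumeq := hsum.eqn (iota_ne hf0)
    have hfin : ι f * (y / (x - ι (C r))) ^ 2 - x - ι (C r) = ι X ^ p := by
      apply lin_case h2 h3 hA hB hΔ hAp hBp (b := 1) one_ne_zero (u := (3 * r ^ 2 + A) / d * b1) (v := r + (3 * r ^ 2 + A) / d * b0)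
      · classical exact mul_ne_zero (div_ne_zero (g'_ne hΔ hrr) hd0) hb1
      · rw [hX, hxr, C_1, map_one, map_one, div_one]
        have e2 : C ((3 * r ^ 2 + A) / d * b1) * X + C (r + (3 * r ^ 2 + A) / d * b0) = C r + C ((3 * r ^ 2 + A) / d) * b := by
          rw [hb']
          simp only [map_add, map_mul]; ring
        rw [e2]
        have e3 : ι (C ((3 * r ^ 2 + A) / d)) * ι (C d) = 3 * ι (C r) ^ 2 + ι (C A) := by
          rw [← map_mul, ← C_mul, div_mul_cancel₀ _ hd0]
          simp only [map_add, map_mul, map_pow, map_ofNat]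
        rw [← e3]
        simp only [map_add, map_mul, expand_C]
        field_simp
      · rw [← hf]; exact hsumeq
    rw [← hfin]; exact hsum

end Rigid2


section Count
open Polynomial
variable {k : Type*} [Field k] [IsAlgClosed k] [DecidableEq (RatFunc k)] {p : ℕ} [hp : Fact p.Prime] [CharP k p]
local notation "ι" => algebraMap k[X] (RatFunc k)

/-- product of linear factors over a set of residues -/
noncomputable def Zs (c : ZMod p →+* k) (s : Finset (ZMod p)) : k[X] := ∏ a ∈ s, (X - C (c a))

theorem Zs_dvd (c : ZMod p →+* k) (s : Finset (ZMod p)) {g : k[X]} (h : ∀ a ∈ s, g.eval (c a) = 0) : Zs c s ∣ g := by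
  apply Finset.prod_dvd_of_coprime
  · exact (pairwise_coprime_X_sub_C c.injective).set_pairwise _
  · intro a ha
    rw [dvd_iff_isRoot]; exact h a ha

theorem Zs_deg (c : ZMod p →+* k) (s : Finset (ZMod p)) : (Zs c s).natDegree = s.card :=
  natDegree_finsetProd_X_sub_C_eq_card _ _

theorem Zs_monic (c : ZMod p →+* k) (s : Finset (ZMod p)) : (Zs c s).Monic :=
  monic_prod_of_monic _ _ fun a _ => monic_X_sub_C _

theorem Zs_eval (c : ZMod p →+* k) (s : Finset (ZMod p)) {a : ZMod p} (h : a ∈ s) : (Zs c s).eval (c a) = 0 := by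
  rw [Zs, eval_prod]
  exact Finset.prod_eq_zero h (by simp)

theorem Zs_cop (c : ZMod p →+* k) (s : Finset (ZMod p)) {g : k[X]} (h : ∀ a ∈ s, g.eval (c a) ≠ 0) :
    IsCoprime g (Zs c s) :=
  IsCoprime.prod_right fun a ha => isCoprime_X_sub_C_of_eval (h a ha)

theorem Zs_univ (c : ZMod p →+* k) : Zs c Finset.univ = X ^ p - X := by
  have hp1 := hp.out.one_lt
  have hm : (X ^ p - X : k[X]).Monic := monic_X_pow_sub (by rw [degree_X]; exact_mod_cast hp1)
  refine (eq_of_monic_of_dvd_of_natDegree_le (Zs_monic _ _) hm (Zs_dvd _ _ ?_) ?_).symm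
  · intro a _
    simp only [eval_sub, eval_pow, eval_X]
    rw [← map_pow, ZMod.pow_card, sub_self]
  · rw [Zs_deg, Finset.card_univ, ZMod.card, FiniteField.X_pow_card_sub_X_natDegree_eq _ hp1]

/-- the cubic on the prime field -/
def gz (A B : ZMod p) (r : ZMod p) : ZMod p := r ^ 3 + A * r + B

theorem Zs_prod (c : ZMod p →+* k) (A B : ZMod p) {m : ℕ} (hm : p = 2 * m + 1) (hm0 : m ≠ 0) :
    ∃ s0 sm sp : Finset (ZMod p), (∀ a ∈ s0, gz A B a = 0) ∧ (∀ a ∈ sm, gz A B a ^ m = -1) ∧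
      (∀ a ∈ sp, gz A B a ^ m = 1) ∧ Zs c s0 * Zs c sm * Zs c sp = X ^ p - X ∧
      s0.card + sm.card + sp.card = p ∧ (∑ a, gz A B a ^ m) = (sp.card : ZMod p) - sm.card := by
  classical
  have h1 : (1 : ZMod p) ≠ -1 := by
    intro h
    have : ((2 : ℕ) : ZMod p) = 0 := by push_cast; linear_combination h
    rw [ZMod.natCast_eq_zero_iff] at this
    have := Nat.le_of_dvd two_pos this
    omega
  have hdis : ∀ a, gz A B a = 0 ∨ gz A B a ^ m = -1 ∨ gz A B a ^ m = 1 := by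
    intro a
    by_cases h0 : gz A B a = 0
    · exact Or.inl h0
    · right
      have := ZMod.pow_card_sub_one_eq_one h0
      rw [show p - 1 = m * 2 by omega, pow_mul] at this
      have h5 : (gz A B a ^ m - 1) * (gz A B a ^ m + 1) = 0 := by linear_combination this
      rcases mul_eq_zero.1 h5 with h | h
      · exact Or.inr (sub_eq_zero.1 h)
      · exact Or.inl (eq_neg_of_add_eq_zero_left h)
  set s0 := Finset.univ.filter fun a => gz A B a = 0 with hs0
  set sm := Finset.univ.filter fun a => gz A B a ^ m = -1 with hsm
  set sp := Finset.univ.filter fun a => gz A B a ^ m = 1 with hsp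
  have d1 : Disjoint s0 sm := by
    rw [Finset.disjoint_filter]
    intro a _ h h'
    rw [h, zero_pow hm0] at h'
    have : (1 : ZMod p) = 0 := by linear_combination h'
    exact one_ne_zero this
  have d2 : Disjoint (s0 ∪ sm) sp := by
    rw [Finset.disjoint_union_left, Finset.disjoint_filter, Finset.disjoint_filter]
    refine ⟨fun a _ h h' => ?_, fun a _ h h' => h1 (h'.symm.trans h)⟩
    rw [h, zero_pow hm0] at h'
    exact zero_ne_one h'
  have hu : s0 ∪ sm ∪ sp = Finset.univ := by
    ext a
    simp only [hs0, hsm, hsp, Finset.mem_union, Finset.mem_filter, Finset.mem_univ, true_and, iff_true]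
    have := hdis a
    tauto
  refine ⟨s0, sm, sp, fun a h => (Finset.mem_filter.1 h).2, fun a h => (Finset.mem_filter.1 h).2,
    fun a h => (Finset.mem_filter.1 h).2, ?_, ?_, ?_⟩
  · rw [← Zs_univ c, ← hu, Zs, Zs, Zs, Zs, Finset.prod_union d2, Finset.prod_union d1]
  · rw [← Finset.card_union_of_disjoint d1, ← Finset.card_union_of_disjoint d2, hu, Finset.card_univ, ZMod.card]
  · rw [← hu, Finset.sum_union d2, Finset.sum_union d1, Finset.sum_congr rfl (g := fun _ => (0 : ZMod p)) (s₁ := s0),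
      Finset.sum_congr rfl (g := fun _ => (-1 : ZMod p)) (s₁ := sm), Finset.sum_congr rfl (g := fun _ => (1 : ZMod p)) (s₁ := sp)]
    · simp only [Finset.sum_const, nsmul_eq_mul]; ring
    · exact fun a h => (Finset.mem_filter.1 h).2
    · exact fun a h => (Finset.mem_filter.1 h).2
    · intro a h
      rw [(Finset.mem_filter.1 h).2, zero_pow hm0]

theorem ht_count (h2 : p ≠ 2) (c : ZMod p →+* k) {A B : ZMod p} {f : k[X]} (hf : f = X ^ 3 + C (c A) * X + C (c B))
    (hΔ : 4 * (c A) ^ 3 + 27 * (c B) ^ 2 ≠ 0) {m : ℕ} (hm : p = 2 * m + 1) {Q I : MW f (c A) (c B)}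
    (hQ : MWPt _ _ _ Q (ι X ^ p) (ι (f ^ m))) (hI : MWPt _ _ _ I (ι X) 1) :
    (ht (Q - I) : k) = 1 + c (∑ a, gz A B a ^ m) := by
  have hp1 := hp.out.one_lt
  have hm0 : m ≠ 0 := by omega
  have hcub : f ^ p = expand k p f := by
    rw [hf]; exact cubic_frob (by rw [← map_pow, ZMod.pow_card]) (by rw [← map_pow, ZMod.pow_card])
  have hf3 : f.natDegree = 3 := by rw [hf]; exact cubic_deg3
  have hfm : f.Monic := by rw [hf]; monicity!
  have hf0 : f ≠ 0 := hfm.ne_zero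
  have hsq : Squarefree f := by rw [hf]; exact (cubic_sep hΔ).squarefree
  have hev : ∀ a, f.eval (c a) = c (gz A B a) := by
    intro a; rw [hf, gz]; simp
  have hw : ∀ a, (f ^ m).eval (c a) = c (gz A B a ^ m) := by
    intro a; rw [eval_pow, hev, map_pow]
  have hk2 : (2 : k) ≠ 0 := by
    have : ((2 : ℕ) : k) ≠ 0 := by
      rw [Ne, CharP.cast_eq_zero_iff k p]
      intro h
      exact h2 ((Nat.prime_dvd_prime_iff_eq hp.out Nat.prime_two).1 h)
    simpa using this
  obtain ⟨s0, sm, sp, h0, hsm, hsp, hprod, hcard, hsum⟩ := Zs_prod c A B hm hm0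
  obtain ⟨f1, hf1⟩ : Zs c s0 ∣ f := Zs_dvd c s0 fun a ha => by rw [hev, h0 a ha, map_zero]
  obtain ⟨q, hq⟩ : Zs c sm ∣ f ^ m + 1 := Zs_dvd c sm fun a ha => by
    rw [eval_add, hw, hsm a ha, map_neg, map_one, eval_one, neg_add_cancel]
  set Z0 := Zs c s0 with hZ0
  set Zm := Zs c sm with hZm
  set Zp := Zs c sp with hZp
  have hZ0' : Z0 ≠ 0 := (Zs_monic c s0).ne_zero
  have hZm' : Zm ≠ 0 := (Zs_monic c sm).ne_zero
  have hZp' : Zp ≠ 0 := (Zs_monic c sp).ne_zero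
  set num := f1 * q ^ 2 - (X + X ^ p) * (Z0 * Zp ^ 2) with hnum
  have hc0 : IsCoprime num Z0 := by
    apply Zs_cop
    intro a ha
    have e0 : Z0.eval (c a) = 0 := Zs_eval c s0 ha
    rw [hnum, eval_sub, eval_mul (p := X + X ^ p), eval_mul (p := Z0), e0, zero_mul, mul_zero, sub_zero, eval_mul, eval_pow]
    refine mul_ne_zero ?_ (pow_ne_zero _ ?_)
    · intro h
      have d1 : X - C (c a) ∣ f1 := dvd_iff_isRoot.2 h
      have d2 : X - C (c a) ∣ Z0 := dvd_iff_isRoot.2 e0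
      have := hsq (X - C (c a)) (by rw [hf1]; exact mul_dvd_mul d2 d1)
      exact not_isUnit_X_sub_C _ this
    · intro h
      have := congrArg (eval (c a)) hq
      rw [eval_add, hw, h0 a ha, zero_pow hm0, eval_mul, h, eval_one, map_zero, mul_zero, zero_add] at this
      exact one_ne_zero this
  have hcp : IsCoprime num Zp := by
    apply Zs_cop
    intro a ha
    have e0 : Zp.eval (c a) = 0 := Zs_eval c sp ha
    rw [hnum, eval_sub, eval_mul (p := X + X ^ p), eval_mul (p := Z0), eval_pow (p := Zp), e0, zero_pow two_ne_zero, mul_zero, mul_zero, sub_zero, eval_mul, eval_pow]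
    refine mul_ne_zero ?_ (pow_ne_zero _ ?_)
    · intro h
      have h3 : f.eval (c a) = 0 := by rw [hf1, eval_mul, h, mul_zero]
      have h4 := hw a
      rw [eval_pow, h3, zero_pow hm0, hsp a ha, map_one] at h4
      exact zero_ne_one h4
    · intro h
      have := congrArg (eval (c a)) hq
      rw [eval_add, hw, hsp a ha, eval_mul, h, eval_one, map_one, mul_zero] at this
      exact hk2 (by rw [← this]; norm_num)
  have hcop : IsCoprime num (Z0 * Zp ^ 2) := hc0.mul_right hcp.pow_right
  have hrep : RepX f (c A) (c B) (Q - I) num (Z0 * Zp ^ 2) := by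
    refine ⟨hcop, Or.inr ⟨mul_ne_zero hZ0' (pow_ne_zero _ hZp'), ?_⟩⟩
    have hne : ι X ^ p - ι X ≠ 0 := by
      rw [← map_pow, ← map_sub, ← hprod]
      exact iota_ne (mul_ne_zero (mul_ne_zero hZ0' hZm') hZp')
    have := IsPt.add (iota_ne hf0) hQ hI.neg (sub_ne_zero.1 hne) (L := (ι (f ^ m) + 1) / (ι X ^ p - ι X)) (by field_simp; ring) rfl rfl
    rw [← sub_eq_add_neg] at this
    suffices hs : ι num / ι (Z0 * Zp ^ 2) = ι f * ((ι (f ^ m) + 1) / (ι X ^ p - ι X)) ^ 2 - ι X ^ p - ι X by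
      rw [hs]; exact ⟨_, this⟩
    have i0 := iota_ne hZ0'
    have im := iota_ne hZm'
    have ip := iota_ne hZp'
    have e1 : ι (f ^ m) + 1 = ι Zm * ι q := by rw [← map_mul, ← hq, map_add, map_one]
    have e2 : ι X ^ p - ι X = ι Z0 * ι Zm * ι Zp := by rw [← map_mul, ← map_mul, hprod, map_sub, map_pow]
    have e3 : ι f = ι Z0 * ι f1 := by rw [← map_mul, ← hf1]
    rw [e1, e2, e3, hnum]
    simp only [map_sub, map_mul, map_add, map_pow]
    field_simp
    ring
  have hid : Z0 * Zm ^ 2 * num = X ^ (2 * p + 1) + (X ^ (p + 2) - X ^ 3 + C (c A) * X ^ p + C (c B) + 2 * f ^ (m + 1) + f) := by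
    have e1 : Z0 * Zm ^ 2 * num = f * (f ^ m + 1) ^ 2 - (X + X ^ p) * (X ^ p - X) ^ 2 := by
      rw [hq, ← hprod, hnum]; linear_combination -(Zm ^ 2 * q ^ 2) * hf1
    have e2 : f * (f ^ m) ^ 2 = X ^ (3 * p) + C (c A) * X ^ p + C (c B) := by
      have : f * (f ^ m) ^ 2 = f ^ p := by rw [← pow_mul, ← pow_succ', hm, mul_comm]
      rw [this, hcub, hf]
      simp only [map_add, map_mul, map_pow, expand_X, expand_C]; ring
    rw [e1]
    have e3 : (X : k[X]) ^ (3 * p) = (X ^ p) ^ 3 := by rw [← pow_mul, mul_comm]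
    have e4 : (X : k[X]) ^ (2 * p + 1) = (X ^ p) ^ 2 * X := by rw [pow_succ, ← pow_mul, mul_comm p 2]
    rw [e4, pow_add]
    rw [e3] at e2
    linear_combination e2
  have hdeg : (Z0 * Zm ^ 2 * num).natDegree = 2 * p + 1 := by
    rw [hid, natDegree_add_eq_left_of_natDegree_lt, natDegree_X_pow]
    rw [natDegree_X_pow]
    have hfd : (f ^ (m + 1)).natDegree ≤ 2 * p := by
      rw [natDegree_pow, hf3]; omega
    have hfd' : f.natDegree ≤ 2 * p := by omega
    have hle : (X ^ (p + 2) - X ^ 3 + C (c A) * X ^ p + C (c B) + 2 * f ^ (m + 1) + f).natDegree ≤ 2 * p := by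
      refine natDegree_add_le_of_degree_le (natDegree_add_le_of_degree_le ?_ ?_) hfd'
      · compute_degree
        omega
      · rw [show (2 : k[X]) = C 2 from rfl]
        exact (natDegree_C_mul_le _ _).trans hfd
    omega
  have hnum0 : num ≠ 0 := by
    intro h
    rw [h, mul_zero, natDegree_zero] at hdeg
    omega
  rw [natDegree_mul (mul_ne_zero hZ0' (pow_ne_zero _ hZm')) hnum0, natDegree_mul hZ0' (pow_ne_zero _ hZm'), natDegree_pow,
    hZ0, hZm, Zs_deg, Zs_deg] at hdeg
  have hden : (Z0 * Zp ^ 2).natDegree = s0.card + 2 * sp.card := by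
    rw [natDegree_mul hZ0' (pow_ne_zero _ hZp'), natDegree_pow, hZ0, hZp, Zs_deg, Zs_deg]
  rw [hrep.ht hf0, max_eq_left (by omega), show num.natDegree = 1 + s0.card + 2 * sp.card by omega, hsum]
  have hc := congrArg (fun n : ℕ => (n : k)) hcard
  simp only [Nat.cast_add, CharP.cast_eq_zero] at hc
  rw [map_sub, map_natCast, map_natCast]
  push_cast
  linear_combination hc
end Count


section CaseEnds
open Polynomial

theorem sum_eval_ZMod {p : ℕ} [hp : Fact p.Prime] (q : (ZMod p)[X]) (hq : q.natDegree < 2 * (p - 1)) :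
    ∑ a : ZMod p, q.eval a = - q.coeff (p - 1) := by
  have hp1 := hp.out.one_lt
  have hlt : ∀ i < p - 1, ∑ a : ZMod p, a ^ i = 0 := by
    intro i hi
    exact FiniteField.sum_pow_lt_card_sub_one (ZMod p) i (by rw [ZMod.card]; exact hi)
  have hge : ∀ i, p - 1 < i → i < 2 * (p - 1) → ∑ a : ZMod p, a ^ i = 0 := by
    intro i h1 h2
    rw [← hlt (i - (p - 1)) (by omega)]
    refine Finset.sum_congr rfl fun a _ => ?_
    have : i = p + (i - p) := by omega
    rw [this, pow_add, ZMod.pow_card, ← pow_succ']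
    congr 1; omega
  have heq : ∑ a : ZMod p, a ^ (p - 1) = -1 := by
    have : ∀ a : ZMod p, a ^ (p - 1) = 1 - if a = 0 then 1 else 0 := by
      intro a
      split_ifs with h
      · rw [h, zero_pow (by omega), sub_self]
      · rw [ZMod.pow_card_sub_one_eq_one h, sub_zero]
    rw [Finset.sum_congr rfl fun a _ => this a]
    simp
  simp_rw [eval_eq_sum_range]
  rw [Finset.sum_comm]
  simp_rw [← Finset.mul_sum]
  by_cases hd : p - 1 ≤ q.natDegree
  · rw [Finset.sum_eq_single (p - 1), heq]
    · ring
    · intro i hi hne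
      have := Finset.mem_range.1 hi
      rcases lt_or_gt_of_ne hne with h | h
      · rw [hlt i h, mul_zero]
      · rw [hge i h (by omega), mul_zero]
    · intro h
      exact absurd (Finset.mem_range.2 (by omega)) h
  · rw [coeff_eq_zero_of_natDegree_lt (by omega), neg_zero]
    refine Finset.sum_eq_zero fun i hi => ?_
    have := Finset.mem_range.1 hi
    rw [hlt i (by omega), mul_zero]

theorem sum_gz_coeff {p : ℕ} [hp : Fact p.Prime] {m : ℕ} (hm : p = 2 * m + 1) (A B : ZMod p) :
    ∑ a : ZMod p, gz A B a ^ m = - ((X ^ 3 + C A * X + C B : (ZMod p)[X]) ^ m).coeff (p - 1) := by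
  have hp1 := hp.out.one_lt
  rw [← sum_eval_ZMod]
  · refine Finset.sum_congr rfl fun a _ => ?_
    simp [gz]
  · have : (X ^ 3 + C A * X + C B : (ZMod p)[X]).natDegree = 3 := by compute_degree!
    rw [natDegree_pow, this]
    omega

variable {k : Type*} [Field k] [IsAlgClosed k] [DecidableEq (RatFunc k)] {p : ℕ} [hp : Fact p.Prime] [CharP k p]
local notation "ι" => algebraMap k[X] (RatFunc k)

theorem ht_count' (h2 : p ≠ 2) (c : ZMod p →+* k) {A B : ZMod p} {A' B' : k} (hA : A' = c A) (hB : B' = c B) {f : k[X]}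
    (hf : f = X ^ 3 + C A' * X + C B')
    (hΔ : 4 * A' ^ 3 + 27 * B' ^ 2 ≠ 0) {m : ℕ} (hm : p = 2 * m + 1) {Q I : MW f A' B'}
    (hQ : MWPt _ _ _ Q (ι X ^ p) (ι (f ^ m))) (hI : MWPt _ _ _ I (ι X) 1) :
    (ht (Q - I) : k) = 1 + c (∑ a, gz A B a ^ m) := by
  subst hA hB
  exact ht_count h2 c hf hΔ hm hQ hI

theorem grp_help {M : Type*} [AddCommGroup M] {P T : M} (h : T + T = 0) : P - T = P + T := by
  rw [sub_eq_add_neg, neg_eq_of_add_eq_zero_left h]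
theorem grp_help2 {M : Type*} [AddCommGroup M] (P T I : M) : P + T - I = (P - I) + T := by abel
theorem grp_help3 {M : Type*} [AddCommGroup M] (P T I : M) : -(P + T) - I = -((P + I) + T) := by abel

theorem ht_add_T {f : k[X]} {A B : k} (hf : f ≠ 0) (h2 : (2 : k) ≠ 0) (hΔ : 4 * A ^ 3 + 27 * B ^ 2 ≠ 0) (P : MW f A B)
    {T : MW f A B} (hT : T + T = 0) (h0 : ht T = 0) : ht (P + T) = ht P := by
  have := ht_para hf h2 hΔ P T
  have e : P - T = P + T := grp_help hT
  rw [e, h0] at this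
  omega

theorem case_one (hp11 : 11 < p) (c : ZMod p →+* k) {φ : ZMod p} (hφ : φ ^ 2 = φ + 1) {x y : ℤ}
    (hxy : (p : ℤ) = x ^ 2 + 15 * y ^ 2) {m : ℕ} (hm : p = 2 * m + 1) :
    (∑ a, gz (cA φ) (cB φ) a ^ m) ^ 2 = 4 * (x : ZMod p) ^ 2 := by
  have h2 : (2 : k) ≠ 0 := by simpa using small_ne (k := k) hp11.le (n := 2) (by norm_num) (by norm_num)
  have h3 : (3 : k) ≠ 0 := by simpa using small_ne (k := k) hp11.le (n := 3) (by norm_num) (by norm_num)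
  have h5 : (5 : k) ≠ 0 := by simpa using small_ne (k := k) hp11.le (n := 5) (by norm_num) (by norm_num)
  have h7 : (7 : k) ≠ 0 := by simpa using small_ne (k := k) hp11.le (n := 7) (by norm_num) (by norm_num)
  have h11 : (11 : k) ≠ 0 := by
    have : ((11 : ℕ) : k) ≠ 0 := by
      rw [Ne, CharP.cast_eq_zero_iff k p]
      intro h
      have := Nat.le_of_dvd (by norm_num) h
      omega
    simpa using this
  obtain ⟨ω, hω'⟩ := IsAlgClosed.exists_root (X ^ 2 + X + 1 : k[X]) (by
    have : (X ^ 2 + X + 1 : k[X]).degree = 2 := by compute_degree!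
    rw [this]; norm_num)
  have hω : ω ^ 2 = - ω - 1 := by
    simp only [IsRoot.def, eval_add, eval_pow, eval_X, eval_one] at hω'
    linear_combination hω'
  have hφ' : (c φ) ^ 2 = c φ + 1 := by rw [← map_pow, hφ, map_add, map_one]
  have hcA : cA (c φ) = c (cA φ) := by simp only [cA, map_sub, map_mul, map_ofNat]
  have hcB : cB (c φ) = c (cB φ) := by simp only [cB, map_sub, map_mul, map_ofNat]
  have hΔ := gP_disc h2 h3 hφ' hω
  have hA : cA (c φ) ≠ 0 := by
    intro h
    rw [cA] at h
    have h8 : 8 * c φ - 9 = 0 := by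
      apply (mul_eq_zero.1 (show (3 : k) * (8 * c φ - 9) = 0 by linear_combination h)).resolve_left h3
    have : (5 : k) * 11 = 0 := by linear_combination -64 * hφ' + (8 * c φ + 1) * h8
    exact mul_ne_zero h5 h11 this
  have hB : cB (c φ) ≠ 0 := by
    intro h
    rw [cB] at h
    have h8 : 5 - 4 * c φ = 0 := by
      apply (mul_eq_zero.1 (show ((2 : k) * 7) * (5 - 4 * c φ) = 0 by linear_combination h)).resolve_left (mul_ne_zero h2 h7)
    have : (11 : k) = 0 := by linear_combination -16 * hφ' - (4 * c φ + 1) * h8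
    exact h11 this
  obtain ⟨I, α, hI, hα, hhα, hplus, hminus⟩ := exists_alpha hp11.le hφ' hω hxy
  obtain ⟨T, hT, hT0, y', hy'⟩ := rigid (f := gP (c φ)) (by omega) h3 rfl hA hB hΔ (by rw [hcA, ← map_pow, ZMod.pow_card])
    (by rw [hcB, ← map_pow, ZMod.pow_card]) hα hhα
  have hgp : (gP (c φ)) ^ p = expand k p (gP (c φ)) :=
    cubic_frob (by rw [hcA, ← map_pow, ZMod.pow_card]) (by rw [hcB, ← map_pow, ZMod.pow_card])
  have hf0 : gP (c φ) ≠ 0 := gP_ne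
  have heq := hy'.eqn (iota_ne hf0)
  have hyy : (y' - ι (gP (c φ) ^ m)) * (y' + ι (gP (c φ) ^ m)) = 0 := by
    apply mul_left_cancel₀ (iota_ne hf0)
    have e1 : gP (c φ) * (gP (c φ) ^ m) ^ 2 = (X ^ p) ^ 3 + C (cA (c φ)) * X ^ p + C (cB (c φ)) := by
      have : gP (c φ) * (gP (c φ) ^ m) ^ 2 = gP (c φ) ^ p := by rw [← pow_mul, ← pow_succ']; congr 1; omega
      rw [this, hgp, gP]
      simp only [map_add, map_mul, map_pow, expand_X, expand_C]
    have e2 := congrArg (fun z => ι z) e1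
    simp only [map_add, map_mul, map_pow] at e2
    rw [map_pow]
    linear_combination heq - e2
  have key : ∃ e : k, (e = 1 ∨ e = -1) ∧ c (∑ a, gz (cA φ) (cB φ) a ^ m) = e * (2 * (x : k)) := by
    rcases mul_eq_zero.1 hyy with h | h
    · rw [sub_eq_zero.1 h] at hy'
      have hc := ht_count' (by omega) c hcA hcB rfl hΔ hm hy' hI
      have e : α + T - I = (α - I) + T := grp_help2 α T I
      have e' : ht (α + T - I) = ht (α - I) := (congrArg ht e).trans (ht_add_T hf0 h2 hΔ (α - I) hT hT0)
      replace hc : (ht (α - I) : k) = _ := (congrArg Nat.cast e').symm.trans hc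
      have h6 := congrArg (fun z : ℤ => (z : k)) hminus
      simp only [Int.cast_natCast, Int.cast_sub, Int.cast_add, Int.cast_mul, Int.cast_one, Int.cast_ofNat, CharP.cast_eq_zero] at h6
      refine ⟨-1, Or.inr rfl, ?_⟩
      linear_combination h6 - hc
    · have hy'' := hy'.neg
      rw [eq_neg_of_add_eq_zero_left h, neg_neg] at hy''
      have hc := ht_count' (by omega) c hcA hcB rfl hΔ hm hy'' hI
      have e : -(α + T) - I = -((α + I) + T) := grp_help3 α T I
      have e' : ht (-(α + T) - I) = ht (α + I) :=
        ((congrArg ht e).trans (ht_neg hf0 _)).trans (ht_add_T hf0 h2 hΔ (α + I) hT hT0)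
      replace hc : (ht (α + I) : k) = _ := (congrArg Nat.cast e').symm.trans hc
      have h6 := congrArg (fun z : ℤ => (z : k)) hplus
      simp only [Int.cast_natCast, Int.cast_sub, Int.cast_add, Int.cast_mul, Int.cast_one, Int.cast_ofNat, CharP.cast_eq_zero] at h6
      refine ⟨1, Or.inl rfl, ?_⟩
      linear_combination h6 - hc
  obtain ⟨e, he, hS⟩ := key
  apply c.injective
  rw [map_pow, hS, map_mul, map_pow, map_intCast, map_ofNat]
  rcases he with rfl | rfl <;> ring

theorem case_two (hp11 : 11 ≤ p) (c : ZMod p →+* k) {φ : ZMod p} (hφ : φ ^ 2 = φ + 1) (h32 : p % 3 = 2)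
    {m : ℕ} (hm : p = 2 * m + 1) :
    (∑ a, gz (cA φ) (cB φ) a ^ m) = 0 := by
  have h2 : (2 : k) ≠ 0 := by simpa using small_ne (k := k) hp11 (n := 2) (by norm_num) (by norm_num)
  have h3 : (3 : k) ≠ 0 := by simpa using small_ne (k := k) hp11 (n := 3) (by norm_num) (by norm_num)
  have h5 : (5 : k) ≠ 0 := by simpa using small_ne (k := k) hp11 (n := 5) (by norm_num) (by norm_num)
  obtain ⟨ω, hω'⟩ := IsAlgClosed.exists_root (X ^ 2 + X + 1 : k[X]) (by
    have : (X ^ 2 + X + 1 : k[X]).degree = 2 := by compute_degree!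
    rw [this]; norm_num)
  have hω : ω ^ 2 = - ω - 1 := by
    simp only [IsRoot.def, eval_add, eval_pow, eval_X, eval_one] at hω'
    linear_combination hω'
  have hφ' : (c φ) ^ 2 = c φ + 1 := by rw [← map_pow, hφ, map_add, map_one]
  have hφp : (c φ) ^ p = c φ := by rw [← map_pow, ZMod.pow_card]
  have hcA : cA (c φ) = c (cA φ) := by simp only [cA, map_sub, map_mul, map_ofNat]
  have hcB : cB (c φ) = c (cB φ) := by simp only [cB, map_sub, map_mul, map_ofNat]
  have hΔ := gP_disc h2 h3 hφ' hω
  obtain ⟨P, -, hP⟩ := exists_rho h2 h3 hφ' hω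
  have hρ : cρ (c φ) ω ≠ 0 := by
    intro h
    have := cρ_mul hφ' hω
    rw [h, zero_mul] at this
    exact pow_ne_zero 2 h2 (by rw [show (2 : k) ^ 2 = 4 by norm_num]; exact this.symm)
  have hcar := cartier (by omega : p ≠ 2) rfl hΔ hρ hP
  rw [sum_gz_coeff hm]
  have hρp : cρ (c φ) ω ^ p ≠ cρ (c φ) ω := by
    intro h
    have e1 : frobenius k p (cρ (c φ) ω) = cρ (frobenius k p (c φ)) (frobenius k p ω) := by
      simp only [cρ, map_add, map_sub, map_mul, map_one, map_ofNat]
    simp only [frobenius_def] at e1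
    rw [h, hφp] at e1
    have e2 : (1 - 2 * c φ) * (ω ^ p - ω) = 0 := by
      simp only [cρ] at e1; linear_combination -e1
    have e3 : 1 - 2 * c φ ≠ 0 := by
      intro h0
      exact h5 (by linear_combination (1 - 2 * c φ) * h0 - 4 * hφ')
    have e4 : ω ^ p = ω := sub_eq_zero.1 ((mul_eq_zero.1 e2).resolve_left e3)
    have e5 : ω ^ 3 = 1 := by linear_combination (ω - 1) * hω
    have e6 : ω ^ p = ω ^ 2 := by
      conv_lhs => rw [← Nat.div_add_mod p 3, h32, pow_add, pow_mul, e5, one_pow, one_mul]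
    have e7 : 2 * ω + 1 = 0 := by rw [e4] at e6; linear_combination e6 + hω
    exact h3 (by linear_combination 4 * hω - (2 * ω + 1) * e7)
  have hm' : (p - 1) / 2 = m := by omega
  rw [hm'] at hcar
  have hH : (gP (c φ) ^ m).coeff (p - 1) = 0 := by
    have : (cρ (c φ) ω ^ p - cρ (c φ) ω) * (gP (c φ) ^ m).coeff (p - 1) = 0 := by
      rw [sub_mul]; exact sub_eq_zero.2 hcar
    exact (mul_eq_zero.1 this).resolve_left (sub_ne_zero.2 hρp)
  have hmap : gP (c φ) = (X ^ 3 + C (cA φ) * X + C (cB φ) : (ZMod p)[X]).map c := by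
    rw [gP, hcA, hcB]; simp
  rw [hmap, ← Polynomial.map_pow, coeff_map] at hH
  rw [(map_eq_zero c).1 hH, neg_zero]

end CaseEnds


section Domb

/-- `(2k)! / k!^4` -/
def uu (k : ℕ) : ℚ := ((2 * k).factorial : ℚ) / (k.factorial : ℚ) ^ 4

theorem uu_succ (k : ℕ) : ((k : ℚ) + 1) ^ 3 * uu (k + 1) = 2 * (2 * k + 1) * uu k := by
  have h : (k.factorial : ℚ) ≠ 0 := by exact_mod_cast k.factorial_ne_zero
  have h1 : (k : ℚ) + 1 ≠ 0 := by positivity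
  rw [uu, uu, show 2 * (k + 1) = 2 * k + 1 + 1 by ring, Nat.factorial_succ, Nat.factorial_succ, Nat.factorial_succ]
  push_cast
  field_simp
  ring

/-- shifted sequence -/
def up : ℕ → ℚ
  | 0 => 0
  | (i + 1) => uu i

theorem two_sub_ne (i : ℕ) : 2 * (i : ℚ) - 1 ≠ 0 := by
  intro h
  have : (2 * (i : ℤ)) = 1 := by
    have : 2 * (i : ℚ) = 1 := by linarith
    exact_mod_cast this
  omega

theorem two_sub_ne' (i : ℕ) : 2 * (i : ℚ) - 3 ≠ 0 := by
  intro h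
  have : (2 * (i : ℤ)) = 3 := by
    have : 2 * (i : ℚ) = 3 := by linarith
    exact_mod_cast this
  omega

theorem up_eq (i : ℕ) : up i = uu i * (i : ℚ) ^ 3 / (2 * (2 * i - 1)) := by
  have h := two_sub_ne i
  cases i with
  | zero => simp [up]
  | succ i =>
    have h2 := uu_succ i
    rw [up, eq_div_iff (mul_ne_zero two_ne_zero h)]
    push_cast
    linear_combination -h2

/-- doubly shifted sequence -/
def upp : ℕ → ℚ
  | 0 => 0
  | (i + 1) => up i

theorem upp_eq (i : ℕ) : upp i = uu i * (i : ℚ) ^ 3 * ((i : ℚ) - 1) ^ 3 / (4 * (2 * i - 1) * (2 * i - 3)) := by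
  cases i with
  | zero => simp [upp]
  | succ i =>
    rw [upp, up_eq]
    have h := up_eq (i + 1)
    rw [up] at h
    rw [h]
    push_cast
    rw [show 2 * ((i : ℚ) + 1) - 3 = 2 * i - 1 by ring, show (i : ℚ) + 1 - 1 = i by ring]
    have h1 := two_sub_ne i
    have h2 := two_sub_ne (i + 1)
    push_cast at h2
    field_simp
    try ring

/-- convolution square -/
def BB (n : ℕ) : ℚ := ∑ k ∈ Finset.range (n + 1), uu k * uu (n - k)

theorem BB_up (n : ℕ) : BB n = ∑ k ∈ Finset.range (n + 2), uu k * up (n + 1 - k) := by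
  rw [Finset.sum_range_succ, Nat.sub_self, up, mul_zero, add_zero, BB]
  refine Finset.sum_congr rfl fun k hk => ?_
  have := Finset.mem_range.1 hk
  rw [show n + 1 - k = (n - k) + 1 by omega, up]

theorem BB_upp (n : ℕ) : BB n = ∑ k ∈ Finset.range (n + 3), uu k * upp (n + 2 - k) := by
  rw [Finset.sum_range_succ, Nat.sub_self, upp, mul_zero, add_zero, BB_up]
  refine Finset.sum_congr rfl fun k hk => ?_
  have := Finset.mem_range.1 hk
  rw [show n + 2 - k = (n + 1 - k) + 1 by omega, upp]

/-- certificate polynomial -/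
def q1 (n k : ℚ) : ℚ := n ^ 2 * (4 * k ^ 3 - (12 + 18 * n) * k ^ 2 + (11 + 37 * n + 26 * n ^ 2) * k
  - (2 + 16 * n + 26 * n ^ 2 + 12 * n ^ 3))

theorem BB_rec (N : ℕ) {n : ℚ} (hn : n = N + 1) :
    (n + 1) ^ 5 * n ^ 2 * BB (N + 2) - 2 * (2 * n + 1) * (5 * n ^ 2 + 5 * n + 2) * n ^ 2 * BB (N + 1)
      + 64 * n ^ 3 * BB N = 0 := by
  set G : ℕ → ℚ := fun k => (k : ℚ) ^ 3 * q1 n k / (2 * (n + 1 - k) - 1) * uu k * up (N + 3 - k) with hG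
  have key : ∀ k ∈ Finset.range (N + 3), (n + 1) ^ 5 * n ^ 2 * (uu k * uu (N + 2 - k))
      - 2 * (2 * n + 1) * (5 * n ^ 2 + 5 * n + 2) * n ^ 2 * (uu k * up (N + 2 - k))
      + 64 * n ^ 3 * (uu k * upp (N + 2 - k)) = G (k + 1) - G k := by
    intro k hk
    have hk' := Finset.mem_range.1 hk
    obtain ⟨i, hi⟩ : ∃ i, N + 2 = k + i := ⟨N + 2 - k, by omega⟩
    have e1 : N + 2 - k = i := by omega
    have e2 : N + 3 - k = i + 1 := by omega
    have e3 : N + 3 - (k + 1) = i := by omega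
    have hni : n = (k : ℚ) + i - 1 := by
      have : (N : ℚ) + 2 = k + i := by exact_mod_cast hi
      linarith
    simp only [hG]
    rw [e1, e2, e3, up_eq, upp_eq, up]
    have hk1 : ((k : ℚ) + 1) ≠ 0 := by positivity
    have hus : uu (k + 1) = 2 * (2 * k + 1) * uu k / ((k : ℚ) + 1) ^ 3 := by
      rw [← uu_succ]; field_simp
    rw [hus]
    have d1 := two_sub_ne i
    have d2 := two_sub_ne' i
    push_cast
    rw [show 2 * (n + 1 - ((k : ℚ) + 1)) - 1 = 2 * i - 3 by rw [hni]; ring,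
      show 2 * (n + 1 - (k : ℚ)) - 1 = 2 * i - 1 by rw [hni]; ring]
    simp only [q1]
    generalize ha : 2 * (i : ℚ) - 1 = a at *
    generalize hc : 2 * (i : ℚ) - 3 = c at *
    rw [hni]
    field_simp
    rw [← ha, ← hc]
    ring
  have hs := Finset.sum_congr rfl key
  rw [Finset.sum_range_sub, Finset.sum_add_distrib, Finset.sum_sub_distrib, ← Finset.mul_sum, ← Finset.mul_sum, ← Finset.mul_sum,
    ← BB_upp N, ← BB_up (N + 1)] at hs
  have hb : BB (N + 2) = ∑ k ∈ Finset.range (N + 3), uu k * uu (N + 2 - k) := rfl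
  rw [hb, hs]
  simp [hG, up]

theorem A_eq_BB (n : ℕ) : (A n : ℚ) = (n.factorial : ℚ) ^ 2 * BB n := by
  rw [A, BB, Finset.mul_sum]
  push_cast
  refine Finset.sum_congr rfl fun k hk => ?_
  have hk' := Finset.mem_range.1 hk
  obtain ⟨j, rfl⟩ : ∃ j, n = k + j := ⟨n - k, by omega⟩
  rw [show 2 * (k + j) - 2 * k = 2 * j by omega, show k + j - k = j by omega,
    Nat.cast_choose ℚ (show k ≤ 2 * k by omega), Nat.cast_choose ℚ (show j ≤ 2 * j by omega),
    Nat.cast_choose ℚ (show k ≤ k + j by omega), show 2 * k - k = k by omega, show 2 * j - j = j by omega,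
    show k + j - k = j by omega, uu, uu]
  have h1 : (k.factorial : ℚ) ≠ 0 := by exact_mod_cast k.factorial_ne_zero
  have h2 : (j.factorial : ℚ) ≠ 0 := by exact_mod_cast j.factorial_ne_zero
  field_simp

theorem A_rec (N : ℕ) {n : ℚ} (hn : n = N + 1) :
    (n + 1) ^ 3 * (A (N + 2) : ℚ) = 2 * (2 * n + 1) * (5 * n ^ 2 + 5 * n + 2) * A (N + 1) - 64 * n ^ 3 * A N := by
  have h := BB_rec N hn
  rw [A_eq_BB, A_eq_BB, A_eq_BB, Nat.factorial_succ, Nat.factorial_succ]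
  push_cast
  rw [← hn]
  linear_combination (N.factorial : ℚ) ^ 2 * h

/-- inverse factorial on the integers -/
def ifac (z : ℤ) : ℚ := if z < 0 then 0 else 1 / (z.toNat.factorial : ℚ)

theorem ifac_pred (z : ℤ) : ifac (z - 1) = z * ifac z := by
  rcases lt_trichotomy z 0 with h | h | h
  · rw [ifac, ifac, if_pos h, if_pos (by omega), mul_zero]
  · subst h; simp [ifac]
  · obtain ⟨m, rfl⟩ : ∃ m : ℕ, z = (m : ℤ) + 1 := ⟨(z - 1).toNat, by omega⟩
    rw [ifac, ifac, if_neg (by omega), if_neg (by omega), show ((m : ℤ) + 1 - 1).toNat = m by omega,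
      show ((m : ℤ) + 1).toNat = m + 1 by omega, Nat.factorial_succ]
    have h1 : (m.factorial : ℚ) ≠ 0 := by exact_mod_cast m.factorial_ne_zero
    have h2 : (m : ℚ) + 1 ≠ 0 := by positivity
    push_cast
    field_simp

/-- summand of the second representation -/
def F2 (n k : ℕ) : ℚ := ((n + k).factorial : ℚ) * ifac ((n : ℤ) - 2 * k) * ((2 * k).factorial / (k.factorial : ℚ) ^ 5)
  * 4 ^ n / 16 ^ k

theorem F2_zero {n k : ℕ} (h : n < 2 * k) : F2 n k = 0 := by
  rw [F2, ifac, if_pos (by omega)]; simp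

/-- second representation of the Domb numbers -/
def DD (n : ℕ) : ℕ := ∑ k ∈ Finset.range (n + 1), Nat.choose (n + k) (3 * k) *
  (Nat.choose (2 * k) k ^ 2 * Nat.choose (3 * k) k) * 4 ^ (n - 2 * k)

theorem DD_eq (n : ℕ) : (DD n : ℚ) = ∑ k ∈ Finset.range (n + 1), F2 n k := by
  rw [DD]
  push_cast
  refine Finset.sum_congr rfl fun k hk => ?_
  by_cases h : n < 2 * k
  · rw [F2_zero h, Nat.choose_eq_zero_of_lt (by omega)]; simp
  · obtain ⟨j, rfl⟩ : ∃ j, n = 2 * k + j := ⟨n - 2 * k, by omega⟩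
    rw [Nat.cast_choose ℚ (show 3 * k ≤ 2 * k + j + k by omega), Nat.cast_choose ℚ (show k ≤ 2 * k by omega),
      Nat.cast_choose ℚ (show k ≤ 3 * k by omega), show 2 * k - k = k by omega, show 3 * k - k = 2 * k by omega,
      show 2 * k + j + k - 3 * k = j by omega, show 2 * k + j - 2 * k = j by omega, F2, ifac, if_neg (by push_cast; omega),
      show (((2 * k + j : ℕ) : ℤ) - 2 * k).toNat = j by omega, pow_add, pow_mul]
    have h1 : (k.factorial : ℚ) ≠ 0 := by exact_mod_cast k.factorial_ne_zero
    have h2 : (j.factorial : ℚ) ≠ 0 := by exact_mod_cast j.factorial_ne_zero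
    have h3 : ((2 * k).factorial : ℚ) ≠ 0 := by exact_mod_cast (2 * k).factorial_ne_zero
    have h4 : ((3 * k).factorial : ℚ) ≠ 0 := by exact_mod_cast (3 * k).factorial_ne_zero
    norm_num
    field_simp

theorem DD_eq' (n m : ℕ) (h : n + 1 ≤ m) : (DD n : ℚ) = ∑ k ∈ Finset.range m, F2 n k := by
  rw [DD_eq]
  refine Finset.sum_subset (fun x hx => Finset.mem_range.2 (by have := Finset.mem_range.1 hx; omega)) fun k _ hk => ?_
  have : ¬ k < n + 1 := fun h => hk (Finset.mem_range.2 h)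
  exact F2_zero (by omega)

theorem DD_rec (N : ℕ) {n : ℚ} (hn : n = N + 1) :
    (n + 1) ^ 3 * (DD (N + 2) : ℚ) = 2 * (2 * n + 1) * (5 * n ^ 2 + 5 * n + 2) * DD (N + 1) - 64 * n ^ 3 * DD N := by
  set b : ℕ → ℚ := fun k => ((N + k).factorial : ℚ) * ifac ((N : ℤ) + 2 - 2 * k) *
    ((2 * k).factorial / (k.factorial : ℚ) ^ 5) * 4 ^ N / 16 ^ k with hb
  set G : ℕ → ℚ := fun k => (k : ℚ) ^ 4 * (-192 - 576 * n) * b k with hG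
  have key : ∀ k ∈ Finset.range (N + 3), (n + 1) ^ 3 * F2 (N + 2) k
      - 2 * (2 * n + 1) * (5 * n ^ 2 + 5 * n + 2) * F2 (N + 1) k
      + 64 * n ^ 3 * F2 N k = G (k + 1) - G k := by
    intro k _
    simp only [hG, hb, F2]
    have i1 := ifac_pred ((N : ℤ) + 2 - 2 * k)
    have i2 := ifac_pred ((N : ℤ) + 1 - 2 * k)
    rw [show (N : ℤ) + 2 - 2 * k - 1 = N + 1 - 2 * k by ring] at i1
    rw [show (N : ℤ) + 1 - 2 * k - 1 = N - 2 * k by ring] at i2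
    rw [i1] at i2
    push_cast at i1 i2 ⊢
    rw [show (N : ℤ) + 2 - 2 * ((k : ℤ) + 1) = N - 2 * k by ring, i1, i2]
    rw [show N + 2 + k = N + k + 1 + 1 by ring, show N + 1 + k = N + k + 1 by ring, show N + (k + 1) = N + k + 1 by ring,
      show 2 * (k + 1) = 2 * k + 1 + 1 by ring, Nat.factorial_succ (N + k + 1), Nat.factorial_succ (N + k), Nat.factorial_succ k,
      Nat.factorial_succ (2 * k + 1), Nat.factorial_succ (2 * k)]
    have h1 : (k.factorial : ℚ) ≠ 0 := by exact_mod_cast k.factorial_ne_zero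
    have h2 : (k : ℚ) + 1 ≠ 0 := by positivity
    push_cast
    rw [hn]
    field_simp
    ring
  have hs := Finset.sum_congr rfl key
  rw [Finset.sum_range_sub, Finset.sum_add_distrib, Finset.sum_sub_distrib, ← Finset.mul_sum, ← Finset.mul_sum, ← Finset.mul_sum,
    ← DD_eq' N _ (by omega), ← DD_eq' (N + 1) _ (by omega), ← DD_eq' (N + 2) _ (by omega)] at hs
  have g0 : G 0 = 0 := by simp [hG]
  have g1 : G (N + 3) = 0 := by
    simp only [hG, hb]
    rw [ifac, if_pos (by push_cast; omega)]; simp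
  rw [g0, g1] at hs
  linear_combination hs

theorem A_eq_DD (n : ℕ) : A n = DD n := by
  have : A n = DD n ∧ A (n + 1) = DD (n + 1) := by
    induction n with
    | zero => exact ⟨by decide, by decide⟩
    | succ N ih =>
      refine ⟨ih.2, ?_⟩
      have h1 := A_rec N rfl
      have h2 := DD_rec N rfl
      rw [ih.1, ih.2, ← h2] at h1
      have h3 : ((N : ℚ) + 1 + 1) ^ 3 ≠ 0 := by positivity
      exact_mod_cast mul_left_cancel₀ h3 h1
  exact this.1

end Domb


section Clausen
open Polynomial

/-- shifted Legendre coefficients -/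
def cL (N k : ℕ) : ℤ := (-1) ^ k * (Nat.choose N k * Nat.choose (N + k) k : ℕ)

theorem cL_rec (N k : ℕ) : ((k : ℚ) + 1) ^ 2 * (cL N (k + 1) : ℚ) = -((N : ℚ) * (N + 1) - k * (k + 1)) * cL N k := by
  have h1 : ((N.choose (k + 1) : ℕ) : ℚ) * (k + 1) = N.choose k * ((N : ℚ) - k) := by
    by_cases h : k ≤ N
    · have := Nat.choose_succ_right_eq N k
      have := congrArg (fun z : ℕ => (z : ℚ)) this
      push_cast [Nat.cast_sub h] at this
      exact this
    · rw [Nat.choose_eq_zero_of_lt (by omega : N < k + 1), Nat.choose_eq_zero_of_lt (by omega : N < k)]; simp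
  have h2 : ((N : ℚ) + k + 1) * ((N + k).choose k : ℕ) = ((N + (k + 1)).choose (k + 1) : ℕ) * (k + 1) := by
    exact_mod_cast Nat.add_one_mul_choose_eq (N + k) k
  rw [cL, cL]
  push_cast
  rw [pow_succ]
  linear_combination (-1) ^ k * (-1) * ((k : ℚ) + 1) * ((N + (k + 1)).choose (k + 1) : ℕ) * h1
    + (-1) ^ k * N.choose k * ((N : ℚ) - k) * h2

theorem cL_zero {N k : ℕ} (h : N < k) : cL N k = 0 := by
  rw [cL, Nat.choose_eq_zero_of_lt h]; simp

/-- Legendre polynomial -/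
noncomputable def LL (N : ℕ) : ℤ[X] := ∑ k ∈ Finset.range (N + 1), C (cL N k) * X ^ k
/-- Clausen polynomial -/
noncomputable def QQ (N : ℕ) : ℤ[X] := ∑ k ∈ Finset.range (N + 1), C (cL N k * (Nat.choose (2 * k) k : ℕ)) * (X - X ^ 2) ^ k

/-- `X - X^2` -/
noncomputable def pw : ℚ[X] := X - X ^ 2

theorem pw_mul_coeff (y : ℚ[X]) (n : ℕ) : (pw * y).coeff (n + 2) = y.coeff (n + 1) - y.coeff n := by
  rw [pw, sub_mul, coeff_sub, coeff_X_mul, coeff_X_pow_mul]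
theorem pw_mul_coeff_one (y : ℚ[X]) : (pw * y).coeff 1 = y.coeff 0 := by
  rw [pw, show (X - X ^ 2 : ℚ[X]) * y = X * ((1 - X) * y) by ring, coeff_X_mul]
  simp [sub_mul]
theorem pw_mul_coeff_zero (y : ℚ[X]) : (pw * y).coeff 0 = 0 := by
  rw [pw, show (X - X ^ 2 : ℚ[X]) * y = X * ((1 - X) * y) by ring, coeff_X_mul_zero]

theorem pwd_coeff (y : ℚ[X]) (n : ℕ) : (pw * derivative y).coeff (n + 1) = (n + 1) * y.coeff (n + 1) - n * y.coeff n := by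
  cases n with
  | zero => rw [zero_add, pw_mul_coeff_one, coeff_derivative]; simp
  | succ n => rw [pw_mul_coeff, coeff_derivative, coeff_derivative]; push_cast; ring

theorem dpd_coeff (y : ℚ[X]) (n : ℕ) : (derivative (pw * derivative y)).coeff n =
    (n + 1) * ((n + 1) * y.coeff (n + 1) - n * y.coeff n) := by
  rw [coeff_derivative, pwd_coeff]; ring

/-- third order operator -/
noncomputable def Op (l : ℚ) (y : ℚ[X]) : ℚ[X] :=
  derivative (pw * (derivative (pw * derivative y) + C (2 * l) * y)) + C (2 * l) * (pw * derivative y)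

theorem Op_add (l : ℚ) (y z : ℚ[X]) : Op l (y + z) = Op l y + Op l z := by
  simp only [Op, map_add, mul_add]; ring
theorem Op_zero (l : ℚ) : Op l 0 = 0 := by simp [Op]
theorem Op_C (l a : ℚ) (y : ℚ[X]) : Op l (C a * y) = C a * Op l y := by
  have d : ∀ z : ℚ[X], derivative (C a * z) = C a * derivative z := fun z => derivative_C_mul a z
  have e1 : pw * derivative (C a * y) = C a * (pw * derivative y) := by rw [d]; ring
  simp only [Op]
  rw [e1, d, show pw * (C a * derivative (pw * derivative y) + C (2 * l) * (C a * y)) =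
    C a * (pw * (derivative (pw * derivative y) + C (2 * l) * y)) by ring, d]
  ring
theorem Op_sub (l : ℚ) (y z : ℚ[X]) : Op l (y - z) = Op l y - Op l z := by
  have := Op_C l (-1) z
  rw [sub_eq_add_neg, Op_add, show -z = C (-1) * z by simp, this]; simp [sub_eq_add_neg]
theorem Op_sum (l : ℚ) (s : Finset ℕ) (y : ℕ → ℚ[X]) : Op l (∑ i ∈ s, y i) = ∑ i ∈ s, Op l (y i) := by
  classical
  induction s using Finset.induction_on with
  | empty => simp [Op_zero]
  | insert a s ha ih => rw [Finset.sum_insert ha, Finset.sum_insert ha, Op_add, ih]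

theorem Op_unique {l : ℚ} {y : ℚ[X]} (h : Op l y = 0) (h0 : y.coeff 0 = 0) : y = 0 := by
  have key : ∀ n, y.coeff n = 0 ∧ y.coeff (n + 1) = 0 := by
    intro n
    induction n with
    | zero =>
      refine ⟨h0, ?_⟩
      have := congrArg (fun q : ℚ[X] => q.coeff 0) h
      simp only [Op] at this
      rw [coeff_add, coeff_derivative, pw_mul_coeff_one, coeff_add, dpd_coeff, coeff_C_mul, coeff_C_mul, pw_mul_coeff_zero, h0] at this
      simpa using this
    | succ n ih =>
      refine ⟨ih.2, ?_⟩
      have := congrArg (fun q : ℚ[X] => q.coeff (n + 1)) h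
      simp only [Op] at this
      rw [coeff_add, coeff_derivative, pw_mul_coeff, coeff_add, coeff_add, dpd_coeff, dpd_coeff, coeff_C_mul, coeff_C_mul, coeff_C_mul,
        pwd_coeff, ih.1, ih.2] at this
      push_cast at this
      have h1 : ((n : ℚ) + 1 + 1) ^ 3 * y.coeff (n + 1 + 1) = 0 := by
        rw [coeff_zero] at this
        linear_combination this
      exact (mul_eq_zero.1 h1).resolve_left (by positivity)
  ext n
  rw [(key n).1, coeff_zero]

theorem LL_coeff (N n : ℕ) : ((LL N).map (Int.castRingHom ℚ)).coeff n = cL N n := by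
  rw [coeff_map, LL, finsetSum_coeff]
  simp only [coeff_C_mul, coeff_X_pow, mul_ite, mul_one, mul_zero]
  rw [Finset.sum_ite_eq]
  split_ifs with h
  · rfl
  · rw [cL_zero (by rw [Finset.mem_range] at h; omega)]; simp

theorem LL_ode (N : ℕ) : derivative (pw * derivative ((LL N).map (Int.castRingHom ℚ))) =
    - (C ((N : ℚ) * (N + 1)) * (LL N).map (Int.castRingHom ℚ)) := by
  ext n
  rw [dpd_coeff, coeff_neg, coeff_C_mul, LL_coeff, LL_coeff]
  linear_combination cL_rec N n

theorem Op_LL (N : ℕ) : Op ((N : ℚ) * (N + 1)) (((LL N).map (Int.castRingHom ℚ)) ^ 2) = 0 := by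
  have h := LL_ode N
  set L := (LL N).map (Int.castRingHom ℚ) with hL
  set l := (N : ℚ) * (N + 1) with hl
  have e1 : pw * derivative (L ^ 2) = 2 * (L * (pw * derivative L)) := by
    rw [derivative_sq]; simp only [map_ofNat]; ring
  have c2 : C (2 * l) = 2 * C l := by rw [C_mul]; rfl
  have d2 : ∀ z : ℚ[X], derivative (2 * z) = 2 * derivative z := fun z => by
    have := derivative_C_mul (2 : ℚ) z
    rwa [show (C 2 : ℚ[X]) = 2 from rfl] at this
  have e4 : derivative (L * (pw * derivative L)) = derivative L * (pw * derivative L) + L * -(C l * L) := by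
    rw [derivative_mul, h]
  simp only [Op]
  rw [e1, d2, e4, c2, show pw * (2 * (derivative L * (pw * derivative L) + L * -(C l * L)) + 2 * C l * L ^ 2) =
    2 * ((pw * derivative L) * (pw * derivative L)) by ring, d2, derivative_mul, h]
  ring

theorem Op_pow (l : ℚ) (k : ℕ) : Op l (pw ^ k) = (1 - 2 * X) * (C ((k : ℚ) ^ 3) * pw ^ (k - 1)
    + C (2 * (2 * k + 1) * (l - k * (k + 1))) * pw ^ k) := by
  have dw : derivative pw = 1 - 2 * X := by rw [pw]; simp [derivative_X_pow, show (C 2 : ℚ[X]) = 2 from rfl] <;> norm_num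
  have dq : derivative (1 - 2 * X : ℚ[X]) = -2 := by
    have := derivative_C_mul (2 : ℚ) X
    rw [show (C 2 : ℚ[X]) = 2 from rfl] at this
    rw [derivative_sub, this]; simp
  have hq2 : (1 - 2 * X : ℚ[X]) ^ 2 = 1 - 4 * pw := by rw [pw]; ring
  generalize (1 - 2 * X : ℚ[X]) = q at *
  cases k with
  | zero =>
    simp only [Op, pow_zero, derivative_one, mul_zero, map_zero, zero_add, add_zero, mul_one, derivative_mul, derivative_C, zero_mul,
      Nat.cast_zero, dw]
    simp
  | succ k =>
    have cc : ((k + 1 : ℕ) : ℚ[X]) = C ((k : ℚ) + 1) := by simp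
    have e1 : pw * derivative (pw ^ (k + 1)) = C ((k : ℚ) + 1) * (pw ^ (k + 1) * q) := by
      rw [derivative_pow_succ, dw]; simp; ring
    have e2 : derivative (pw ^ (k + 1)) = C ((k : ℚ) + 1) * (pw ^ k * q) := by
      rw [derivative_pow_succ, dw]; simp; ring
    have e3 : derivative (pw ^ (k + 2)) = C ((k : ℚ) + 2) * (pw ^ (k + 1) * q) := by
      rw [derivative_pow_succ, dw]; simp [show (C 2 : ℚ[X]) = 2 from rfl]; ring
    have e5 : derivative (pw ^ (k + 1) * q) = C ((k : ℚ) + 1) * (pw ^ k * q) * q + pw ^ (k + 1) * -2 := by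
      rw [derivative_mul, e2, dq]
    simp only [Op]
    rw [e1, derivative_C_mul, e5]
    rw [show pw * (C ((k : ℚ) + 1) * (C ((k : ℚ) + 1) * (pw ^ k * q) * q + pw ^ (k + 1) * -2) + C (2 * l) * pw ^ (k + 1)) =
      C (((k : ℚ) + 1) ^ 2) * pw ^ (k + 1) * q ^ 2 + C (2 * l - 2 * (k + 1)) * pw ^ (k + 2) by
        simp only [map_sub, map_add, map_mul, map_pow, map_ofNat, map_one]; ring, hq2,
      show C (((k : ℚ) + 1) ^ 2) * pw ^ (k + 1) * (1 - 4 * pw) + C (2 * l - 2 * (k + 1)) * pw ^ (k + 2) =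
       C (((k : ℚ) + 1) ^ 2) * pw ^ (k + 1) + C (2 * l - 2 * (k + 1) - 4 * (k + 1) ^ 2) * pw ^ (k + 2) by
        simp only [map_sub, map_add, map_mul, map_pow, map_ofNat, map_one]; ring,
      derivative_add, derivative_C_mul, derivative_C_mul, e2, e3, Nat.add_sub_cancel]
    push_cast
    simp only [map_sub, map_add, map_mul, map_pow, map_ofNat, map_one]
    ring

theorem Op_QQ (N : ℕ) : Op ((N : ℚ) * (N + 1)) ((QQ N).map (Int.castRingHom ℚ)) = 0 := by
  set l := (N : ℚ) * (N + 1) with hl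
  have e1 : (QQ N).map (Int.castRingHom ℚ) = ∑ k ∈ Finset.range (N + 1), C ((cL N k : ℚ) * (Nat.choose (2 * k) k : ℕ)) * pw ^ k := by
    rw [QQ, Polynomial.map_sum]
    refine Finset.sum_congr rfl fun k _ => ?_
    rw [pw]; simp
  set t : ℕ → ℚ[X] := fun k => C ((cL N k : ℚ) * (Nat.choose (2 * k) k : ℕ) * (k : ℚ) ^ 3) * pw ^ (k - 1) with ht
  have hrec : ∀ k, (cL N k : ℚ) * (Nat.choose (2 * k) k : ℕ) * (2 * (2 * k + 1) * (l - k * (k + 1))) =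
      - ((cL N (k + 1) : ℚ) * (Nat.choose (2 * (k + 1)) (k + 1) : ℕ) * ((k : ℚ) + 1) ^ 3) := by
    intro k
    have h1 := cL_rec N k
    have h2 : ((k : ℚ) + 1) * (Nat.choose (2 * (k + 1)) (k + 1) : ℕ) = 2 * (2 * k + 1) * (Nat.choose (2 * k) k : ℕ) := by
      exact_mod_cast Nat.succ_mul_centralBinom_succ k
    rw [← hl] at h1
    linear_combination 2 * (2 * (k : ℚ) + 1) * (Nat.choose (2 * k) k : ℕ) * h1 + (((k : ℚ) + 1) ^ 2) * (cL N (k + 1) : ℚ) * h2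
  have key : ∀ k ∈ Finset.range (N + 1), Op l (C ((cL N k : ℚ) * (Nat.choose (2 * k) k : ℕ)) * pw ^ k) = (1 - 2 * X) * (t k - t (k + 1)) := by
    intro k _
    rw [Op_C, Op_pow]
    simp only [ht, Nat.add_sub_cancel]
    have := congrArg (fun z => C z * pw ^ k) (hrec k)
    push_cast at this ⊢
    simp only [map_mul, map_neg] at this ⊢
    linear_combination (1 - 2 * X) * this
  rw [e1, Op_sum, Finset.sum_congr rfl key, ← Finset.mul_sum, Finset.sum_range_sub']
  simp [ht, cL_zero (Nat.lt_succ_self N)]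

theorem clausen (N : ℕ) : QQ N = LL N ^ 2 := by
  apply map_injective (Int.castRingHom ℚ) Int.cast_injective
  rw [Polynomial.map_pow]
  apply sub_eq_zero.1
  apply Op_unique (l := (N : ℚ) * (N + 1))
  · rw [Op_sub, Op_QQ, Op_LL, sub_zero]
  · rw [coeff_sub, sq, mul_coeff_zero, LL_coeff, coeff_map, QQ, finsetSum_coeff, Finset.sum_range_succ', Finset.sum_eq_zero]
    · simp [cL]
    · intro k _
      rw [coeff_C_mul, show (X - X ^ 2 : ℤ[X]) ^ (k + 1) = X * ((1 - X) ^ (k + 1) * X ^ k) by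
        rw [show (X - X ^ 2 : ℤ[X]) = X * (1 - X) by ring, mul_pow]; ring, coeff_X_mul_zero, mul_zero]

theorem clausen_eval {R : Type*} [CommRing R] (N : ℕ) {φ : R} (hφ : φ ^ 2 = φ + 1) :
    ∑ k ∈ Finset.range (N + 1), (cL N k : R) * (Nat.choose (2 * k) k : ℕ) * (-1) ^ k =
      (∑ k ∈ Finset.range (N + 1), (cL N k : R) * φ ^ k) ^ 2 := by
  have h := congrArg (eval₂ (Int.castRingHom R) φ) (clausen N)
  rw [eval₂_pow, QQ, LL, eval₂_finsetSum, eval₂_finsetSum] at h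
  simp only [eval₂_mul, eval₂_C, eval₂_pow, eval₂_sub, eval₂_X, hφ] at h
  simpa using h

end Clausen


section ModP
open Polynomial
variable {p : ℕ} [hpF : Fact p.Prime]

theorem zcast_ne {j : ℕ} (h0 : 0 < j) (h : j < p) : (j : ZMod p) ≠ 0 := by
  intro h1
  rw [ZMod.natCast_eq_zero_iff] at h1
  exact absurd (Nat.le_of_dvd h0 h1) (by omega)

theorem choose_neg (r : ℕ) : ∀ s, s + r < p → (Nat.choose (p - 1 - r) s : ZMod p) * (-1) ^ s = (Nat.choose (s + r) s : ZMod p) := by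
  intro s
  induction s with
  | zero => intro _; simp
  | succ s ih =>
    intro h
    have ih := ih (by omega)
    have h1 := congrArg (fun z : ℕ => (z : ZMod p)) (Nat.choose_succ_right_eq (p - 1 - r) s)
    have h2 := congrArg (fun z : ℕ => (z : ZMod p)) (Nat.add_one_mul_choose_eq (s + r) s)
    have h3 : ((p - 1 - r - s : ℕ) : ZMod p) = -(1 + r + s) := by
      have : p - 1 - r - s + (1 + r + s) = p := by omega
      have := congrArg (fun z : ℕ => (z : ZMod p)) this
      push_cast at this
      rw [CharP.cast_eq_zero (ZMod p) p] at this
      linear_combination this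
    push_cast at h1 h2
    rw [h3] at h1
    have hs : ((s : ZMod p) + 1) ≠ 0 := by
      have := zcast_ne (p := p) (j := s + 1) (by omega) (by omega)
      exact_mod_cast this
    apply mul_right_cancel₀ hs
    rw [show s + 1 + r = s + r + 1 by ring, ← h2, ← ih, pow_succ]
    linear_combination (-1) ^ s * (-1) * h1

theorem choose_half {m : ℕ} (hm : p = 2 * m + 1) : ∀ j, j ≤ m → (Nat.choose m j : ZMod p) * 4 ^ j * (-1) ^ j = (Nat.choose (2 * j) j : ZMod p) := by
  intro j
  induction j with
  | zero => intro _; simp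
  | succ j ih =>
    intro h
    have ih := ih (by omega)
    have h1 := congrArg (fun z : ℕ => (z : ZMod p)) (Nat.choose_succ_right_eq m j)
    have h2 := congrArg (fun z : ℕ => (z : ZMod p)) (Nat.succ_mul_centralBinom_succ j)
    simp only [Nat.centralBinom] at h2
    have h3 : 2 * ((m - j : ℕ) : ZMod p) = -(1 + 2 * j) := by
      have : 2 * (m - j) + (1 + 2 * j) = p := by omega
      have := congrArg (fun z : ℕ => (z : ZMod p)) this
      push_cast at this
      rw [CharP.cast_eq_zero (ZMod p) p] at this
      linear_combination this
    push_cast at h1 h2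
    have hs : ((j : ZMod p) + 1) ≠ 0 := by
      have := zcast_ne (p := p) (j := j + 1) (by omega) (by omega)
      exact_mod_cast this
    apply mul_left_cancel₀ hs
    rw [h2, ← ih, pow_succ, pow_succ]
    linear_combination (-1) ^ j * 4 ^ j * (-4) * h1 + (-2) * (-1) ^ j * 4 ^ j * (m.choose j : ZMod p) * h3

theorem tri_rec (k : ℕ) : (k + 1) ^ 2 * (Nat.choose (2 * (k + 1)) (k + 1) * Nat.choose (3 * (k + 1)) (k + 1)) =
    3 * (3 * k + 1) * (3 * k + 2) * (Nat.choose (2 * k) k * Nat.choose (3 * k) k) := by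
  have f : ∀ k : ℕ, Nat.choose (2 * k) k * Nat.choose (3 * k) k * (k.factorial ^ 3) = (3 * k).factorial := by
    intro k
    have h1 := Nat.choose_mul_factorial_mul_factorial (show k ≤ 2 * k by omega)
    have h2 := Nat.choose_mul_factorial_mul_factorial (show k ≤ 3 * k by omega)
    rw [show 2 * k - k = k by omega] at h1
    rw [show 3 * k - k = 2 * k by omega, ← h1] at h2
    rw [← h2]; ring
  have a := f k
  have b := f (k + 1)
  rw [show 3 * (k + 1) = 3 * k + 1 + 1 + 1 by ring, Nat.factorial_succ (3 * k + 1 + 1), Nat.factorial_succ (3 * k + 1), Nat.factorial_succ (3 * k), ← a, Nat.factorial_succ] at b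
  have hk : 0 < (k + 1) * k.factorial ^ 3 := by positivity
  apply Nat.eq_of_mul_eq_mul_right hk
  rw [show 3 * (k + 1) = 3 * k + 1 + 1 + 1 by ring]
  linear_combination b

theorem tri_cL (hp3 : 3 < p) : ∀ k, k ≤ p / 3 → (Nat.choose (2 * k) k : ZMod p) * (Nat.choose (3 * k) k : ZMod p) = 27 ^ k * (cL (p / 3) k : ZMod p) := by
  have hN : (9 : ZMod p) * ((p / 3 : ℕ) : ZMod p) * (((p / 3 : ℕ) : ZMod p) + 1) = -2 := by
    have h0 : p % 3 ≠ 0 := by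
      intro h
      have := (Nat.prime_dvd_prime_iff_eq Nat.prime_three hpF.out).1 (Nat.dvd_of_mod_eq_zero h)
      omega
    have h1 : p % 3 = 1 ∨ p % 3 = 2 := by omega
    rcases h1 with h | h
    · have : 3 * (p / 3) + 1 = p := by omega
      have := congrArg (fun z : ℕ => (z : ZMod p)) this
      push_cast at this
      rw [CharP.cast_eq_zero (ZMod p) p] at this
      linear_combination (3 * ((p / 3 : ℕ) : ZMod p) + 2) * this
    · have : 3 * (p / 3) + 2 = p := by omega
      have := congrArg (fun z : ℕ => (z : ZMod p)) this
      push_cast at this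
      rw [CharP.cast_eq_zero (ZMod p) p] at this
      linear_combination (3 * ((p / 3 : ℕ) : ZMod p) + 1) * this
  intro k
  induction k with
  | zero => intro _; simp [cL]
  | succ k ih =>
    intro h
    have ih := ih (by omega)
    have h1 := congrArg (fun z : ℕ => (z : ZMod p)) (tri_rec k)
    have h2 : ((k : ℤ) + 1) ^ 2 * cL (p / 3) (k + 1) = -(((p / 3 : ℕ) : ℤ) * ((p / 3 : ℕ) + 1) - k * (k + 1)) * cL (p / 3) k := by
      have := cL_rec (p / 3) k
      exact_mod_cast this
    have h2 := congrArg (fun z : ℤ => (z : ZMod p)) h2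
    have hkp : k + 1 < p := by omega
    generalize p / 3 = N at *
    push_cast at h1 h2
    have hs : ((k : ZMod p) + 1) ≠ 0 := by
      have := zcast_ne (p := p) (j := k + 1) (by omega) hkp
      exact_mod_cast this
    apply mul_left_cancel₀ (pow_ne_zero 2 hs)
    rw [h1, pow_succ]
    linear_combination 3 * (3 * (k : ZMod p) + 1) * (3 * k + 2) * ih - 27 ^ k * 27 * h2 + 27 ^ k * 3 * (cL N k : ZMod p) * hN

theorem inner_sumA (hp3 : 3 < p) (k : ℕ) (hk : 3 * k < p) :
    (∑ n ∈ Finset.range p, (Nat.choose (n + k) (3 * k) : ZMod p) * 4 ^ (n - 2 * k)) * (-27) ^ k = 1 := by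
  have h3 : (-3 : ZMod p) ≠ 0 := by
    have := zcast_ne (p := p) (j := 3) (by omega) (by omega)
    intro h
    apply this
    push_cast
    linear_combination -h
  have e : p = 2 * k + ((p - 3 * k) + k) := by omega
  have e1 : (∑ n ∈ Finset.range p, (Nat.choose (n + k) (3 * k) : ZMod p) * 4 ^ (n - 2 * k)) =
      ∑ s ∈ Finset.range (p - 3 * k), (Nat.choose (s + 3 * k) s : ZMod p) * 4 ^ s := by
    rw [show Finset.range p = Finset.range (2 * k + ((p - 3 * k) + k)) from congrArg Finset.range e]
    rw [Finset.sum_range_add, Finset.sum_range_add, Finset.sum_eq_zero, zero_add]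
    · conv_rhs => rw [← add_zero (∑ s ∈ Finset.range (p - 3 * k), _)]
      congr 1
      · refine Finset.sum_congr rfl fun s _ => ?_
        rw [show 2 * k + s + k = s + 3 * k by ring, show 2 * k + s - 2 * k = s by omega, Nat.choose_symm_add]
      · refine Finset.sum_eq_zero fun i hi => ?_
        rw [Finset.mem_range] at hi
        have := Nat.Prime.dvd_choose_add hpF.out (a := 3 * k) (b := p - 3 * k + i) hk (by omega) (by omega)
        rw [← ZMod.natCast_eq_zero_iff] at this
        rw [show 2 * k + (p - 3 * k + i) + k = 3 * k + (p - 3 * k + i) by ring, this, zero_mul]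
    · intro n hn
      rw [Finset.mem_range] at hn
      rw [Nat.choose_eq_zero_of_lt (by omega)]; simp
  have e2 : ∑ s ∈ Finset.range (p - 3 * k), (Nat.choose (s + 3 * k) s : ZMod p) * 4 ^ s = (-3) ^ (p - 1 - 3 * k) := by
    rw [show (-3 : ZMod p) = -4 + 1 by norm_num, add_pow, show p - 1 - 3 * k + 1 = p - 3 * k by omega]
    refine Finset.sum_congr rfl fun s hs => ?_
    rw [Finset.mem_range] at hs
    rw [← choose_neg (3 * k) s (by omega), one_pow, neg_pow (4 : ZMod p)]
    ring
  rw [e1, e2, show (-27 : ZMod p) = (-3) ^ 3 by norm_num, ← pow_mul, ← pow_add, show p - 1 - 3 * k + 3 * k = p - 1 by omega]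
  exact ZMod.pow_card_sub_one_eq_one h3

theorem w_zero (k : ℕ) (h1 : p ≤ 3 * k) (h2 : k < p) : (Nat.choose (2 * k) k : ZMod p) ^ 2 * (Nat.choose (3 * k) k : ZMod p) = 0 := by
  by_cases h : p ≤ 2 * k
  · have := Nat.Prime.dvd_choose_add hpF.out (a := k) (b := k) h2 h2 (by omega)
    rw [← ZMod.natCast_eq_zero_iff, ← two_mul] at this
    rw [this]; simp
  · have := Nat.Prime.dvd_choose_add hpF.out (a := k) (b := 2 * k) h2 (by omega) (by omega)
    rw [← ZMod.natCast_eq_zero_iff, show k + 2 * k = 3 * k by ring] at this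
    rw [this]; simp

theorem sum_A_eq (hp3 : 3 < p) {φ : ZMod p} (hφ : φ ^ 2 = φ + 1) :
    ∑ n ∈ Finset.range p, (A n : ZMod p) = (∑ k ∈ Finset.range (p / 3 + 1), (cL (p / 3) k : ZMod p) * φ ^ k) ^ 2 := by
  rw [← clausen_eval _ hφ]
  have e1 : ∀ n ∈ Finset.range p, (A n : ZMod p) = ∑ k ∈ Finset.range p,
      ((Nat.choose (2 * k) k : ZMod p) ^ 2 * (Nat.choose (3 * k) k : ZMod p)) * ((Nat.choose (n + k) (3 * k) : ZMod p) * 4 ^ (n - 2 * k)) := by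
    intro n hn
    rw [Finset.mem_range] at hn
    rw [A_eq_DD, DD]
    push_cast
    have hs : Finset.range (n + 1) ⊆ Finset.range p := Finset.range_subset_range.2 (by omega)
    rw [← Finset.sum_subset hs]
    · refine Finset.sum_congr rfl fun k _ => by ring
    · intro k _ hk
      rw [Finset.mem_range] at hk
      rw [Nat.choose_eq_zero_of_lt (by omega : n + k < 3 * k)]; simp
  rw [Finset.sum_congr rfl e1, Finset.sum_comm]
  have hs : Finset.range (p / 3 + 1) ⊆ Finset.range p := Finset.range_subset_range.2 (by omega)
  have h0 : p % 3 ≠ 0 := by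
    intro h
    have := (Nat.prime_dvd_prime_iff_eq Nat.prime_three hpF.out).1 (Nat.dvd_of_mod_eq_zero h)
    omega
  rw [← Finset.sum_subset hs]
  · refine Finset.sum_congr rfl fun k hk => ?_
    rw [Finset.mem_range] at hk
    have h1 := tri_cL hp3 k (by omega)
    have h2 := inner_sumA hp3 k (by omega)
    rw [← Finset.mul_sum]
    have h3 : (27 : ZMod p) ^ k = (-27) ^ k * (-1) ^ k := by rw [← mul_pow]; norm_num
    rw [h3] at h1
    generalize (∑ n ∈ Finset.range p, (Nat.choose (n + k) (3 * k) : ZMod p) * 4 ^ (n - 2 * k)) = I at *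
    linear_combination (Nat.choose (2 * k) k : ZMod p) * I * h1 + (Nat.choose (2 * k) k : ZMod p) * (-1) ^ k * (cL (p / 3) k : ZMod p) * h2
  · intro k hk1 hk
    rw [Finset.mem_range] at hk hk1
    rw [← Finset.mul_sum, w_zero k (by omega) hk1, zero_mul]

theorem sum_gz_eq (hp3 : 3 < p) {φ : ZMod p} (hφ : φ ^ 2 = φ + 1) {m : ℕ} (hm : p = 2 * m + 1) :
    ∑ a : ZMod p, gz (cA φ) (cB φ) a ^ m = - ∑ k ∈ Finset.range (p / 3 + 1), (cL (p / 3) k : ZMod p) * φ ^ k := by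
  have h3 : (3 : ZMod p) ≠ 0 := by exact_mod_cast zcast_ne (p := p) (j := 3) (by omega) (by omega)
  have h2 : (2 : ZMod p) ≠ 0 := by exact_mod_cast zcast_ne (p := p) (j := 2) (by omega) (by omega)
  have h4 : (4 : ZMod p) ≠ 0 := by
    rw [show (4 : ZMod p) = 2 * 2 by norm_num]; exact mul_ne_zero h2 h2
  have h27 : (27 : ZMod p) ≠ 0 := by
    rw [show (27 : ZMod p) = 3 ^ 3 by norm_num]; exact pow_ne_zero 3 h3
  have h0 : p % 3 ≠ 0 := by
    intro h
    have := (Nat.prime_dvd_prime_iff_eq Nat.prime_three hpF.out).1 (Nat.dvd_of_mod_eq_zero h)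
    omega
  set q : (ZMod p)[X] := (C (4 / 27) * X ^ 3 + (X + C φ) ^ 2) ^ m with hq
  have e1 : ∑ a : ZMod p, gz (cA φ) (cB φ) a ^ m = ∑ u : ZMod p, q.eval u := by
    symm
    have hb : Function.Bijective (fun u : ZMod p => 4 / 3 * u + 3) := by
      apply Finite.injective_iff_bijective.1
      intro a b hab
      have hab : 4 / 3 * a + 3 = 4 / 3 * b + 3 := hab
      exact mul_left_cancel₀ (div_ne_zero h4 h3) (add_right_cancel hab)
    refine Fintype.sum_bijective _ hb _ _ fun u => ?_
    have h16 : (16 : ZMod p) ^ m = 1 := by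
      rw [show (16 : ZMod p) = 4 ^ 2 by norm_num, ← pow_mul, show 2 * m = p - 1 by omega]
      exact ZMod.pow_card_sub_one_eq_one h4
    have : gz (cA φ) (cB φ) (4 / 3 * u + 3) = 16 * (4 / 27 * u ^ 3 + (u + φ) ^ 2) := by
      rw [gz, cA, cB]
      field_simp
      linear_combination (-11664) * hφ
    rw [this, mul_pow, h16, one_mul, hq]
    simp
  have hdeg : q.natDegree < 2 * (p - 1) := by
    have : q.natDegree ≤ m * 3 := by
      rw [hq]
      refine natDegree_pow_le_of_le m ?_
      compute_degree
    omega
  rw [e1, sum_eval_ZMod q hdeg]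
  congr 1
  rw [hq, add_pow, finsetSum_coeff]
  have hs : Finset.range (p / 3 + 1) ⊆ Finset.range (m + 1) := Finset.range_subset_range.2 (by omega)
  have e2 : ∀ j, j ≤ m → ((C (4 / 27) * X ^ 3) ^ j * ((X + C φ) ^ 2) ^ (m - j) * (m.choose j : (ZMod p)[X])).coeff (p - 1) =
      if 3 * j ≤ 2 * m then (4 / 27) ^ j * (m.choose j : ZMod p) * (φ ^ j * ((2 * m - 2 * j).choose j : ZMod p)) else 0 := by
    intro j hj
    rw [show (C (4 / 27) * X ^ 3) ^ j * ((X + C φ) ^ 2) ^ (m - j) * (m.choose j : (ZMod p)[X]) =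
      C ((4 / 27) ^ j * (m.choose j : ZMod p)) * ((X + C φ) ^ (2 * (m - j)) * X ^ (3 * j)) by
        rw [mul_pow, ← pow_mul, ← pow_mul, C_mul, C_pow]; simp only [map_natCast]; ring]
    rw [coeff_C_mul, coeff_mul_X_pow', show p - 1 = 2 * m by omega]
    split_ifs with h
    · rw [coeff_X_add_C_pow, show 2 * (m - j) - (2 * m - 3 * j) = j by omega, show 2 * m - 3 * j = 2 * (m - j) - j by omega,
        Nat.choose_symm (by omega), Nat.mul_sub]
    · simp
  rw [Finset.sum_congr rfl fun j hj => e2 j (by rw [Finset.mem_range] at hj; omega), ← Finset.sum_subset hs]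
  · refine Finset.sum_congr rfl fun j hj => ?_
    rw [Finset.mem_range] at hj
    rw [if_pos (by omega)]
    have a1 := choose_half hm j (by omega)
    have a2 := choose_neg (p := p) (2 * j) j (by omega)
    have a3 := tri_cL hp3 j (by omega)
    rw [show j + 2 * j = 3 * j by ring, show p - 1 - 2 * j = 2 * m - 2 * j by omega] at a2
    rw [← a1, ← a2] at a3
    have a4 : ((-1 : ZMod p) ^ j) * (-1) ^ j = 1 := by rw [← mul_pow]; simp
    have h27j := pow_ne_zero j h27
    rw [div_pow]
    field_simp
    linear_combination φ ^ j * a3 - (4 ^ j * (m.choose j : ZMod p) * (φ ^ j * ((2 * m - 2 * j).choose j : ZMod p))) * a4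
  · intro j _ hj
    rw [Finset.mem_range] at hj
    rw [if_neg (by omega)]

end ModP


section Final
variable {p : ℕ} [hpF : Fact p.Prime]

theorem p_ge_eleven (hp : p % 5 = 1 ∨ p % 5 = 4) : 11 ≤ p := by
  by_contra h
  have h1 := hpF.out
  have : p < 11 := by omega
  interval_cases p <;> first | omega | (revert h1; norm_num)

theorem five_sq (hp : p % 5 = 1 ∨ p % 5 = 4) : IsSquare (5 : ZMod p) := by
  have hp11 := p_ge_eleven hp
  have : Fact (Nat.Prime 5) := ⟨by norm_num⟩
  have h := ZMod.exists_sq_eq_prime_iff_of_mod_four_eq_one (p := 5) (q := p) (by norm_num) (by omega)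
  have h1 : IsSquare ((p : ℕ) : ZMod 5) := by
    rw [← ZMod.natCast_mod]
    rcases hp with h | h
    · rw [h]; exact ⟨1, by simp⟩
    · rw [h]; exact ⟨2, by norm_num⟩
  exact_mod_cast h.1 h1

theorem exists_phi (hp : p % 5 = 1 ∨ p % 5 = 4) : ∃ φ : ZMod p, φ ^ 2 = φ + 1 := by
  have hp11 := p_ge_eleven hp
  obtain ⟨r, hr⟩ := five_sq hp
  have h2 : (2 : ZMod p) ≠ 0 := by exact_mod_cast zcast_ne (p := p) (j := 2) (by omega) (by omega)
  refine ⟨(1 + r) / 2, ?_⟩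
  field_simp
  linear_combination -hr

theorem neg_three_sq (h : p % 3 = 1) : IsSquare (-3 : ZMod p) := by
  have : Fact (Nat.Prime 3) := ⟨by norm_num⟩
  have hd : 3 ∣ Fintype.card (ZMod p)ˣ := by
    rw [ZMod.card_units]; omega
  obtain ⟨w, hw⟩ := exists_prime_orderOf_dvd_card 3 hd
  have h3 : (w : ZMod p) ^ 3 = 1 := by
    have := pow_orderOf_eq_one w
    rw [hw] at this
    rw [← Units.val_pow_eq_pow_val, this, Units.val_one]
  have h1 : (w : ZMod p) - 1 ≠ 0 := by
    intro h
    have : w = 1 := by ext; simpa [sub_eq_zero] using h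
    rw [this, orderOf_one] at hw
    omega
  have h4 : (w : ZMod p) ^ 2 + w + 1 = 0 := by
    apply (mul_eq_zero.1 (show ((w : ZMod p) - 1) * ((w : ZMod p) ^ 2 + w + 1) = 0 by linear_combination h3)).resolve_left h1
  exact ⟨2 * w + 1, by linear_combination (-4) * h4⟩

theorem thue (r : ZMod p) : ∃ a b : ℤ, (a : ZMod p) = r * b ∧ a ^ 2 < p ∧ b ^ 2 < p ∧ ¬ (a = 0 ∧ b = 0) := by
  set s := Nat.sqrt p with hs
  have hs1 : s * s < p := by
    have h1 := Nat.sqrt_le p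
    rcases h1.lt_or_eq with h | h
    · exact h
    · exfalso
      have h2 := hpF.out
      rw [← h] at h2
      have := Nat.not_prime_mul (a := s) (b := s) (by rintro h; rw [← hs, h] at h2; exact absurd h2 (by norm_num))
        (by rintro h; rw [← hs, h] at h2; exact absurd h2 (by norm_num))
      exact this h2
  have hs2 : p < (s + 1) * (s + 1) := Nat.lt_succ_sqrt p
  have hc : (Finset.univ : Finset (ZMod p)).card < (Finset.range (s + 1) ×ˢ Finset.range (s + 1)).card := by
    rw [Finset.card_univ, ZMod.card, Finset.card_product, Finset.card_range]; exact hs2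
  obtain ⟨x, hx, y, hy, hne, he⟩ := Finset.exists_ne_map_eq_of_card_lt_of_maps_to hc
    (f := fun z : ℕ × ℕ => (z.1 : ZMod p) - r * z.2) (fun _ _ => Finset.mem_coe.2 (Finset.mem_univ _))
  rw [Finset.mem_product, Finset.mem_range, Finset.mem_range] at hx hy
  have hs3 : (s : ℤ) * s < p := by exact_mod_cast hs1
  have hb : ∀ u v : ℕ, u < s + 1 → v < s + 1 → ((u : ℤ) - v) ^ 2 < p := by
    intro u v hu hv
    have h1 : (u : ℤ) ≤ s := by exact_mod_cast Nat.lt_succ_iff.1 hu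
    have h2 : (v : ℤ) ≤ s := by exact_mod_cast Nat.lt_succ_iff.1 hv
    have h3 : (0 : ℤ) ≤ u := by positivity
    have h4 : (0 : ℤ) ≤ v := by positivity
    nlinarith
  refine ⟨(x.1 : ℤ) - y.1, (x.2 : ℤ) - y.2, ?_, hb _ _ hx.1 hy.1, hb _ _ hx.2 hy.2, ?_⟩
  · push_cast
    linear_combination he
  · rintro ⟨h1, h2⟩
    apply hne
    ext <;> omega

theorem two_p_form {P u v : ℤ} (hP : P % 2 = 1) (h : 3 * u ^ 2 + 5 * v ^ 2 = 2 * P) : ∃ x y : ℤ, P = x ^ 2 + 15 * y ^ 2 := by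
  have hu : u % 4 = 0 ∨ u % 4 = 1 ∨ u % 4 = 2 ∨ u % 4 = 3 := by omega
  have hv : v % 4 = 0 ∨ v % 4 = 1 ∨ v % 4 = 2 ∨ v % 4 = 3 := by omega
  have h4 : (3 * u ^ 2 + 5 * v ^ 2) % 4 = 2 := by omega
  exfalso
  rcases hu with hu | hu | hu | hu <;> rcases hv with hv | hv | hv | hv <;>
    (revert h4; simp [Int.add_emod, Int.mul_emod, pow_two, hu, hv])

theorem form_of_k {P a b k : ℤ} (hP : P % 2 = 1) (hP15 : P % 15 = 1 ∨ P % 15 = 4) (hk0 : 0 < k) (hk : k < 16)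
    (h : a ^ 2 + 15 * b ^ 2 = k * P) : ∃ x y : ℤ, P = x ^ 2 + 15 * y ^ 2 := by
  have p3 : Prime (3 : ℤ) := by norm_num
  have p5 : Prime (5 : ℤ) := by norm_num
  have hk3 : k % 3 = 0 ∨ k % 3 = 1 := by
    have h1 : (k * P) % 3 = (a ^ 2) % 3 := by rw [← h]; omega
    have h2 : P % 3 = 1 := by omega
    have h3 : (a ^ 2) % 3 = 0 ∨ (a ^ 2) % 3 = 1 := by
      have : a % 3 = 0 ∨ a % 3 = 1 ∨ a % 3 = 2 := by omega
      rcases this with h | h | h <;> simp [pow_two, Int.mul_emod, h]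
    rw [Int.mul_emod, h2, mul_one] at h1
    omega
  have hk5 : k % 5 = 0 ∨ k % 5 = 1 ∨ k % 5 = 4 := by
    have h1 : (k * P) % 5 = (a ^ 2) % 5 := by rw [← h]; omega
    have h2 : P % 5 = 1 ∨ P % 5 = 4 := by omega
    have h3 : (a ^ 2) % 5 = 0 ∨ (a ^ 2) % 5 = 1 ∨ (a ^ 2) % 5 = 4 := by
      have : a % 5 = 0 ∨ a % 5 = 1 ∨ a % 5 = 2 ∨ a % 5 = 3 ∨ a % 5 = 4 := by omega
      rcases this with h | h | h | h | h <;> simp [pow_two, Int.mul_emod, h]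
    rcases h2 with h2 | h2 <;> rw [Int.mul_emod, h2] at h1 <;> omega
  have hkk : k = 1 ∨ k = 4 ∨ k = 6 ∨ k = 9 ∨ k = 10 ∨ k = 15 := by omega
  rcases hkk with rfl | rfl | rfl | rfl | rfl | rfl
  · exact ⟨a, b, by linarith⟩
  · have key : (2 : ℤ) ∣ a ∧ (2 : ℤ) ∣ b := by
      have h8 : (a ^ 2 + 15 * b ^ 2) % 8 = 4 := by omega
      have ha : a % 8 = 0 ∨ a % 8 = 1 ∨ a % 8 = 2 ∨ a % 8 = 3 ∨ a % 8 = 4 ∨ a % 8 = 5 ∨ a % 8 = 6 ∨ a % 8 = 7 := by omega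
      have hb : b % 8 = 0 ∨ b % 8 = 1 ∨ b % 8 = 2 ∨ b % 8 = 3 ∨ b % 8 = 4 ∨ b % 8 = 5 ∨ b % 8 = 6 ∨ b % 8 = 7 := by omega
      rcases ha with ha | ha | ha | ha | ha | ha | ha | ha <;> rcases hb with hb | hb | hb | hb | hb | hb | hb | hb <;>
        first
        | (exfalso; revert h8; simp [Int.add_emod, Int.mul_emod, pow_two, ha, hb]; done)
        | (constructor <;> omega)
    obtain ⟨⟨x, rfl⟩, ⟨y, rfl⟩⟩ := key
    exact ⟨x, y, by linarith⟩
  · obtain ⟨c, rfl⟩ : (3 : ℤ) ∣ a := p3.dvd_of_dvd_pow (n := 2) ⟨2 * P - 5 * b ^ 2, by linarith⟩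
    exact two_p_form hP (u := c) (v := b) (by linarith)
  · obtain ⟨c, rfl⟩ : (3 : ℤ) ∣ a := p3.dvd_of_dvd_pow (n := 2) ⟨3 * P - 5 * b ^ 2, by linarith⟩
    have : (3 : ℤ) ∣ 5 * b ^ 2 := ⟨P - c ^ 2, by linarith⟩
    obtain ⟨d, rfl⟩ : (3 : ℤ) ∣ b := by
      rcases p3.dvd_or_dvd this with h | h
      · exact absurd h (by norm_num)
      · exact p3.dvd_of_dvd_pow h
    exact ⟨c, d, by linarith⟩
  · obtain ⟨c, rfl⟩ : (5 : ℤ) ∣ a := p5.dvd_of_dvd_pow (n := 2) ⟨2 * P - 3 * b ^ 2, by linarith⟩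
    exact two_p_form hP (u := b) (v := c) (by linarith)
  · obtain ⟨c, rfl⟩ : (3 : ℤ) ∣ a := p3.dvd_of_dvd_pow (n := 2) ⟨5 * P - 5 * b ^ 2, by linarith⟩
    have : (5 : ℤ) ∣ 3 * c ^ 2 := ⟨P - b ^ 2, by linarith⟩
    obtain ⟨d, rfl⟩ : (5 : ℤ) ∣ c := by
      rcases p5.dvd_or_dvd this with h | h
      · exact absurd h (by norm_num)
      · exact p5.dvd_of_dvd_pow h
    exact ⟨b, d, by linarith⟩

theorem exists_form (h15 : p % 15 = 1 ∨ p % 15 = 4) : ∃ x y : ℤ, (p : ℤ) = x ^ 2 + 15 * y ^ 2 := by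
  have hp5 : p % 5 = 1 ∨ p % 5 = 4 := by omega
  have hp11 := p_ge_eleven hp5
  have hodd : p % 2 = 1 := by
    rcases hpF.out.eq_two_or_odd with h | h
    · omega
    · exact h
  obtain ⟨r1, h1⟩ := five_sq hp5
  obtain ⟨r2, h2⟩ := neg_three_sq (p := p) (by omega)
  obtain ⟨a, b, hab, ha, hb, hne⟩ := thue (r1 * r2)
  have hd : (p : ℤ) ∣ a ^ 2 + 15 * b ^ 2 := by
    rw [← ZMod.intCast_zmod_eq_zero_iff_dvd]
    push_cast
    rw [hab]
    linear_combination (3 * (b : ZMod p) ^ 2) * h1 - r1 ^ 2 * (b : ZMod p) ^ 2 * h2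
  obtain ⟨k, hk⟩ := hd
  have hp0 : (0 : ℤ) < p := by exact_mod_cast hpF.out.pos
  have hpos : 0 < a ^ 2 + 15 * b ^ 2 := by
    by_contra hle
    apply hne
    have h3 : a ^ 2 = 0 := by nlinarith [sq_nonneg a, sq_nonneg b]
    have h4 : b ^ 2 = 0 := by nlinarith [sq_nonneg a, sq_nonneg b]
    exact ⟨pow_eq_zero_iff (two_ne_zero) |>.1 h3, pow_eq_zero_iff (two_ne_zero) |>.1 h4⟩
  have hk0 : 0 < k := by
    rw [hk] at hpos
    exact pos_of_mul_pos_right hpos hp0.le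
  have hk16 : k < 16 := by
    by_contra hge
    nlinarith
  exact form_of_k (P := p) (a := a) (b := b) (k := k) (by omega) (by omega) hk0 hk16 (by rw [hk]; ring)

end Final

theorem stmt_5 (p : ℕ) [Fact p.Prime] (hp : p % 5 = 1 ∨ p % 5 = 4) :
    ((p % 15 = 1 ∨ p % 15 = 4) →
      (∃ x y : ℤ, (p : ℤ) = x ^ 2 + 15 * y ^ 2) ∧
        ∀ x y : ℤ, (p : ℤ) = x ^ 2 + 15 * y ^ 2 →
          (∑ n ∈ Finset.range p, (A n : ZMod p)) = 4 * (x : ZMod p) ^ 2)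
    ∧
    ((p % 15 = 11 ∨ p % 15 = 14) →
      (∑ n ∈ Finset.range p, (A n : ZMod p)) = 0) := by
  classical
  have hpr := (Fact.out : p.Prime)
  have hp11 := p_ge_eleven hp
  obtain ⟨φ, hφ⟩ := exists_phi hp
  obtain ⟨m, hm⟩ : ∃ m, p = 2 * m + 1 := by
    rcases hpr.eq_two_or_odd with h | h
    · omega
    · exact ⟨p / 2, by omega⟩
  have hS := sum_gz_eq (p := p) (by omega) hφ hm
  have hA := sum_A_eq (p := p) (by omega) hφ
  rw [← neg_sq, ← hS] at hA
  refine ⟨fun h => ⟨exists_form h, fun x y hxy => ?_⟩, fun h => ?_⟩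
  · rw [hA]
    exact case_one (k := AlgebraicClosure (ZMod p)) (by omega) (algebraMap _ _) hφ hxy hm
  · rw [hA, case_two (k := AlgebraicClosure (ZMod p)) hp11 (algebraMap _ _) hφ (by omega) hm]
    simp
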